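/- arXiv:1907.11994 — 3 statements merged into one kernel-verified Lean document; each statement's English description precedes it below -/
import Mathlib

section
/- There exists a constant x₀ such that the following holds for all real x ≥ x₀. Let q and b be integers with x > q > b > 0 and gcd(b,q) = 1, let 0 ≤ δ ≤ 1, and suppose π(x;q,b) ≤ δx/φ(q). Let u be the smallest positive integer satisfying u > 2√x and u/log u ≥ 10δx/q. Then G(e^{2u}) ≥ J(u) ≥ (x−b)/q. -/
/-!
`J(u) ≤ G(e^{2u})` holds because a run of integers all having a prime factor `≤ u` can be shifted by
multiples of the primorial `P ≤ 4 ^ u` until all its members are composite and of size about `P`;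
Bertrand's postulate bounds the next prime (`primeGap_ge_of_gap`).

For `J(u) ≥ (x - b) / q`, it suffices to cover `[1, M]`, `M = ⌊(x - b) / q⌋`, by one residue class
for each prime `p ≤ u` (`jacobsthal_ge_of_residues`). The classes are chosen as follows.

* For `p ≤ √x` with `p ∤ q`, take the class of those `m` with `p ∣ q m + b`. Only the `m` for which
  `q m + b` is prime survive, at most `π(x; q, b) ≤ δ x / φ(q)` of them.
* For `p ≤ √x` with `p ∣ q`, choose greedily (`exists_greedy_residues`). This multiplies the number of
  survivors by at most `∏ (1 - 1 / p) ≤ (3 / 2) φ(q) / q`, since `q < x` has at most one prime factor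
  above `√x` (`prod_small_factors_le`). At most `1.5 δ x / q ≤ 0.15 u / log u` survivors are left.
* The primes in `(u / 2, u]` exceed `√x` and number at least `0.15 u / log u`
  (`exists_card_primes_ge`), so each remaining survivor is removed by a prime of its own.
-/

/-- `primeGap X` is the largest gap `p' - p` between consecutive primes `p < p' ≤ X`. -/
noncomputable def primeGap (X : ℝ) : ℕ :=
  sSup {d : ℕ | ∃ p p' : ℕ, p.Prime ∧ p'.Prime ∧ p < p' ∧ (p' : ℝ) ≤ X ∧
    (∀ r : ℕ, p < r → r < p' → ¬ r.Prime) ∧ d = p' - p}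

/-- Jacobsthal's function: the maximal gap between consecutive positive integers
having no prime factor `p ≤ u`. -/
noncomputable def jacobsthal (u : ℝ) : ℕ :=
  sSup {d : ℕ | ∃ n n' : ℕ, 0 < n ∧ n < n' ∧
    (∀ p : ℕ, p.Prime → (p : ℝ) ≤ u → ¬ p ∣ n) ∧
    (∀ p : ℕ, p.Prime → (p : ℝ) ≤ u → ¬ p ∣ n') ∧
    (∀ m : ℕ, n < m → m < n' → ∃ p : ℕ, p.Prime ∧ (p : ℝ) ≤ u ∧ p ∣ m) ∧
    d = n' - n}

/-- `primesInAP x q b` is the number of primes `p ≤ x` with `p ≡ b (mod q)`. -/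
noncomputable def primesInAP (x : ℝ) (q b : ℕ) : ℕ :=
  ((Finset.Icc 1 ⌊x⌋₊).filter (fun p => p.Prime ∧ p % q = b % q)).card

/-- `leastPrime q b` is the least prime `p` with `p ≡ b (mod q)`. -/
noncomputable def leastPrime (q b : ℕ) : ℕ :=
  sInf {p : ℕ | p.Prime ∧ p % q = b % q}

/-! ### Prime gaps and Jacobsthal's function -/

/-- A run of integers each having a prime factor `≤ u` can be translated modulo the primorial `P`
of `u` so as to start in `[P, 2P)`. Its members then exceed every prime `≤ u`, so they are composite,
and Bertrand's postulate puts the surrounding primes below `4P ≤ 4 ^ (u + 1) ≤ exp (2u)`. -/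
lemma primeGap_ge_of_gap {u n n' : ℕ} (hu : 3 ≤ u) (hnn : n < n')
    (hm : ∀ m : ℕ, n < m → m < n' → ∃ p : ℕ, p.Prime ∧ (p : ℝ) ≤ u ∧ p ∣ m) :
    n' - n ≤ primeGap (Real.exp (2 * u)) := by
  set P := primorial u with hP
  have hP0 : 0 < P := primorial_pos u
  have hPu : u ≤ P := le_primorial_self
  -- the translate of `n` by a multiple of `P` that lies in `[P, 2P)`
  set N := n % P + P with hN
  have hNP : P ≤ N := Nat.le_add_left _ _
  have hN2 : N < 2 * P := by have := Nat.mod_lt n hP0; omega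
  have hdiv : n % P + P * (n / P) = n := Nat.mod_add_div n P
  have hcomp : ∀ r, N < r → r < N + (n' - n) → ¬ r.Prime := by
    intro r h1 h2 hr
    obtain ⟨p, hp, hpu, hpd⟩ := hm (n + (r - N)) (by omega) (by omega)
    have hpu' : p ≤ u := by exact_mod_cast hpu
    have hpP : p ∣ P := hp.dvd_primorial_iff.2 hpu'
    have hpr : p ∣ r := by
      have e : n + (r - N) + P = r + P * (n / P) := by omega
      have h3 : p ∣ r + P * (n / P) := e ▸ dvd_add hpd hpP
      exact (Nat.dvd_add_left (hpP.mul_right _)).1 h3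
    have : p = r := (Nat.prime_dvd_prime_iff_eq hp hr).1 hpr
    omega
  set p := Nat.findGreatest Nat.Prime N with hpdef
  have hpp : p.Prime := Nat.findGreatest_spec (m := 2) (by omega) Nat.prime_two
  have hpN : p ≤ N := Nat.findGreatest_le N
  have hex := Nat.exists_prime_lt_and_le_two_mul p hpp.ne_zero
  have hex' : ∃ r, r.Prime ∧ p < r := ⟨hex.choose, hex.choose_spec.1, hex.choose_spec.2.1⟩
  classical
  set p' := Nat.find hex' with hp'def
  obtain ⟨hp'p, hp'lt⟩ := Nat.find_spec hex'
  have hp'le : p' ≤ 2 * p := by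
    obtain ⟨r, hr, h1, h2⟩ := hex
    exact (Nat.find_min' hex' ⟨hr, h1⟩).trans h2
  have hp'N : N < p' := by
    by_contra h
    exact absurd (Nat.le_findGreatest (not_lt.1 h) hp'p) (by omega)
  have hp'N' : N + (n' - n) ≤ p' := by
    by_contra h
    exact hcomp p' hp'N (not_le.1 h) hp'p
  have hbig : (p' : ℝ) ≤ Real.exp (2 * u) := by
    have h1 : p' ≤ 4 * 4 ^ u := by
      have := primorial_le_four_pow u
      omega
    have h2 : (4 : ℝ) * 4 ^ u ≤ Real.exp (2 * u) := by
      have he : (2.7 : ℝ) < Real.exp 1 := by linarith [Real.exp_one_gt_d9]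
      have e : Real.exp (2 * u) = (Real.exp 1 ^ 2) ^ u := by
        rw [← Real.exp_nat_mul, ← Real.exp_nat_mul]; congr 1; push_cast; ring
      have h7 : (7 : ℝ) ≤ Real.exp 1 ^ 2 := by nlinarith
      have h74 : (4 : ℝ) * 4 ^ u ≤ 7 ^ u := by
        obtain ⟨k, rfl⟩ := Nat.exists_eq_add_of_le hu
        have : (4 : ℝ) ^ k ≤ 7 ^ k := pow_le_pow_left₀ (by norm_num) (by norm_num) k
        rw [pow_add, pow_add]
        nlinarith [pow_pos (show (0 : ℝ) < 4 by norm_num) k]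
      rw [e]
      exact h74.trans (pow_le_pow_left₀ (by norm_num) h7 u)
    calc (p' : ℝ) ≤ ((4 * 4 ^ u : ℕ) : ℝ) := by exact_mod_cast h1
      _ = 4 * 4 ^ u := by push_cast; ring
      _ ≤ _ := h2
  refine le_trans (b := p' - p) (by omega) (le_csSup ⟨⌊Real.exp (2 * u)⌋₊, ?_⟩ ?_)
  · rintro d ⟨a, a', -, -, -, h, -, rfl⟩
    exact (Nat.sub_le _ _).trans (Nat.le_floor h)
  · refine ⟨p, p', hpp, hp'p, hp'lt, hbig, ?_, rfl⟩
    intro r h1 h2 hr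
    exact Nat.find_min hex' h2 ⟨hr, h1⟩

/-- A run of `M` integers each having a prime factor `≤ u` extends to a maximal such run, bounded
by integers free of prime factors `≤ u`. The set of gaps is bounded above by the prime gap function,
so the supremum in `jacobsthal` is a genuine one. -/
lemma jacobsthal_ge_of_covered {u n M : ℕ} (hu : 3 ≤ u) (hn : 0 < n)
    (hm : ∀ m : ℕ, n < m → m ≤ n + M → ∃ p : ℕ, p.Prime ∧ p ≤ u ∧ p ∣ m) :
    M + 1 ≤ jacobsthal u := by
  classical
  let good : ℕ → Prop := fun m => ∀ p : ℕ, p.Prime → (p : ℝ) ≤ u → ¬ p ∣ m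
  have h1 : good 1 := fun p hp _ h => hp.one_lt.ne' (Nat.dvd_one.1 h)
  set a := Nat.findGreatest good n with ha
  have hga : good a := Nat.findGreatest_spec (m := 1) hn h1
  have ha1 : 1 ≤ a := Nat.le_findGreatest hn h1
  have han : a ≤ n := Nat.findGreatest_le n
  have hex : ∃ m, a < m ∧ good m := by
    refine ⟨a * primorial u + 1, ?_, ?_⟩
    · have := Nat.le_mul_of_pos_right a (primorial_pos u)
      omega
    · intro p hp hpu hd
      have hpP : p ∣ primorial u := hp.dvd_primorial_iff.2 (by exact_mod_cast hpu)
      exact hp.one_lt.ne' (Nat.dvd_one.1 ((Nat.dvd_add_right (hpP.mul_left a)).1 hd))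
  set a' := Nat.find hex
  obtain ⟨haa', hga'⟩ := Nat.find_spec hex
  have hna' : n < a' := by
    by_contra h
    exact absurd (Nat.le_findGreatest (not_lt.1 h) hga') (by omega)
  have hMa' : n + M < a' := by
    by_contra h
    obtain ⟨p, hp, hpu, hpd⟩ := hm a' hna' (not_lt.1 h)
    exact hga' p hp (by exact_mod_cast hpu) hpd
  refine le_trans (b := a' - a) (by omega) (le_csSup ⟨primeGap (Real.exp (2 * u)), ?_⟩ ?_)
  · rintro d ⟨n, n', -, hlt, -, -, h, rfl⟩
    exact primeGap_ge_of_gap hu hlt h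
  · refine ⟨a, a', ha1, haa', hga, hga', ?_, rfl⟩
    intro m h1 h2
    by_contra h
    push Not at h
    exact Nat.find_min hex h2 ⟨h1, h⟩

/-- Sieve form of Jacobsthal's function: if one residue class for each prime `p ≤ u` suffices to
cover `[1, M]`, then the Chinese remainder theorem yields `M` consecutive integers each having a prime
factor `≤ u`. -/
lemma jacobsthal_ge_of_residues {u M : ℕ} (hu : 3 ≤ u) (a : ℕ → ℕ)
    (ha : ∀ m : ℕ, 1 ≤ m → m ≤ M → ∃ p : ℕ, p.Prime ∧ p ≤ u ∧ m ≡ a p [MOD p]) :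
    M + 1 ≤ jacobsthal u := by
  classical
  let T := (Finset.range (u + 1)).filter Nat.Prime
  have hTp : ∀ p ∈ T, p.Prime := fun p hp => (Finset.mem_filter.1 hp).2
  obtain ⟨k, hk⟩ := Nat.chineseRemainderOfFinset (fun p => p - a p % p) id T
    (fun p hp => (hTp p hp).ne_zero)
    (fun p hp r hr hne => (Nat.coprime_primes (hTp p hp) (hTp r hr)).2 hne)
  refine jacobsthal_ge_of_covered (n := k + primorial u) hu
    (Nat.add_pos_right _ (primorial_pos u)) ?_
  intro m h1 h2
  obtain ⟨p, hp, hpu, hmp⟩ := ha (m - (k + primorial u)) (by omega) (by omega)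
  refine ⟨p, hp, hpu, ?_⟩
  have hkp : k ≡ p - a p % p [MOD p] := hk p (Finset.mem_filter.2 ⟨Finset.mem_range.2 (by omega), hp⟩)
  have hP : primorial u ≡ 0 [MOD p] :=
    (Nat.modEq_zero_iff_dvd).2 (hp.dvd_primorial_iff.2 hpu)
  have e : m = m - (k + primorial u) + (k + primorial u) := by omega
  rw [e, ← Nat.modEq_zero_iff_dvd]
  have hlt := Nat.mod_lt (a p) hp.pos
  calc _ ≡ a p % p + (p - a p % p + 0) [MOD p] :=
        (hmp.trans (Nat.mod_modEq _ _).symm).add (hkp.add hP)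
    _ = p := by omega
    _ ≡ 0 [MOD p] := (Nat.modEq_zero_iff_dvd).2 dvd_rfl

/-! ### Sieving lemmas -/

/-- Greedy sieving: choosing for each prime `p` in turn the most popular residue class among the
survivors removes at least the proportion `1 / p` of them. -/
lemma exists_greedy_residues (S : Finset ℕ) (T : Finset ℕ) (hT : ∀ p ∈ T, p.Prime) :
    ∃ a : ℕ → ℕ, ((S.filter fun m => ∀ p ∈ T, ¬ m ≡ a p [MOD p]).card : ℝ) ≤
      S.card * ∏ p ∈ T, (1 - (p : ℝ)⁻¹) := by
  classical
  induction T using Finset.induction_on with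
  | empty => exact ⟨0, by simp⟩
  | insert p T hpT ih =>
    obtain ⟨a, ha⟩ := ih fun r hr => hT r (Finset.mem_insert_of_mem hr)
    have hp : p.Prime := hT p (Finset.mem_insert_self _ _)
    have hp0 : (0 : ℝ) < p := by exact_mod_cast hp.pos
    set S' := S.filter fun m => ∀ p ∈ T, ¬ m ≡ a p [MOD p] with hS'
    obtain ⟨c, -, hc⟩ := Finset.exists_le_card_fiber_of_nsmul_le_card_of_maps_to
      (s := S') (t := Finset.range p) (f := fun m => m % p) (b := (S'.card : ℝ) / p)
      (fun m _ => Finset.mem_range.2 (Nat.mod_lt m hp.pos))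
      ⟨0, Finset.mem_range.2 hp.pos⟩
      (by rw [Finset.card_range, nsmul_eq_mul, mul_div_cancel₀ _ hp0.ne'])
    refine ⟨Function.update a p c, ?_⟩
    have hsub : (S.filter fun m => ∀ r ∈ insert p T, ¬ m ≡ Function.update a p c r [MOD r]) ⊆
        S'.filter fun m => ¬ m % p = c := by
      intro m hm
      simp only [hS', Finset.mem_filter, Finset.mem_insert] at hm ⊢
      refine ⟨⟨hm.1, fun r hr => ?_⟩, fun h => ?_⟩
      · have hne : r ≠ p := fun h => hpT (h ▸ hr)
        simpa [Function.update_of_ne hne] using hm.2 r (Or.inr hr)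
      · refine hm.2 p (Or.inl rfl) ?_
        rw [Function.update_self, ← h]
        exact (Nat.mod_modEq _ _).symm
    have hcard : ((S'.filter fun m => m % p = c).card : ℝ) +
        (S'.filter fun m => ¬ m % p = c).card = S'.card := by
      exact_mod_cast Finset.card_filter_add_card_filter_not (s := S') (fun m => m % p = c)
    have hle : (1 : ℝ) ≤ p := by exact_mod_cast hp.one_lt.le
    have hfac : 0 ≤ 1 - (p : ℝ)⁻¹ := sub_nonneg.2 (inv_le_one_of_one_le₀ hle)
    calc _ ≤ ((S'.filter fun m => ¬ m % p = c).card : ℝ) := by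
          exact_mod_cast Finset.card_le_card hsub
      _ ≤ S'.card * (1 - (p : ℝ)⁻¹) := by rw [div_eq_mul_inv] at hc; linarith
      _ ≤ (S.card * ∏ p ∈ T, (1 - (p : ℝ)⁻¹)) * (1 - (p : ℝ)⁻¹) := by gcongr
      _ = _ := by rw [Finset.prod_insert hpT]; ring

/-- With at least as many moduli in `C` as elements of `L`, each element of `L` can be assigned
as the residue of its own modulus. -/
lemma exists_fun_hitting (L C : Finset ℕ) (h : L.card ≤ C.card) :
    ∃ g : ℕ → ℕ, ∀ m ∈ L, ∃ p ∈ C, g p = m := by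
  obtain ⟨e⟩ : Nonempty (L ↪ C) :=
    Function.Embedding.nonempty_of_card_le (by simpa using h)
  have hinj : Function.Injective fun m : L => (e m : ℕ) :=
    Subtype.val_injective.comp e.injective
  exact ⟨Function.extend (fun m : L => (e m : ℕ)) (fun m => (m : ℕ)) 0,
    fun m hm => ⟨e ⟨m, hm⟩, (e ⟨m, hm⟩).2, hinj.extend_apply _ _ ⟨m, hm⟩⟩⟩

/-- A number `q < s ^ 2` has at most one prime factor exceeding `s ≥ 3`, so dropping the large
prime factors from `φ(q) / q = ∏ (1 - 1 / p)` changes the product by a factor of at most `3 / 2`. -/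
lemma prod_small_factors_le {q : ℕ} (hq : 0 < q) {s : ℝ} (hs : 3 ≤ s) (hqs : (q : ℝ) < s ^ 2) :
    ∏ p ∈ q.primeFactors.filter (fun p : ℕ => (p : ℝ) ≤ s), (1 - (p : ℝ)⁻¹) ≤
      3 / 2 * (q.totient / q) := by
  classical
  have hq' : (q : ℝ) ≠ 0 := by exact_mod_cast hq.ne'
  have htot : (q.totient : ℝ) / q = ∏ p ∈ q.primeFactors, (1 - (p : ℝ)⁻¹) := by
    have h := congrArg (fun t : ℚ => (t : ℝ)) (Nat.totient_eq_mul_prod_factors q)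
    push_cast at h
    rw [h, mul_div_cancel_left₀ _ hq']
  rw [htot, ← Finset.prod_filter_mul_prod_filter_not q.primeFactors (fun p : ℕ => (p : ℝ) ≤ s)]
  have hnn : 0 ≤ ∏ p ∈ q.primeFactors.filter (fun p : ℕ => (p : ℝ) ≤ s), (1 - (p : ℝ)⁻¹) := by
    refine Finset.prod_nonneg fun p hp => sub_nonneg.2 (inv_le_one_of_one_le₀ ?_)
    exact_mod_cast (Nat.prime_of_mem_primeFactors (Finset.mem_filter.1 hp).1).one_lt.le
  have hcard : (q.primeFactors.filter (fun p : ℕ => ¬ (p : ℝ) ≤ s)).card ≤ 1 := by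
    refine Finset.card_le_one.2 fun p hp r hr => ?_
    simp only [Finset.mem_filter, not_le] at hp hr
    by_contra hne
    have hpp := Nat.prime_of_mem_primeFactors hp.1
    have hrp := Nat.prime_of_mem_primeFactors hr.1
    have hd : p * r ∣ q := ((Nat.coprime_primes hpp hrp).2 hne).mul_dvd_of_dvd_of_dvd
      (Nat.dvd_of_mem_primeFactors hp.1) (Nat.dvd_of_mem_primeFactors hr.1)
    have hle : ((p * r : ℕ) : ℝ) ≤ q := by exact_mod_cast Nat.le_of_dvd hq hd
    push_cast at hle
    nlinarith [hp.2, hr.2]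
  have hbig : (2 / 3 : ℝ) ≤
      ∏ p ∈ q.primeFactors.filter (fun p : ℕ => ¬ (p : ℝ) ≤ s), (1 - (p : ℝ)⁻¹) := by
    rcases Nat.le_one_iff_eq_zero_or_eq_one.1 hcard with h | h
    · rw [Finset.card_eq_zero.1 h]; norm_num
    · obtain ⟨p, hp⟩ := Finset.card_eq_one.1 h
      have hps : s < p := by
        have : p ∈ q.primeFactors.filter (fun p : ℕ => ¬ (p : ℝ) ≤ s) := by
          rw [hp]; exact Finset.mem_singleton_self p
        exact not_le.1 (Finset.mem_filter.1 this).2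
      rw [hp, Finset.prod_singleton]
      have : (p : ℝ)⁻¹ ≤ 3⁻¹ := by gcongr; linarith
      linarith
  nlinarith

/-! ### Primes between `u / 2` and `u` -/

open Nat in
/-- The upper bound for `centralBinom n` from Erdős's proof of Bertrand's postulate, with the
contribution of the primes in `(n, 2n]` retained. There are no prime factors in `(2n/3, n]`. -/
lemma centralBinom_le_mul_pow_card (n : ℕ) (hn : 2 < n) :
    centralBinom n ≤ (2 * n) ^ sqrt (2 * n) * 4 ^ (2 * n / 3) *
      (2 * n) ^ ((Finset.Ioc n (2 * n)).filter Nat.Prime).card := by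
  classical
  let f : ℕ → ℕ := fun p => p ^ n.centralBinom.factorization p
  let A := (Finset.Icc 1 (sqrt (2 * n))).filter Nat.Prime
  let B := ((Finset.range (2 * n / 3 + 1)).filter Nat.Prime).filter (fun p => sqrt (2 * n) < p)
  let C := (Finset.Ioc n (2 * n)).filter Nat.Prime
  have hf1 : ∀ p, p.Prime → 1 ≤ f p := fun p hp => Nat.one_le_pow _ _ hp.pos
  have hf2 : ∀ p, f p ≤ 2 * n := fun p => pow_factorization_choose_le (by omega)
  have hcb : centralBinom n = ∏ p ∈ (Finset.range (2 * n + 1)).filter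
      (fun p => f p ≠ 1), f p := by
    rw [Finset.prod_filter_ne_one]
    exact n.prod_pow_factorization_centralBinom.symm
  have hsub : (Finset.range (2 * n + 1)).filter (fun p => f p ≠ 1) ⊆ A ∪ B ∪ C := by
    intro p hp
    obtain ⟨hp1, hp2⟩ := Finset.mem_filter.1 hp
    have hpp : p.Prime := by
      by_contra h
      exact hp2 (by simp [f, factorization_eq_zero_of_not_prime n.centralBinom h])
    have h3 : p ≤ n → ¬ 2 * n < 3 * p := fun h h' => hp2 (by
      simp [f, factorization_centralBinom_of_two_mul_self_lt_three_mul hn h h'])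
    have := hpp.one_lt
    simp only [A, B, C, Finset.mem_union, Finset.mem_filter, Finset.mem_Icc, Finset.mem_range,
      Finset.mem_Ioc, hpp, and_true] at hp1 ⊢
    by_cases hpn : p ≤ n
    · have := h3 hpn
      omega
    · omega
  have hprime : ∀ p ∈ A ∪ B ∪ C, p.Prime := by
    intro p hp
    simp only [A, B, C, Finset.mem_union, Finset.mem_filter] at hp
    tauto
  have hun : ∀ X Y : Finset ℕ, (∀ p ∈ X ∪ Y, p.Prime) →
      ∏ p ∈ X ∪ Y, f p ≤ (∏ p ∈ X, f p) * ∏ p ∈ Y, f p := by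
    intro X Y h
    rw [← Finset.prod_union_inter]
    exact Nat.le_mul_of_pos_right _ (Finset.prod_pos fun p hp =>
      hf1 p (h p (Finset.mem_union_left _ (Finset.mem_inter.1 hp).1)))
  have hA : ∏ p ∈ A, f p ≤ (2 * n) ^ sqrt (2 * n) := by
    refine (Finset.prod_le_pow_card A f (2 * n) fun p _ => hf2 p).trans
      (Nat.pow_le_pow_right (by omega) ?_)
    exact (Finset.card_filter_le _ _).trans (by simp)
  have hC : ∏ p ∈ C, f p ≤ (2 * n) ^ C.card :=
    Finset.prod_le_pow_card C f (2 * n) fun p _ => hf2 p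
  have hB : ∏ p ∈ B, f p ≤ 4 ^ (2 * n / 3) := by
    refine le_trans ?_ (primorial_le_four_pow (2 * n / 3))
    refine (Finset.prod_le_prod' fun p hp => (?_ : f p ≤ p)).trans ?_
    · obtain ⟨h1, h2⟩ := Finset.mem_filter.1 hp
      refine (pow_right_mono₀ (Finset.mem_filter.1 h1).2.one_lt.le ?_).trans (pow_one p).le
      exact Nat.factorization_choose_le_one (sqrt_lt'.mp h2)
    · exact Finset.prod_le_prod_of_subset_of_one_le' (Finset.filter_subset _ _)
        fun p hp _ => (Finset.mem_filter.1 hp).2.one_lt.le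
  calc centralBinom n ≤ ∏ p ∈ A ∪ B ∪ C, f p := by
        rw [hcb]
        exact Finset.prod_le_prod_of_subset_of_one_le' hsub fun p hp _ => hf1 p (hprime p hp)
    _ ≤ (∏ p ∈ A ∪ B, f p) * ∏ p ∈ C, f p := hun _ _ hprime
    _ ≤ ((∏ p ∈ A, f p) * ∏ p ∈ B, f p) * ∏ p ∈ C, f p :=
        Nat.mul_le_mul_right _ (hun _ _ fun p hp => hprime p (Finset.mem_union_left _ hp))
    _ ≤ _ := by gcongr

lemma exists_log_bound : ∃ N : ℕ, ∀ n : ℕ, N ≤ n →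
    (Real.sqrt (2 * n) + 1) * Real.log (2 * n) + 0.15 ≤ 0.16 * (n : ℝ) := by
  have h1 := (isLittleO_log_rpow_atTop (show (0 : ℝ) < 1 / 2 by norm_num)).bound
    (show (0 : ℝ) < 0.03 by norm_num)
  have htend : Filter.Tendsto (fun n : ℕ => (2 : ℝ) * n) Filter.atTop Filter.atTop :=
    tendsto_natCast_atTop_atTop.const_mul_atTop (by norm_num)
  obtain ⟨N, hN⟩ := Filter.eventually_atTop.1 (htend.eventually h1)
  refine ⟨N + 4, fun n hn => ?_⟩
  have hn4 : (4 : ℝ) ≤ n := by exact_mod_cast (by omega : 4 ≤ n)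
  have h2 := hN n (by omega)
  rw [← Real.sqrt_eq_rpow, Real.norm_of_nonneg (Real.log_nonneg (by linarith)),
    Real.norm_of_nonneg (Real.sqrt_nonneg _)] at h2
  have h3 : 1 ≤ Real.sqrt (2 * n) := Real.one_le_sqrt.2 (by linarith)
  have h4 : Real.sqrt (2 * n) ^ 2 = 2 * n := Real.sq_sqrt (by linarith)
  calc (Real.sqrt (2 * n) + 1) * Real.log (2 * n) + 0.15
      ≤ (Real.sqrt (2 * n) + Real.sqrt (2 * n)) * (0.03 * Real.sqrt (2 * n)) + 0.15 := by
        have := Real.log_nonneg (show (1 : ℝ) ≤ 2 * n by linarith)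
        gcongr
    _ ≤ 0.16 * (n : ℝ) := by nlinarith

/-- Chebyshev-type lower bound for the number of primes in `(u / 2, u]`. Erdős's argument gives the
constant `log 4 / 6 = 0.231…`, of which `0.15` is needed. -/
lemma exists_card_primes_ge : ∃ N : ℕ, ∀ u : ℕ, N ≤ u →
    0.15 * ((u : ℝ) / Real.log u) ≤
      ((Finset.Ioc (u / 2) (2 * (u / 2))).filter Nat.Prime).card := by
  obtain ⟨N, hN⟩ := exists_log_bound
  refine ⟨2 * N + 10, fun u hu => ?_⟩
  set n := u / 2 with hn
  have hn4 : 4 ≤ n := by omega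
  have hNn : N ≤ n := by omega
  set k := ((Finset.Ioc n (2 * n)).filter Nat.Prime).card with hk
  have h1 := Nat.four_pow_lt_mul_centralBinom n hn4
  have h2 := centralBinom_le_mul_pow_card n (by omega)
  rw [← hk] at h2
  have hn0 : (0 : ℝ) < n := by exact_mod_cast (by omega : 0 < n)
  have h3 : (4 : ℝ) ^ n ≤ (2 * n) * ((2 * n) ^ Nat.sqrt (2 * n) * 4 ^ (2 * n / 3) * (2 * n) ^ k) := by
    have : 4 ^ n ≤ (2 * n) * ((2 * n) ^ Nat.sqrt (2 * n) * 4 ^ (2 * n / 3) * (2 * n) ^ k) :=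
      h1.le.trans (Nat.mul_le_mul (by omega) h2)
    exact_mod_cast this
  have h4 := Real.log_le_log (by positivity) h3
  have hl0 : 0 < Real.log (2 * n) := Real.log_pos (by
    have : (4 : ℝ) ≤ n := by exact_mod_cast hn4
    linarith)
  rw [Real.log_mul (x := 2 * (n : ℝ)) (by positivity) (by positivity),
    Real.log_mul (y := (2 * (n : ℝ)) ^ k) (by positivity) (by positivity),
    Real.log_mul (y := (4 : ℝ) ^ (2 * n / 3)) (by positivity) (by positivity), Real.log_pow, Real.log_pow, Real.log_pow,
    Real.log_pow] at h4
  have h5 : ((2 * n / 3 : ℕ) : ℝ) ≤ 2 * n / 3 := by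
    have := Nat.cast_div_le (α := ℝ) (m := 2 * n) (n := 3)
    push_cast at this; exact this
  have h6 : ((Nat.sqrt (2 * n) : ℕ) : ℝ) ≤ Real.sqrt (2 * n) := by
    have := Real.nat_sqrt_le_real_sqrt (a := 2 * n)
    push_cast at this; exact this
  have hlog4 : (1.386 : ℝ) ≤ Real.log 4 := by
    have : Real.log 4 = 2 * Real.log 2 := by
      rw [show (4 : ℝ) = 2 ^ 2 by norm_num, Real.log_pow]; norm_num
    linarith [Real.log_two_gt_d9]
  have h7 := hN n hNn
  have h8 : ((2 * n / 3 : ℕ) : ℝ) * Real.log 4 ≤ 2 * n / 3 * Real.log 4 := by gcongr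
  have h9 : ((Nat.sqrt (2 * n) : ℕ) : ℝ) * Real.log (2 * n) ≤
      Real.sqrt (2 * n) * Real.log (2 * n) := by gcongr
  have h10 : (n : ℝ) * 1.386 ≤ n * Real.log 4 := by gcongr
  have hkey : 0.15 * (2 * n + 1 : ℝ) ≤ k * Real.log (2 * n) := by nlinarith
  have hu1 : (u : ℝ) ≤ 2 * n + 1 := by exact_mod_cast (by omega : u ≤ 2 * n + 1)
  have hu2 : (2 * n : ℝ) ≤ u := by exact_mod_cast (by omega : 2 * n ≤ u)
  have hlu : Real.log (2 * n) ≤ Real.log u := Real.log_le_log (by positivity) hu2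
  rw [← mul_div_assoc, div_le_iff₀ (hl0.trans_le hlu)]
  calc 0.15 * (u : ℝ) ≤ 0.15 * (2 * n + 1) := by gcongr
    _ ≤ k * Real.log (2 * n) := hkey
    _ ≤ k * Real.log u := by gcongr

/-! ### The sieve for the progression -/

/-- **Theorem (AP gaps).** If `π(x;q,b) ≤ δx/φ(q)` with `x > q > b > 0`, `gcd(b,q)=1`,
`0 ≤ δ ≤ 1`, and `u` is the smallest positive integer with `u > 2√x` and
`u / log u ≥ 10δx/q`, then `G(e^{2u}) ≥ J(u) ≥ (x-b)/q`. -/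
theorem ap_few_primes_implies_large_gaps :
    ∃ x₀ : ℝ, ∀ x : ℝ, x ≥ x₀ →
      ∀ q b : ℕ, (q : ℝ) < x → b < q → 0 < b → Nat.gcd b q = 1 →
      ∀ δ : ℝ, 0 ≤ δ → δ ≤ 1 →
      (primesInAP x q b : ℝ) ≤ δ * x / (q.totient : ℝ) →
      ∀ u : ℕ, 0 < u →
        (u : ℝ) > 2 * Real.sqrt x →
        (u : ℝ) / Real.log u ≥ 10 * δ * x / q →
        (∀ v : ℕ, 0 < v → (v : ℝ) > 2 * Real.sqrt x →
          (v : ℝ) / Real.log v ≥ 10 * δ * x / q → u ≤ v) →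
      primeGap (Real.exp (2 * u)) ≥ jacobsthal u ∧
      ((jacobsthal u : ℝ) ≥ (x - b) / q) := by
  classical
  obtain ⟨N, hN⟩ := exists_card_primes_ge
  refine ⟨max 9 ((N : ℝ) ^ 2), ?_⟩
  intro x hx q b hqx hbq hb hgcd δ hδ0 hδ1 hπ u hu0 hux hulog _
  have hx9 : 9 ≤ x := (le_max_left _ _).trans hx
  have hxN : (N : ℝ) ^ 2 ≤ x := (le_max_right _ _).trans hx
  set s := Real.sqrt x with hs
  have hs3 : 3 ≤ s := Real.le_sqrt_of_sq_le (by linarith)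
  have hsN : (N : ℝ) ≤ s := Real.le_sqrt_of_sq_le hxN
  have hsx : s ^ 2 = x := Real.sq_sqrt (by linarith)
  have hu6 : 3 ≤ u := by
    have : (3 : ℝ) ≤ u := by linarith
    exact_mod_cast this
  have hNu : N ≤ u := by
    have : (N : ℝ) ≤ u := by linarith
    exact_mod_cast this
  have hq0 : 0 < q := by omega
  have hqR : (0 : ℝ) < q := by exact_mod_cast hq0
  refine ⟨csSup_le' ?_, ?_⟩
  · rintro d ⟨n, n', -, hlt, -, -, h, rfl⟩
    exact primeGap_ge_of_gap hu6 hlt h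
  set M := ⌊(x - b) / q⌋₊ with hM
  suffices h : M + 1 ≤ jacobsthal u by
    have h1 : (x - b) / q < M + 1 := Nat.lt_floor_add_one _
    have h2 : ((M + 1 : ℕ) : ℝ) ≤ jacobsthal u := by exact_mod_cast h
    push_cast at h2
    linarith
  have hbx : (b : ℝ) ≤ x := by
    have : (b : ℝ) < q := by exact_mod_cast hbq
    linarith
  have hMx : ∀ m ≤ M, ((q * m + b : ℕ) : ℝ) ≤ x := by
    intro m hm
    have h1 : (m : ℝ) ≤ (x - b) / q :=
      (Nat.le_floor_iff (div_nonneg (by linarith) hqR.le)).1 hm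
    rw [le_div_iff₀ hqR] at h1
    push_cast
    linarith
  -- the indices in the progression that survive the primes `p ≤ √x` not dividing `q`
  set S := (Finset.Icc 1 M).filter (fun m => (q * m + b).Prime) with hS
  have hScard : S.card ≤ primesInAP x q b := by
    refine Finset.card_le_card_of_injOn (fun m => q * m + b) ?_ ?_
    · intro m hm
      obtain ⟨h1, h2⟩ := Finset.mem_filter.1 hm
      refine Finset.mem_filter.2 ⟨Finset.mem_Icc.2 ⟨h2.pos, ?_⟩, h2, by simp⟩
      exact Nat.le_floor (hMx m (Finset.mem_Icc.1 h1).2)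
    · intro m _ m' _ h
      exact Nat.eq_of_mul_eq_mul_left hq0 (Nat.add_right_cancel h)
  obtain ⟨a₁, ha₁⟩ := exists_greedy_residues S (q.primeFactors.filter fun p : ℕ => (p : ℝ) ≤ s)
    fun p hp => Nat.prime_of_mem_primeFactors (Finset.mem_filter.1 hp).1
  set L := S.filter fun m => ∀ p ∈ q.primeFactors.filter (fun p : ℕ => (p : ℝ) ≤ s),
    ¬ m ≡ a₁ p [MOD p] with hL
  set C := (Finset.Ioc (u / 2) (2 * (u / 2))).filter Nat.Prime with hC
  have hLC : L.card ≤ C.card := by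
    have hφ : (0 : ℝ) < q.totient := by exact_mod_cast Nat.totient_pos.2 hq0
    have h : (L.card : ℝ) ≤ C.card := by
      calc (L.card : ℝ) ≤ _ := ha₁
        _ ≤ (δ * x / q.totient) * (3 / 2 * (q.totient / q)) :=
          mul_le_mul ((Nat.cast_le.2 hScard).trans hπ)
            (prod_small_factors_le hq0 hs3 (hsx ▸ hqx))
            (Finset.prod_nonneg fun p hp => sub_nonneg.2 (inv_le_one_of_one_le₀ (by
              exact_mod_cast
                (Nat.prime_of_mem_primeFactors (Finset.mem_filter.1 hp).1).one_lt.le)))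
            (by positivity)
        _ = 0.15 * (10 * δ * x / q) := by field_simp; ring
        _ ≤ 0.15 * (u / Real.log u) := by gcongr
        _ ≤ _ := hN u hNu
    exact_mod_cast h
  obtain ⟨g, hg⟩ := exists_fun_hitting L C hLC
  -- the class modulo `p ∤ q` of the `m` with `p ∣ q m + b`
  let c : ℕ → ℕ := fun p => if h : ∃ m, p ∣ q * m + b then h.choose else 0
  refine jacobsthal_ge_of_residues hu6
    (fun p => if (p : ℝ) ≤ s then (if p ∣ q then a₁ p else c p) else g p) ?_
  intro m hm1 hmM
  by_cases hprime : (q * m + b).Prime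
  · have hmS : m ∈ S := Finset.mem_filter.2 ⟨Finset.mem_Icc.2 ⟨hm1, hmM⟩, hprime⟩
    by_cases hmL : m ∈ L
    · obtain ⟨p, hpC, hgp⟩ := hg m hmL
      obtain ⟨h1, hp⟩ := Finset.mem_filter.1 hpC
      rw [Finset.mem_Ioc] at h1
      refine ⟨p, hp, by omega, ?_⟩
      have hps : ¬ (p : ℝ) ≤ s := by
        have : (u : ℝ) ≤ 2 * p := by exact_mod_cast (by omega : u ≤ 2 * p)
        linarith
      simp only [hps, if_false, hgp]
      rfl
    · have : ∃ p ∈ q.primeFactors.filter (fun p : ℕ => (p : ℝ) ≤ s), m ≡ a₁ p [MOD p] := by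
        by_contra h
        push Not at h
        exact hmL (Finset.mem_filter.2 ⟨hmS, h⟩)
      obtain ⟨p, hp, hmp⟩ := this
      obtain ⟨hpq, hps⟩ := Finset.mem_filter.1 hp
      refine ⟨p, Nat.prime_of_mem_primeFactors hpq, ?_, ?_⟩
      · have : (p : ℝ) ≤ u := by linarith
        exact_mod_cast this
      · simpa only [hps, if_true, Nat.dvd_of_mem_primeFactors hpq] using hmp
  · -- `q m + b` is composite and at most `x`, hence has a prime factor `p ≤ √x`
    have hpos : 1 < q * m + b := by nlinarith
    set p := (q * m + b).minFac with hp
    have hpp : p.Prime := Nat.minFac_prime hpos.ne'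
    have hpd : p ∣ q * m + b := Nat.minFac_dvd _
    have hps : (p : ℝ) ≤ s := by
      refine Real.le_sqrt_of_sq_le (le_trans ?_ (hMx m hmM))
      exact_mod_cast Nat.minFac_sq_le_self (by omega) hprime
    have hpq : ¬ p ∣ q := by
      intro h
      have hpb : p ∣ b := (Nat.dvd_add_right (h.mul_right m)).1 hpd
      exact hpp.one_lt.ne' (Nat.dvd_one.1 (hgcd ▸ Nat.dvd_gcd hpb h))
    refine ⟨p, hpp, ?_, ?_⟩
    · have : (p : ℝ) ≤ u := by linarith
      exact_mod_cast this
    · have hex : ∃ m, p ∣ q * m + b := ⟨m, hpd⟩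
      have hc : p ∣ q * c p + b := by
        simp only [c, hex, dif_pos]
        exact hex.choose_spec
      simp only [hps, if_true, hpq, if_false]
      have h1 : q * m + b ≡ q * c p + b [MOD p] :=
        ((Nat.modEq_zero_iff_dvd).2 hpd).trans ((Nat.modEq_zero_iff_dvd).2 hc).symm
      exact (Nat.ModEq.add_right_cancel' b h1).cancel_left_of_coprime
        ((hpp.coprime_iff_not_dvd).2 hpq)
end

section
/- There exists a constant x₀ such that the following holds for all real x ≥ x₀. Let q and b be integers with x > q > b > 0 and gcd(b,q) = 1, and suppose that L(q,b) > x, i.e. there is no prime p ≤ x with p ≡ b (mod q). Then G(e^{4√x}) ≥ (x−b)/q. -/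
/-- The product of the primes `p ≤ T` that do not divide `q`. -/
def coprimePrimorial (T q : ℕ) : ℕ :=
  ∏ p ∈ (Finset.range (T + 1)).filter (fun p => p.Prime ∧ ¬ p ∣ q), p

lemma coprimePrimorial_pos (T q : ℕ) : 0 < coprimePrimorial T q :=
  Finset.prod_pos fun _ hp => (Finset.mem_filter.1 hp).2.1.pos

lemma coprimePrimorial_le (T q : ℕ) : coprimePrimorial T q ≤ 4 ^ T := by
  refine le_trans ?_ (primorial_le_four_pow T)
  refine Finset.prod_le_prod_of_subset_of_one_le' ?_ ?_
  · intro p hp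
    simp only [Finset.mem_filter] at hp ⊢
    exact ⟨hp.1, hp.2.1⟩
  · intro p hp _
    exact (Finset.mem_filter.1 hp).2.one_le

lemma coprime_coprimePrimorial (T q : ℕ) : Nat.Coprime q (coprimePrimorial T q) :=
  Nat.Coprime.prod_right fun _ hp =>
    ((Nat.Prime.coprime_iff_not_dvd (Finset.mem_filter.1 hp).2.1).2
      (Finset.mem_filter.1 hp).2.2).symm

lemma dvd_coprimePrimorial {T q p : ℕ} (hp : p.Prime) (hT : p ≤ T) (hq : ¬ p ∣ q) :
    p ∣ coprimePrimorial T q :=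
  Finset.dvd_prod_of_mem _
    (Finset.mem_filter.2 ⟨Finset.mem_range.2 (Nat.lt_succ_of_le hT), hp, hq⟩)

/-- Every window of length `P` contains a solution of `q m ≡ b (mod P)`, if `q` and `P` are
coprime. -/
lemma exists_shift {q P : ℕ} (b N : ℕ) (hP : 0 < P) (h : Nat.Coprime q P) :
    ∃ m, N ≤ m ∧ m < N + P ∧ q * m ≡ b [MOD P] := by
  obtain ⟨z, hz0, hzb⟩ := Nat.chineseRemainder h 0 b
  obtain ⟨m₀, rfl⟩ := (Nat.modEq_zero_iff_dvd).1 hz0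
  have hNP : N ≤ P * N := Nat.le_mul_of_pos_left N hP
  refine ⟨N + (m₀ + P * N - N) % P, by omega, by have := Nat.mod_lt (m₀ + P * N - N) hP; omega, ?_⟩
  refine Nat.ModEq.trans (Nat.ModEq.mul_left q ?_) hzb
  calc N + (m₀ + P * N - N) % P ≡ N + (m₀ + P * N - N) [MOD P] :=
        Nat.ModEq.add_left N (Nat.mod_modEq _ _)
    _ = m₀ + P * N := by omega
    _ ≡ m₀ [MOD P] := by simp [Nat.ModEq]

/-- If no integer in `(m, m + k]` is prime, then some gap between consecutive primes has length at
least `k + 1` and ends at or before `2 (m + k)`. -/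
lemma exists_gap {m k : ℕ} (hm : 2 ≤ m) (h : ∀ j, 1 ≤ j → j ≤ k → ¬ (m + j).Prime) :
    ∃ p p' : ℕ, p.Prime ∧ p'.Prime ∧ p < p' ∧ p' ≤ 2 * (m + k) ∧
      (∀ r, p < r → r < p' → ¬ r.Prime) ∧ k + 1 ≤ p' - p := by
  obtain ⟨t, ht, htl, htu⟩ := Nat.exists_prime_lt_and_le_two_mul (m + k) (by omega)
  have hex : ∃ t, t.Prime ∧ m < t := ⟨t, ht, by omega⟩
  have hple : Nat.findGreatest Nat.Prime m ≤ m := Nat.findGreatest_le m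
  obtain ⟨hp', hmp'⟩ := Nat.find_spec hex
  have hfar : m + k < Nat.find hex := by
    by_contra hcon
    refine h (Nat.find hex - m) (by omega) (by omega) ?_
    rwa [Nat.add_sub_cancel' hmp'.le]
  refine ⟨Nat.findGreatest Nat.Prime m, Nat.find hex,
    Nat.findGreatest_spec hm Nat.prime_two, hp', by omega,
    (Nat.find_min' hex ⟨ht, by omega⟩).trans htu, ?_, by omega⟩
  intro r hpr hrp hr
  by_cases hrm : r ≤ m
  · exact Nat.findGreatest_is_greatest hpr hrm hr
  · exact Nat.find_min hex hrp ⟨hr, by omega⟩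

/-- A composite term `b + j q` below `(T + 1)²` of a reduced residue class has a prime factor
`p ≤ T`, and `p ∤ q`. -/
lemma exists_small_prime_dvd {n q b j T : ℕ} (hn : n = b + j * q) (hn1 : n ≠ 1)
    (hn0 : 0 < n) (hprime : ¬ n.Prime) (hT : n < (T + 1) ^ 2) (hg : Nat.gcd b q = 1) :
    ∃ p, p.Prime ∧ p ≤ T ∧ ¬ p ∣ q ∧ p ∣ n := by
  have hp := Nat.minFac_prime hn1
  refine ⟨n.minFac, hp, ?_, ?_, Nat.minFac_dvd n⟩
  · have h1 := Nat.minFac_sq_le_self hn0 hprime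
    exact Nat.lt_succ_iff.1 (lt_of_pow_lt_pow_left₀ 2 (by omega) (h1.trans_lt hT))
  · intro hdq
    have hdn : n.minFac ∣ b + j * q := hn ▸ Nat.minFac_dvd n
    have hdb : n.minFac ∣ b := (Nat.dvd_add_left (hdq.mul_left j)).1 hdn
    exact hp.one_lt.ne' (Nat.dvd_one.1 (hg ▸ Nat.dvd_gcd hdb hdq))

lemma le_primeGap {X : ℝ} {p p' : ℕ} (hp : p.Prime) (hp' : p'.Prime) (hlt : p < p')
    (hX : (p' : ℝ) ≤ X) (h : ∀ r : ℕ, p < r → r < p' → ¬ r.Prime) : p' - p ≤ primeGap X := by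
  refine le_csSup ⟨⌊X⌋₊, ?_⟩ ⟨p, p', hp, hp', hlt, hX, h, rfl⟩
  rintro d ⟨a, a', -, -, -, haX, -, rfl⟩
  exact (Nat.sub_le _ _).trans (Nat.le_floor haX)

/-- The size estimate: the right end of the gap found is at most `e^{4s}`, where `s = √x`. -/
lemma size_bound {s : ℝ} (hs : 1 ≤ s) :
    2 * (⌊s⌋₊ + 2 + (4 : ℝ) ^ ⌊s⌋₊ + s ^ 2) ≤ Real.exp (4 * s) := by
  have hT : (⌊s⌋₊ : ℝ) ≤ s := Nat.floor_le (by linarith)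
  have h4 : (4 : ℝ) ≤ Real.exp 2 := by
    have := Real.quadratic_le_exp_of_nonneg (x := 2) (by norm_num)
    linarith
  have hpow : (4 : ℝ) ^ ⌊s⌋₊ ≤ Real.exp (2 * s) := by
    calc (4 : ℝ) ^ ⌊s⌋₊ ≤ (Real.exp 2) ^ ⌊s⌋₊ := by gcongr
      _ = Real.exp (⌊s⌋₊ * 2) := by rw [Real.exp_nat_mul]
      _ ≤ Real.exp (2 * s) := Real.exp_le_exp.2 (by linarith)
  have hE := Real.quadratic_le_exp_of_nonneg (x := 2 * s) (by linarith)
  have hsq : Real.exp (4 * s) = Real.exp (2 * s) ^ 2 := by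
    rw [← Real.exp_nat_mul]; congr 1; push_cast; ring
  rw [hsq]
  nlinarith

/-- **Corollary.** If there is no prime `p ≤ x` with `p ≡ b (mod q)`
(i.e. `L(q,b) > x`), where `x > q > b > 0` and `gcd(b,q) = 1`, then
`G(e^{4√x}) ≥ (x - b)/q`. -/
theorem large_least_prime_implies_large_gaps :
    ∃ x₀ : ℝ, ∀ x : ℝ, x ≥ x₀ →
      ∀ q b : ℕ, (q : ℝ) < x → b < q → 0 < b → Nat.gcd b q = 1 →
      (∀ p : ℕ, p.Prime → (p : ℝ) ≤ x → p % q ≠ b % q) →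
      (primeGap (Real.exp (4 * Real.sqrt x)) : ℝ) ≥ (x - b) / q := by
  refine ⟨1, fun x hx q b _ hbq hb hg hno => ?_⟩
  have hq0 : 0 < q := by omega
  have hqR : (1 : ℝ) ≤ q := by exact_mod_cast hq0
  have hs : 1 ≤ Real.sqrt x := Real.one_le_sqrt.2 hx
  have hsx : Real.sqrt x ^ 2 = x := Real.sq_sqrt (by linarith)
  set T := ⌊Real.sqrt x⌋₊ with hTdef
  set k := ⌊(x - b) / q⌋₊ with hk
  obtain ⟨m, hNm, hmN, hmod⟩ := exists_shift b (T + 2) (coprimePrimorial_pos T q)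
    (coprime_coprimePrimorial T q)
  have hcomp : ∀ j, 1 ≤ j → j ≤ k → ¬ (m + j).Prime := by
    intro j hj hjk hprime
    have hjx : ((b + j * q : ℕ) : ℝ) ≤ x := by
      have h1 : (j : ℝ) ≤ (x - b) / q := (Nat.le_floor_iff' (by omega)).1 hjk
      rw [le_div_iff₀ (by linarith)] at h1
      push_cast
      linarith
    have hjq : q ≤ j * q := Nat.le_mul_of_pos_left q hj
    have hT : b + j * q < (T + 1) ^ 2 := by
      have h1 : Real.sqrt x < T + 1 := Nat.lt_floor_add_one _
      have h2 : ((b + j * q : ℕ) : ℝ) < ((T : ℝ) + 1) ^ 2 := by nlinarith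
      exact_mod_cast h2
    obtain ⟨p, hp, hpT, hpq, hpd⟩ := exists_small_prime_dvd rfl (by omega) (by omega)
      (fun h => hno _ h hjx (by simp)) hT hg
    have hmp : q * m ≡ b [MOD p] := hmod.of_dvd (dvd_coprimePrimorial hp hpT hpq)
    have hdvd : p ∣ q * (m + j) := by
      have h1 : q * m + j * q ≡ b + j * q [MOD p] := hmp.add_right _
      rw [show q * (m + j) = q * m + j * q by ring]
      exact (h1.dvd_iff dvd_rfl).2 hpd
    have hpm : p ∣ m + j := (hp.dvd_mul.1 hdvd).resolve_left hpq
    -- `p = m + j` is impossible, because `p ≤ T < m`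
    have := (Nat.prime_dvd_prime_iff_eq hp hprime).1 hpm
    omega
  obtain ⟨p, p', hp, hp', hlt, hle, hcons, hgap⟩ := exists_gap (by omega) hcomp
  have hkx : (k : ℝ) ≤ x := by
    rcases Nat.eq_zero_or_pos k with h | h
    · rw [h]; push_cast; linarith
    · have h1 : (k : ℝ) ≤ (x - b) / q := (Nat.le_floor_iff' (by omega)).1 le_rfl
      rw [le_div_iff₀ (by linarith)] at h1
      have hbR : (0 : ℝ) ≤ b := Nat.cast_nonneg b
      have hkR : (0 : ℝ) ≤ k := Nat.cast_nonneg k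
      nlinarith
  have hX : (p' : ℝ) ≤ Real.exp (4 * Real.sqrt x) := by
    refine le_trans ?_ (size_bound hs)
    have h1 : m ≤ T + 2 + 4 ^ T := by have := coprimePrimorial_le T q; omega
    have h2 : (m : ℝ) ≤ T + 2 + 4 ^ T := by exact_mod_cast h1
    have h3 : (p' : ℝ) ≤ 2 * (m + k) := by exact_mod_cast hle
    rw [hsx]
    linarith
  have hfin : ((k + 1 : ℕ) : ℝ) ≤ primeGap (Real.exp (4 * Real.sqrt x)) := by
    exact_mod_cast hgap.trans (le_primeGap hp hp' hlt hX hcons)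
  have hfl : (x - b) / q < k + 1 := Nat.lt_floor_add_one _
  push_cast at hfin
  linarith
end

section
/- (Gallagher) There exist absolute constants B > 1 and C > 0 such that the following holds. Let χ be a real Dirichlet character of conductor q (i.e. χ is a primitive real-valued Dirichlet character modulo q), let 0 < δ < 1, and suppose L(1−δ, χ) = 0. Then for every integer b with χ(b) = 1 and every real x ≥ q^B, one has π(x;q,b) ≤ C·δ·x/φ(q). -/
namespace Gallagher

open Finset

/-! ### Real characters and the convolution `r = 1 * χ` -/

/-- `c` is a real nonprincipal character modulo `q`, viewed as a function on `ℕ`. The only analytic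
input recorded is that sums over intervals are bounded by `2q`. Nonprincipality forces `q ≥ 2`, and
enters otherwise only through that bound. -/
structure RealChar (q : ℕ) (c : ℕ → ℝ) : Prop where
  one : c 1 = 1
  mul : ∀ m n, c (m * n) = c m * c n
  values : ∀ n, c n = 0 ∨ c n = 1 ∨ c n = -1
  zero_iff : ∀ n, c n = 0 ↔ ¬ n.Coprime q
  bdd : ∀ M N, |∑ n ∈ Ico M N, c n| ≤ 2 * q
  two_le : 2 ≤ q

namespace RealChar

variable {q : ℕ} {c : ℕ → ℝ}

lemma abs_le_one (h : RealChar q c) (n : ℕ) : |c n| ≤ 1 := by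
  rcases h.values n with h | h | h <;> simp [h]

lemma zero (h : RealChar q c) : c 0 = 0 := by
  rw [h.zero_iff]
  have := h.two_le
  simp; omega

lemma pow (h : RealChar q c) (m k : ℕ) : c (m ^ k) = c m ^ k := by
  induction k with
  | zero => simp [h.one]
  | succ k ih => rw [pow_succ, h.mul, ih, pow_succ]

/-- The character as an arithmetic function. -/
noncomputable def arith (h : RealChar q c) : ArithmeticFunction ℝ := ⟨c, h.zero⟩

@[simp] lemma arith_apply (h : RealChar q c) (n : ℕ) : h.arith n = c n := rfl

lemma arith_mult (h : RealChar q c) : h.arith.IsMultiplicative :=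
  ⟨h.one, fun _ => h.mul _ _⟩

/-- The arithmetic function `r = 1 * χ`. It is nonnegative, at least `1` at squares, and `2` at primes
with `χ(p) = 1`. -/
noncomputable def r (h : RealChar q c) : ArithmeticFunction ℝ :=
  h.arith * (ArithmeticFunction.zeta : ArithmeticFunction ℝ)

lemma r_apply (h : RealChar q c) (n : ℕ) : h.r n = ∑ d ∈ n.divisors, c d := by
  rw [r, ArithmeticFunction.coe_mul_zeta_apply]; rfl

lemma r_mult (h : RealChar q c) : h.r.IsMultiplicative :=
  h.arith_mult.mul ArithmeticFunction.isMultiplicative_zeta.natCast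

lemma r_prime_pow (h : RealChar q c) {p : ℕ} (hp : p.Prime) (k : ℕ) :
    h.r (p ^ k) = ∑ i ∈ range (k + 1), c p ^ i := by
  rw [r_apply, Nat.sum_divisors_prime_pow hp]
  exact sum_congr rfl fun i _ => h.pow p i

lemma r_prime_pow_nonneg (h : RealChar q c) {p : ℕ} (hp : p.Prime) (k : ℕ) :
    0 ≤ h.r (p ^ k) := by
  rw [h.r_prime_pow hp]
  rcases h.values p with hc | hc | hc <;> rw [hc]
  · exact sum_nonneg fun i _ => by positivity
  · exact sum_nonneg fun i _ => by positivity
  · rw [neg_one_geom_sum]; split_ifs <;> norm_num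

lemma one_le_r_prime_pow_even (h : RealChar q c) {p : ℕ} (hp : p.Prime) (k : ℕ) :
    1 ≤ h.r (p ^ (2 * k)) := by
  rw [h.r_prime_pow hp]
  rcases h.values p with hc | hc | hc <;> rw [hc]
  · rw [sum_range_succ']; simp
  · simp
  · rw [neg_one_geom_sum, if_neg]; simp

lemma r_nonneg (h : RealChar q c) (n : ℕ) : 0 ≤ h.r n := by
  rcases eq_or_ne n 0 with rfl | hn
  · simp
  rw [h.r_mult.multiplicative_factorization _ hn]
  exact prod_nonneg fun p hp => h.r_prime_pow_nonneg (Nat.prime_of_mem_primeFactors hp) _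

lemma one_le_r_sq (h : RealChar q c) {n : ℕ} (hn : n ≠ 0) : 1 ≤ h.r (n ^ 2) := by
  rw [h.r_mult.multiplicative_factorization _ (by positivity), Nat.factorization_pow]
  refine Finset.prod_induction _ (fun x : ℝ => 1 ≤ x) (fun a b ha hb => one_le_mul_of_one_le_of_one_le ha hb)
    le_rfl fun p hp => ?_
  have hp' : p.Prime := Nat.prime_of_mem_primeFactors (n := n ^ 2) (by
    rw [← Nat.support_factorization, Nat.factorization_pow]; exact hp)
  simpa using h.one_le_r_prime_pow_even hp' _

lemma r_one (h : RealChar q c) : h.r 1 = 1 := h.r_mult.1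

lemma r_prime (h : RealChar q c) {p : ℕ} (hp : p.Prime) (h1 : c p = 1) : h.r p = 2 := by
  have := h.r_prime_pow hp 1
  rw [pow_one] at this
  rw [this, h1]; norm_num [sum_range_succ]

/-- Abel's inequality for character sums with antitone nonnegative weights. -/
lemma abel (h : RealChar q c) (f : ℕ → ℝ) (M N : ℕ)
    (hf : ∀ i j, M ≤ i → i ≤ j → j < N → f j ≤ f i) (hf0 : ∀ i, M ≤ i → i < N → 0 ≤ f i) (hMN : M < N) :
    |∑ n ∈ Ico M N, c n * f n| ≤ 2 * q * f M := by
  obtain ⟨k, rfl⟩ : ∃ k, N = M + (k + 1) := ⟨N - M - 1, by omega⟩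
  -- by downward summation: the sum is a nonnegative combination of partial sums
  have key : ∀ k, ∑ n ∈ Ico M (M + (k + 1)), c n * f n =
      f (M + k) * ∑ n ∈ Ico M (M + (k + 1)), c n +
      ∑ i ∈ range k, (f (M + i) - f (M + i + 1)) * ∑ n ∈ Ico M (M + (i + 1)), c n := by
    intro k
    induction k with
    | zero => simp [mul_comm]
    | succ k ih =>
      have e : ∀ g : ℕ → ℝ, ∑ n ∈ Ico M (M + (k + 1 + 1)), g n =
          ∑ n ∈ Ico M (M + (k + 1)), g n + g (M + (k + 1)) := fun g => by
        rw [← add_assoc M (k + 1) 1, sum_Ico_succ_top (by omega)]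
      rw [e, e, ih, sum_range_succ, ← add_assoc M k 1]; ring
  rw [key]
  have hq : (0 : ℝ) ≤ 2 * q := by positivity
  have tel : ∑ i ∈ range k, (f (M + i) - f (M + i + 1)) = f M - f (M + k) := by
    have := Finset.sum_range_sub' (fun i => f (M + i)) k
    simpa [add_assoc] using this
  calc _ ≤ |f (M + k) * ∑ n ∈ Ico M (M + (k + 1)), c n| +
        ∑ i ∈ range k, |(f (M + i) - f (M + i + 1)) * ∑ n ∈ Ico M (M + (i + 1)), c n| :=
        (abs_add_le _ _).trans (by gcongr; exact abs_sum_le_sum_abs _ _)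
    _ ≤ f (M + k) * (2 * q) + ∑ i ∈ range k, (f (M + i) - f (M + i + 1)) * (2 * q) := by
        have h0 := hf0 (M + k) (by omega) (by omega)
        gcongr with i hi
        · rw [abs_mul, abs_of_nonneg h0]; gcongr; exact h.bdd _ _
        · have hi' := mem_range.mp hi
          have := hf (M + i) (M + i + 1) (by omega) (by omega) (by omega)
          have h2 : 0 ≤ f (M + i) - f (M + i + 1) := by linarith
          rw [abs_mul, abs_of_nonneg h2]; gcongr; exact h.bdd _ _
    _ = _ := by rw [← sum_mul, tel]; ring

/-- Partial sums of the Dirichlet series at a real point `s > 0` converge with an explicit rate. -/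
lemma exists_limit (h : RealChar q c) {s : ℝ} (hs : 0 < s) :
    ∃ L : ℝ, Filter.Tendsto (fun N : ℕ => ∑ n ∈ Ico 1 N, c n * (n : ℝ) ^ (-s)) Filter.atTop (nhds L) ∧
      ∀ N : ℕ, 1 ≤ N → |∑ n ∈ Ico 1 N, c n * (n : ℝ) ^ (-s) - L| ≤ 2 * q * (N : ℝ) ^ (-s) := by
  have hab : ∀ M N : ℕ, 1 ≤ M → M ≤ N →
      |∑ n ∈ Ico 1 N, c n * (n : ℝ) ^ (-s) - ∑ n ∈ Ico 1 M, c n * (n : ℝ) ^ (-s)| ≤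
        2 * q * (M : ℝ) ^ (-s) := by
    intro M N hM hMN
    rw [← sum_Ico_consecutive _ hM hMN, add_sub_cancel_left]
    rcases hMN.eq_or_lt with rfl | hlt
    · simp; positivity
    · refine h.abel (fun n => (n : ℝ) ^ (-s)) M N ?_ ?_ hlt
      · intro i j hi hij _
        exact Real.rpow_le_rpow_of_nonpos (by exact_mod_cast (by omega)) (by exact_mod_cast hij)
          (by linarith)
      · intro i _ _; positivity
  have hlim : Filter.Tendsto (fun M : ℕ => 2 * (q : ℝ) * (M : ℝ) ^ (-s)) Filter.atTop (nhds 0) := by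
    have := ((tendsto_rpow_neg_atTop hs).comp tendsto_natCast_atTop_atTop).const_mul (2 * (q : ℝ))
    simpa using this
  have hc : CauchySeq (fun N : ℕ => ∑ n ∈ Ico 1 N, c n * (n : ℝ) ^ (-s)) := by
    rw [Metric.cauchySeq_iff']
    intro ε hε
    obtain ⟨M, hM⟩ := ((hlim.eventually (gt_mem_nhds hε)).and (Filter.eventually_ge_atTop 1)).exists
    refine ⟨M, fun n hn => ?_⟩
    rw [Real.dist_eq]
    exact (hab M n hM.2 hn).trans_lt hM.1
  obtain ⟨L, hL⟩ := cauchySeq_tendsto_of_complete hc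
  refine ⟨L, hL, fun N hN => ?_⟩
  rw [abs_sub_comm]
  exact le_of_tendsto ((hL.sub_const _).abs)
    (Filter.eventually_atTop.mpr ⟨N, fun n hn => hab N n hN hn⟩)

end RealChar

end Gallagher

namespace Gallagher

open Finset

/-! ### A zero at `1 - δ` bounds `L(1, χ)` -/

/-- `L` is the value at `s` of the Dirichlet series of `c`, as witnessed by a rate of convergence of
its partial sums. -/
def IsLValue (q : ℕ) (c : ℕ → ℝ) (s L : ℝ) : Prop :=
  ∀ N : ℕ, 1 ≤ N → |∑ n ∈ Ico 1 N, c n * (n : ℝ) ^ (-s) - L| ≤ 2 * q * (N : ℝ) ^ (-s)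

/-- Concavity of `t ↦ t ^ δ`. -/
lemma rpow_sub_le {δ a b : ℝ} (hδ : 0 < δ) (hδ1 : δ ≤ 1) (ha : 0 < a) (hb : 0 < b) :
    b ^ δ - a ^ δ ≤ δ * ((b - a) * a ^ (-(1 - δ))) := by
  have h := rpow_one_add_le_one_add_mul_self (s := (b - a) / a)
    (by rw [le_div_iff₀ ha]; linarith) hδ.le hδ1
  have e : 1 + (b - a) / a = b / a := by field_simp; ring
  rw [e, Real.div_rpow hb.le ha.le, div_le_iff₀ (by positivity)] at h
  have e2 : a ^ (-(1 - δ)) = a ^ δ / a := by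
    rw [show -(1 - δ) = δ - 1 by ring, Real.rpow_sub_one ha.ne']
  rw [e2]
  have : (1 + δ * ((b - a) / a)) * a ^ δ = a ^ δ + δ * ((b - a) * (a ^ δ / a)) := by ring
  linarith

/-- Euler–Maclaurin to first order for `∑ m ^ (-(1 - δ))`, with the constant in `[0, 1]`. -/
lemma exists_const {δ : ℝ} (hδ : 0 < δ) (hδ1 : δ ≤ 1) :
    ∃ γ : ℝ, 0 ≤ γ ∧ γ ≤ 1 ∧ ∀ u : ℝ, 1 ≤ u →
      |∑ m ∈ Ioc 0 ⌊u⌋₊, (m : ℝ) ^ (-(1 - δ)) - (u ^ δ - 1) / δ - γ| ≤ 2 * u ^ (-(1 - δ)) := by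
  set H : ℕ → ℝ := fun N => ∑ m ∈ Ioc 0 N, (m : ℝ) ^ (-(1 - δ)) with hH
  have Hs : ∀ N, H (N + 1) = H N + ((N + 1 : ℕ) : ℝ) ^ (-(1 - δ)) := fun N => by
    simp only [hH]; rw [sum_Ioc_succ_top (by omega)]
  set a : ℕ → ℝ := fun N => H (N + 1) - (((N + 1 : ℕ) : ℝ) ^ δ - 1) / δ with ha
  set b : ℕ → ℝ := fun N => H (N + 1) - (((N + 2 : ℕ) : ℝ) ^ δ - 1) / δ with hb
  have ha_anti : Antitone a := by
    refine antitone_nat_of_succ_le fun N => ?_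
    have := rpow_sub_le hδ hδ1 (a := ((N + 2 : ℕ) : ℝ)) (b := ((N + 1 : ℕ) : ℝ))
      (by positivity) (by positivity)
    simp only [ha, Hs (N + 1)]
    have e : ((N + 1 + 1 : ℕ) : ℝ) = ((N + 2 : ℕ) : ℝ) := by push_cast; ring
    rw [e]
    have e2 : ((N + 1 : ℕ) : ℝ) - ((N + 2 : ℕ) : ℝ) = -1 := by push_cast; ring
    rw [e2] at this
    have e3 : ((((N + 2 : ℕ) : ℝ)) ^ δ - 1) / δ - ((((N + 1 : ℕ) : ℝ)) ^ δ - 1) / δ =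
      ((((N + 2 : ℕ) : ℝ)) ^ δ - (((N + 1 : ℕ) : ℝ)) ^ δ) / δ := by ring
    have : ((N + 2 : ℕ) : ℝ) ^ (-(1 - δ)) ≤
        ((((N + 2 : ℕ) : ℝ)) ^ δ - (((N + 1 : ℕ) : ℝ)) ^ δ) / δ := by
      rw [le_div_iff₀ hδ]; linarith
    linarith
  have hb_mono : Monotone b := by
    refine monotone_nat_of_le_succ fun N => ?_
    have := rpow_sub_le hδ hδ1 (a := ((N + 2 : ℕ) : ℝ)) (b := ((N + 3 : ℕ) : ℝ))
      (by positivity) (by positivity)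
    simp only [hb, Hs (N + 1)]
    have e : ((N + 1 + 1 : ℕ) : ℝ) = ((N + 2 : ℕ) : ℝ) := by push_cast; ring
    have e' : ((N + 1 + 2 : ℕ) : ℝ) = ((N + 3 : ℕ) : ℝ) := by push_cast; ring
    rw [e, e']
    have e2 : ((N + 3 : ℕ) : ℝ) - ((N + 2 : ℕ) : ℝ) = 1 := by push_cast; ring
    rw [e2] at this
    have e3 : ((((N + 3 : ℕ) : ℝ)) ^ δ - 1) / δ - ((((N + 2 : ℕ) : ℝ)) ^ δ - 1) / δ =
      ((((N + 3 : ℕ) : ℝ)) ^ δ - (((N + 2 : ℕ) : ℝ)) ^ δ) / δ := by ring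
    have : ((((N + 3 : ℕ) : ℝ)) ^ δ - (((N + 2 : ℕ) : ℝ)) ^ δ) / δ ≤
        ((N + 2 : ℕ) : ℝ) ^ (-(1 - δ)) := by
      rw [div_le_iff₀ hδ]; linarith
    linarith
  have hab : ∀ N, a N - b N ≤ ((N + 1 : ℕ) : ℝ) ^ (-(1 - δ)) := by
    intro N
    have := rpow_sub_le hδ hδ1 (a := ((N + 1 : ℕ) : ℝ)) (b := ((N + 2 : ℕ) : ℝ))
      (by positivity) (by positivity)
    have e2 : ((N + 2 : ℕ) : ℝ) - ((N + 1 : ℕ) : ℝ) = 1 := by push_cast; ring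
    rw [e2] at this
    have e : a N - b N = ((((N + 2 : ℕ) : ℝ)) ^ δ - (((N + 1 : ℕ) : ℝ)) ^ δ) / δ := by
      simp only [ha, hb]; ring
    rw [e, div_le_iff₀ hδ]; linarith
  have hba : ∀ N, b N ≤ a N := by
    intro N
    simp only [ha, hb]
    gcongr
    omega
  have hba' : ∀ M N, b M ≤ a N := fun M N =>
    (hb_mono (le_max_left M N)).trans ((hba _).trans (ha_anti (le_max_right M N)))
  have hb0 : 0 ≤ b 0 := by
    have := rpow_sub_le hδ hδ1 (a := 1) (b := 2) (by norm_num) (by norm_num)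
    simp only [Real.one_rpow] at this
    simp only [hb, hH]
    norm_num
    rw [div_le_one hδ]; linarith
  have ha0 : a 0 = 1 := by simp [ha, hH]
  refine ⟨⨅ N, a N, ?_, ?_, ?_⟩
  · exact le_ciInf fun N => hb0.trans (hba' 0 N)
  · rw [← ha0]; exact ciInf_le ⟨b 0, by rintro _ ⟨N, rfl⟩; exact hba' 0 N⟩ 0
  · intro u hu
    obtain ⟨N, hN⟩ : ∃ N, ⌊u⌋₊ = N + 1 :=
      ⟨⌊u⌋₊ - 1, by have := (Nat.one_le_floor_iff u).mpr hu; omega⟩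
    have g1 : (⨅ N, a N) ≤ a N := ciInf_le ⟨b 0, by rintro _ ⟨N, rfl⟩; exact hba' 0 N⟩ N
    have g2 : b N ≤ ⨅ N, a N := le_ciInf fun M => hba' N M
    have u0 : 0 ≤ u := by linarith
    have l1 : ((N + 1 : ℕ) : ℝ) ≤ u := by rw [← hN]; exact Nat.floor_le u0
    have l2 : u ≤ ((N + 2 : ℕ) : ℝ) := by
      have := (Nat.lt_floor_add_one u).le; rw [hN] at this; push_cast at this ⊢; linarith
    have l3 : (((N + 1 : ℕ) : ℝ)) ^ δ ≤ u ^ δ := by gcongr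
    have l4 : u ^ δ ≤ (((N + 2 : ℕ) : ℝ)) ^ δ := by gcongr
    have m1 : b N ≤ H (N + 1) - (u ^ δ - 1) / δ := by simp only [hb]; gcongr
    have m2 : H (N + 1) - (u ^ δ - 1) / δ ≤ a N := by simp only [ha]; gcongr
    have key : ((N + 1 : ℕ) : ℝ) ^ (-(1 - δ)) ≤ 2 * u ^ (-(1 - δ)) := by
      have h2 : u / 2 ≤ ((N + 1 : ℕ) : ℝ) := by push_cast at l2 ⊢; linarith [Nat.cast_nonneg (α := ℝ) N]
      calc ((N + 1 : ℕ) : ℝ) ^ (-(1 - δ)) ≤ (u / 2) ^ (-(1 - δ)) :=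
            Real.rpow_le_rpow_of_nonpos (by linarith) h2 (by linarith)
        _ = 2 ^ (1 - δ) * u ^ (-(1 - δ)) := by
            rw [Real.div_rpow u0 (by norm_num), Real.rpow_neg (x := 2) (by norm_num)]; field_simp
        _ ≤ 2 ^ (1 : ℝ) * u ^ (-(1 - δ)) := by
            gcongr
            · norm_num
            · linarith
        _ = _ := by norm_num
    rw [hN]
    change |H (N + 1) - _ - _| ≤ _
    have := hab N
    rw [abs_le]
    constructor <;> linarith

/-- A real zero makes `L(1, χ)` small. Put `β = 1 - δ`. Opening `r = 1 * χ` in `∑_{n ≤ y} r(n) n^{-β}`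
and evaluating the inner sums gives `(y^δ/δ) L(1, χ) + (γ - 1/δ) L(β, χ)` up to small errors; the
second term vanishes, and the left side is at most `y^δ ∑_{n ≤ y} r(n)/n`. -/
lemma RealChar.L_one_le {q : ℕ} {c : ℕ → ℝ} (h : RealChar q c) {δ L1 : ℝ} (hδ : 0 < δ) (hδ1 : δ ≤ 1)
    (hL1 : IsLValue q c 1 L1) (hLβ : IsLValue q c (1 - δ) 0) {y : ℕ} (hy : 4 * q ≤ δ * y) :
    L1 ≤ 4 * δ * ∑ n ∈ Ioc 0 y, h.r n / n := by
  obtain ⟨γ, hγ0, hγ1, hγ⟩ := exists_const hδ hδ1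
  have hq : (2 : ℝ) ≤ q := by exact_mod_cast h.two_le
  have hy0 : (0 : ℝ) < y := by
    by_contra hcon
    have : (y : ℝ) = 0 := le_antisymm (not_lt.mp hcon) (by positivity)
    rw [this] at hy; linarith
  have hy1 : 1 ≤ y := by exact_mod_cast hy0
  set β := 1 - δ with hβ
  have hyδ : 0 < (y : ℝ) ^ δ := by positivity
  have hT : ∑ n ∈ Ioc 0 y, h.r n * (n : ℝ) ^ (-β) =
      ∑ d ∈ Ioc 0 y, c d * (d : ℝ) ^ (-β) * ∑ m ∈ Ioc 0 ⌊(y : ℝ) / d⌋₊, (m : ℝ) ^ (-β) := by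
    let f : ArithmeticFunction ℝ := ⟨fun d => c d * (d : ℝ) ^ (-β), by simp [h.zero]⟩
    let g : ArithmeticFunction ℝ := ⟨fun m => if m = 0 then 0 else (m : ℝ) ^ (-β), by simp⟩
    have hfg : ∀ n, n ≠ 0 → (f * g) n = h.r n * (n : ℝ) ^ (-β) := by
      intro n hn
      rw [ArithmeticFunction.mul_apply, h.r_apply,
        ← Nat.sum_divisorsAntidiagonal (fun d _ => c d), sum_mul]
      refine sum_congr rfl fun x hx => ?_
      obtain ⟨hx1, -⟩ := Nat.mem_divisorsAntidiagonal.mp hx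
      have h2 : x.2 ≠ 0 := by rintro h0; simp [h0] at hx1; exact hn hx1.symm
      change c x.1 * (x.1 : ℝ) ^ (-β) * (if x.2 = 0 then 0 else (x.2 : ℝ) ^ (-β)) = _
      rw [if_neg h2, ← hx1]
      push_cast
      rw [Real.mul_rpow (by positivity) (by positivity)]; ring
    calc _ = ∑ n ∈ Ioc 0 y, (f * g) n :=
          sum_congr rfl fun n hn => (hfg n (by have := mem_Ioc.mp hn; omega)).symm
      _ = _ := by
          rw [ArithmeticFunction.sum_Ioc_mul_eq_sum_sum]
          refine sum_congr rfl fun d hd => ?_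
          rw [Nat.floor_div_eq_div]
          congr 1
          refine sum_congr rfl fun m hm => ?_
          exact if_neg (by have := mem_Ioc.mp hm; omega)
  -- the error in the Euler–Maclaurin approximation of the inner sum over `m ≤ y / d`
  set θ : ℕ → ℝ := fun d => ∑ m ∈ Ioc 0 ⌊(y : ℝ) / d⌋₊, (m : ℝ) ^ (-β) -
    (((y : ℝ) / d) ^ δ - 1) / δ - γ with hθ
  have hθb : ∀ d ∈ Ioc 0 y, |c d * (d : ℝ) ^ (-β) * θ d| ≤ 2 * (y : ℝ) ^ (-β) := by
    intro d hd
    rw [mem_Ioc] at hd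
    have hd0 : (0 : ℝ) < d := by exact_mod_cast hd.1
    have := hγ ((y : ℝ) / d) (by rw [one_le_div hd0]; exact_mod_cast hd.2)
    rw [abs_mul, abs_mul, abs_of_pos (a := (d : ℝ) ^ (-β)) (by positivity)]
    calc _ ≤ 1 * (d : ℝ) ^ (-β) * (2 * ((y : ℝ) / d) ^ (-β)) := by
          gcongr
          exact h.abs_le_one d
      _ = _ := by rw [Real.div_rpow hy0.le hd0.le]; field_simp
  have hsplit : ∑ n ∈ Ioc 0 y, h.r n * (n : ℝ) ^ (-β) =
      (y : ℝ) ^ δ / δ * ∑ d ∈ Ico 1 (y + 1), c d * (d : ℝ) ^ (-(1 : ℝ)) +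
      (γ - 1 / δ) * ∑ d ∈ Ico 1 (y + 1), c d * (d : ℝ) ^ (-β) +
      ∑ d ∈ Ioc 0 y, c d * (d : ℝ) ^ (-β) * θ d := by
    have e : Ico 1 (y + 1) = Ioc 0 y := by ext; simp; omega
    rw [hT, e, mul_sum, mul_sum, ← sum_add_distrib, ← sum_add_distrib]
    refine sum_congr rfl fun d hd => ?_
    rw [mem_Ioc] at hd
    have hd0 : (0 : ℝ) < d := by exact_mod_cast hd.1
    have e1 : (d : ℝ) ^ (-(1 : ℝ)) = (d : ℝ) ^ (-β) / (d : ℝ) ^ δ := by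
      rw [← Real.rpow_sub hd0]; congr 1; rw [hβ]; ring
    rw [e1]
    simp only [hθ]
    rw [Real.div_rpow hy0.le hd0.le]
    field_simp
    ring
  have t1 := hL1 (y + 1) (by omega)
  have t2 := hLβ (y + 1) (by omega)
  rw [sub_zero] at t2
  have hβ0 : 0 ≤ β := by rw [hβ]; linarith
  have t1' : L1 - 2 * q / y ≤ ∑ d ∈ Ico 1 (y + 1), c d * (d : ℝ) ^ (-(1 : ℝ)) := by
    have : 2 * (q : ℝ) * ((y + 1 : ℕ) : ℝ) ^ (-(1 : ℝ)) ≤ 2 * q / y := by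
      rw [Real.rpow_neg_one, ← div_eq_mul_inv]; gcongr; omega
    linarith [(abs_le.mp t1).1]
  have hyβ : (y : ℝ) ^ (-β) = (y : ℝ) ^ δ / y := by
    rw [show -β = δ - 1 by rw [hβ]; ring, Real.rpow_sub_one hy0.ne']
  have t2' : |(γ - 1 / δ) * ∑ d ∈ Ico 1 (y + 1), c d * (d : ℝ) ^ (-β)| ≤
      1 / δ * (2 * q * ((y : ℝ) ^ δ / y)) := by
    rw [abs_mul]
    have h1 : 1 ≤ 1 / δ := by rw [one_le_div hδ]; exact hδ1
    gcongr
    · rw [abs_le]; constructor <;> linarith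
    · refine t2.trans ?_
      rw [← hyβ]
      gcongr 2 * q * ?_
      exact Real.rpow_le_rpow_of_nonpos hy0 (by push_cast; linarith) (by linarith)
  have t3 : |∑ d ∈ Ioc 0 y, c d * (d : ℝ) ^ (-β) * θ d| ≤ 2 * (y : ℝ) ^ δ := by
    calc _ ≤ ∑ d ∈ Ioc 0 y, |c d * (d : ℝ) ^ (-β) * θ d| := abs_sum_le_sum_abs _ _
      _ ≤ ∑ d ∈ Ioc 0 y, 2 * (y : ℝ) ^ (-β) := sum_le_sum hθb
      _ = _ := by rw [sum_const, hyβ]; simp; field_simp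
  have t4 : ∑ n ∈ Ioc 0 y, h.r n * (n : ℝ) ^ (-β) ≤ (y : ℝ) ^ δ * ∑ n ∈ Ioc 0 y, h.r n / n := by
    rw [mul_sum]
    refine sum_le_sum fun n hn => ?_
    rw [mem_Ioc] at hn
    have hn0 : (0 : ℝ) < n := by exact_mod_cast hn.1
    have e1 : (n : ℝ) ^ (-β) = (n : ℝ) ^ δ / n := by
      rw [show -β = δ - 1 by rw [hβ]; ring, Real.rpow_sub_one hn0.ne']
    rw [e1]
    have : (n : ℝ) ^ δ ≤ (y : ℝ) ^ δ := by
      gcongr; exact_mod_cast hn.2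
    have h0 := h.r_nonneg n
    calc h.r n * ((n : ℝ) ^ δ / n) = (n : ℝ) ^ δ * (h.r n / n) := by ring
      _ ≤ _ := by gcongr
  have t5 : 1 ≤ ∑ n ∈ Ioc 0 y, h.r n / n := by
    have := single_le_sum (f := fun n : ℕ => h.r n / n) (s := Ioc 0 y)
      (fun n _ => div_nonneg (h.r_nonneg n) (Nat.cast_nonneg n)) (show 1 ∈ Ioc 0 y by simp; omega)
    simpa [h.r_one] using this
  set F := ∑ n ∈ Ioc 0 y, h.r n / n
  have m1 : (y : ℝ) ^ δ / δ * (L1 - 2 * q / y) ≤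
      (y : ℝ) ^ δ / δ * ∑ d ∈ Ico 1 (y + 1), c d * (d : ℝ) ^ (-(1 : ℝ)) := by gcongr
  have m2 := (abs_le.mp t2').1
  have m3 := (abs_le.mp t3).1
  have m4 : (y : ℝ) ^ δ / δ * (L1 - 2 * q / y) - 1 / δ * (2 * q * ((y : ℝ) ^ δ / y)) - 2 * (y : ℝ) ^ δ ≤
      (y : ℝ) ^ δ * F := by linarith
  have m5 : (y : ℝ) ^ δ * (L1 / δ - 4 * q / (δ * y) - 2) ≤ (y : ℝ) ^ δ * F := by
    refine le_trans (le_of_eq ?_) m4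
    field_simp; ring
  have m6 := le_of_mul_le_mul_left m5 hyδ
  have m7 : 4 * (q : ℝ) / (δ * y) ≤ 1 := by rw [div_le_one (by positivity)]; exact hy
  have m8 : L1 / δ ≤ 4 * F := by linarith
  rw [div_le_iff₀ hδ] at m8
  linarith

end Gallagher

namespace Gallagher

open Finset

/-! ### Effective lower bounds for `L(1, χ)` and for `δ` -/

lemma geom_aux {t : ℝ} (ht0 : 0 ≤ t) (ht1 : t ≤ 1) (n : ℕ) :
    (n + 1 : ℝ) * t ^ n ≤ 1 + n * t ^ (n + 1) := by
  induction n with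
  | zero => simp
  | succ n ih =>
    have h1 : t ^ (n + 1) ≤ 1 := pow_le_one₀ ht0 ht1
    have h2 : 0 ≤ (1 - t) * (1 - t ^ (n + 1)) := mul_nonneg (by linarith) (by linarith)
    have h3 := mul_le_mul_of_nonneg_left ih ht0
    push_cast
    rw [pow_succ t (n + 1)] at *
    rw [pow_succ t n] at *
    nlinarith

/-- The arithmetic–geometric mean inequality for `1 + t² + ⋯ + t^{2n}`. -/
lemma geom_lower {t : ℝ} (ht0 : 0 ≤ t) (ht1 : t ≤ 1) (n : ℕ) :
    (n + 1 : ℝ) * t ^ n ≤ ∑ i ∈ range (n + 1), (t ^ 2) ^ i := by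
  induction n with
  | zero => simp
  | succ n ih =>
    rw [sum_range_succ']
    have h1 := geom_aux ht0 ht1 (n + 1)
    have e : ∑ i ∈ range (n + 1), (t ^ 2) ^ (i + 1) = t ^ 2 * ∑ i ∈ range (n + 1), (t ^ 2) ^ i := by
      rw [mul_sum]; exact sum_congr rfl fun i _ => by ring
    rw [e]
    have h2 := mul_le_mul_of_nonneg_left ih (sq_nonneg t)
    push_cast at *
    have e3 : t ^ (n + 1 + 1) = t ^ 2 * t ^ n := by ring
    rw [e3] at h1
    simp only [pow_zero]
    linarith

/-- The difference between `1 / (n (1 - x))` and the Lambert weight `xⁿ / (1 - xⁿ)`. -/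
noncomputable def lambertGap (x : ℝ) (n : ℕ) : ℝ := 1 / (n * (1 - x)) - x ^ n / (1 - x ^ n)

lemma lambertGap_eq {x : ℝ} (hx0 : 0 < x) (hx1 : x < 1) {n : ℕ} (hn : 1 ≤ n) :
    lambertGap x n = (1 / n - x ^ n / ∑ i ∈ range n, x ^ i) / (1 - x) := by
  have h1 : (0 : ℝ) < 1 - x := by linarith
  have h2 : x ^ n < 1 := pow_lt_one₀ hx0.le hx1 (by omega)
  have hn0 : (0 : ℝ) < n := by exact_mod_cast hn
  have h3 : (∑ i ∈ range n, x ^ i) * (1 - x) = 1 - x ^ n := geom_sum_mul_neg x n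
  have hS : 0 < ∑ i ∈ range n, x ^ i := by
    by_contra hcon
    nlinarith [mul_nonneg (neg_nonneg.mpr (not_lt.mp hcon)) h1.le]
  rw [lambertGap, ← h3]
  field_simp

lemma lambertGap_nonneg {x : ℝ} (hx0 : 0 < x) (hx1 : x < 1) {n : ℕ} (hn : 1 ≤ n) :
    0 ≤ lambertGap x n := by
  rw [lambertGap_eq hx0 hx1 hn]
  have hn0 : (0 : ℝ) < n := by exact_mod_cast hn
  have h1 : (n : ℝ) * x ^ n ≤ ∑ i ∈ range n, x ^ i := by
    calc (n : ℝ) * x ^ n = ∑ i ∈ range n, x ^ n := by simp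
      _ ≤ _ := sum_le_sum fun i hi => pow_le_pow_of_le_one hx0.le hx1.le (mem_range.mp hi).le
  have hS : 0 < ∑ i ∈ range n, x ^ i := lt_of_lt_of_le (by positivity) h1
  refine div_nonneg ?_ (by linarith)
  rw [sub_nonneg, div_le_div_iff₀ hS hn0]
  linarith

lemma lambertGap_succ_le {t : ℝ} (ht0 : 0 < t) (ht1 : t < 1) {n : ℕ} (hn : 1 ≤ n) :
    lambertGap (t ^ 2) (n + 1) ≤ lambertGap (t ^ 2) n := by
  have hx0 : 0 < t ^ 2 := by positivity
  have hx1 : t ^ 2 < 1 := pow_lt_one₀ ht0.le ht1 (by omega)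
  rw [lambertGap_eq hx0 hx1 hn, lambertGap_eq hx0 hx1 (by omega)]
  refine div_le_div_of_nonneg_right ?_ (by linarith)
  obtain ⟨k, rfl⟩ : ∃ k, n = k + 1 := ⟨n - 1, by omega⟩
  have a1 := geom_lower ht0.le ht1.le k
  have a2 := geom_lower ht0.le ht1.le (k + 1)
  have a3 : ∑ i ∈ range (k + 1 + 1), (t ^ 2) ^ i = (t ^ 2) * ∑ i ∈ range (k + 1), (t ^ 2) ^ i + 1 := by
    rw [sum_range_succ', mul_sum]
    congr 1
    exact sum_congr rfl fun i _ => by ring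
  set S := ∑ i ∈ range (k + 1), (t ^ 2) ^ i
  set S' := ∑ i ∈ range (k + 1 + 1), (t ^ 2) ^ i
  have hS : 0 < S := lt_of_lt_of_le (by positivity) a1
  have hS' : 0 < S' := lt_of_lt_of_le (by positivity) a2
  have key : (t ^ 2) ^ (k + 1) / S - (t ^ 2) ^ (k + 1 + 1) / S' = (t ^ 2) ^ (k + 1) / (S * S') := by
    field_simp
    rw [a3]; ring
  have key2 : (1 : ℝ) / ((k + 1 : ℕ) : ℝ) - 1 / ((k + 1 + 1 : ℕ) : ℝ) = 1 / ((k + 1) * (k + 2)) := by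
    push_cast; field_simp; ring
  have key3 : (t ^ 2) ^ (k + 1) / (S * S') ≤ 1 / ((k + 1) * (k + 2)) := by
    rw [div_le_div_iff₀ (by positivity) (by positivity)]
    have b : ((k + 1 : ℝ) * t ^ k) * (((k + 1 : ℕ) + 1 : ℝ) * t ^ (k + 1)) ≤ S * S' := by gcongr
    have e1 : ((k + 1 : ℝ) * t ^ k) * (((k + 1 : ℕ) + 1 : ℝ) * t ^ (k + 1)) =
      t ^ (2 * k + 1) * ((k + 1) * (k + 2)) := by push_cast; ring
    have e2 : (t ^ 2) ^ (k + 1) ≤ t ^ (2 * k + 1) := by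
      rw [← pow_mul]; exact pow_le_pow_of_le_one ht0.le ht1.le (by omega)
    calc (t ^ 2) ^ (k + 1) * ((k + 1) * (k + 2)) ≤ t ^ (2 * k + 1) * ((k + 1 : ℝ) * (k + 2)) := by
          gcongr
      _ ≤ _ := by linarith
  linarith

/-- Monotonicity in `n` is what allows Abel's inequality to be applied to `∑ χ(n) lambertGap x n`. The
variable is written as a square so that `geom_lower` applies without half-integral powers. -/
lemma lambertGap_anti {t : ℝ} (ht0 : 0 < t) (ht1 : t < 1) {i j : ℕ} (hi : 1 ≤ i) (hij : i ≤ j) :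
    lambertGap (t ^ 2) j ≤ lambertGap (t ^ 2) i := by
  induction j, hij using Nat.le_induction with
  | base => rfl
  | succ j hj ih => exact (lambertGap_succ_le ht0 ht1 (by omega)).trans ih

/-- The Lambert series `∑ r(n) xⁿ = ∑ χ(n) xⁿ / (1 - xⁿ)` with `x = t²`: below, it is bounded by the
contribution of the squares `m²` with `m ≤ M`; above, replacing the weight by `1 / (n (1 - x))` costs at
most `2q` by Abel's inequality and produces `L(1, χ) / (1 - x)`. -/
lemma RealChar.lambert {q : ℕ} {c : ℕ → ℝ} (h : RealChar q c) {L1 : ℝ} (hL1 : IsLValue q c 1 L1)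
    {t : ℝ} (ht0 : 0 < t) (ht1 : t < 1) (M : ℕ) :
    M * t ^ (2 * M ^ 2) ≤ L1 / (1 - t ^ 2) + 2 * q := by
  have hx0 : 0 < t ^ 2 := by positivity
  have hx1 : t ^ 2 < 1 := pow_lt_one₀ ht0.le ht1 (by omega)
  set x := t ^ 2 with hx
  have h1x : 0 < 1 - x := by linarith
  -- for every large `N`, up to a term tending to `0`
  have main : ∀ N : ℕ, M ^ 2 ≤ N → 1 ≤ N →
      M * t ^ (2 * M ^ 2) ≤ (L1 + 2 * q * ((N + 1 : ℕ) : ℝ) ^ (-(1 : ℝ))) / (1 - x) + 2 * q +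
        N * x ^ N / (1 - x) := by
    intro N hMN hN
    have lower : (M : ℝ) * t ^ (2 * M ^ 2) ≤ ∑ n ∈ Ioc 0 N, h.r n * x ^ n := by
      calc (M : ℝ) * t ^ (2 * M ^ 2) = ∑ m ∈ Ioc 0 M, x ^ (M ^ 2) := by
            rw [sum_const, Nat.card_Ioc, hx, ← pow_mul]; simp
        _ ≤ ∑ m ∈ Ioc 0 M, h.r (m ^ 2) * x ^ (m ^ 2) := by
            refine sum_le_sum fun m hm => ?_
            rw [mem_Ioc] at hm
            have h1 := h.one_le_r_sq (n := m) (by omega)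
            have h2 : x ^ (M ^ 2) ≤ x ^ (m ^ 2) :=
              pow_le_pow_of_le_one hx0.le hx1.le (Nat.pow_le_pow_left hm.2 2)
            have h3 : 0 ≤ x ^ (m ^ 2) := by positivity
            nlinarith
        _ = ∑ n ∈ (Ioc 0 M).image (fun m => m ^ 2), h.r n * x ^ n := by
            rw [sum_image]
            intro a _ b _ hab
            exact Nat.pow_left_injective (n := 2) (by norm_num) hab
        _ ≤ _ := by
            refine sum_le_sum_of_subset_of_nonneg ?_ fun n _ _ =>
              mul_nonneg (h.r_nonneg n) (by positivity)
            intro n hn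
            simp only [mem_image, mem_Ioc] at hn ⊢
            obtain ⟨m, hm, rfl⟩ := hn
            exact ⟨by have := hm.1; positivity, (Nat.pow_le_pow_left hm.2 2).trans hMN⟩
    have swap : ∑ n ∈ Ioc 0 N, h.r n * x ^ n =
        ∑ d ∈ Ioc 0 N, c d * ∑ m ∈ Ioc 0 (N / d), x ^ (d * m) := by
      calc _ = ∑ n ∈ Ioc 0 N, ∑ d ∈ Ioc 0 N, if d ∣ n then c d * x ^ n else 0 := by
            refine sum_congr rfl fun n hn => ?_
            rw [mem_Ioc] at hn
            rw [h.r_apply, sum_mul, ← sum_filter]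
            refine sum_congr ?_ fun _ _ => rfl
            ext d
            simp only [Nat.mem_divisors, mem_filter, mem_Ioc]
            constructor
            · rintro ⟨hd, h0⟩
              exact ⟨⟨Nat.pos_of_dvd_of_pos hd hn.1, (Nat.le_of_dvd hn.1 hd).trans hn.2⟩, hd⟩
            · rintro ⟨_, hd⟩; exact ⟨hd, by omega⟩
        _ = _ := by
            rw [sum_comm]
            refine sum_congr rfl fun d hd => ?_
            rw [mem_Ioc] at hd
            rw [← sum_filter, mul_sum]
            refine (sum_bij (fun m _ => d * m) ?_ ?_ ?_ ?_).symm
            · intro m hm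
              simp only [mem_Ioc, mem_filter] at hm ⊢
              refine ⟨⟨Nat.mul_pos hd.1 hm.1, ?_⟩, dvd_mul_right _ _⟩
              rw [mul_comm]; exact (Nat.le_div_iff_mul_le hd.1).mp hm.2
            · intro a _ b _ hab; exact Nat.eq_of_mul_eq_mul_left hd.1 hab
            · intro n hn
              simp only [mem_Ioc, mem_filter] at hn
              obtain ⟨m, rfl⟩ := hn.2
              refine ⟨m, ?_, rfl⟩
              simp only [mem_Ioc]
              refine ⟨Nat.pos_of_mul_pos_left hn.1.1, (Nat.le_div_iff_mul_le hd.1).mpr ?_⟩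
              rw [mul_comm]; exact hn.1.2
            · intro m _; rfl
    have term : ∀ d ∈ Ioc 0 N, c d * ∑ m ∈ Ioc 0 (N / d), x ^ (d * m) ≤
        c d * (d : ℝ) ^ (-(1 : ℝ)) / (1 - x) - c d * lambertGap x d + x ^ N / (1 - x) := by
      intro d hd
      rw [mem_Ioc] at hd
      have hd0 : (0 : ℝ) < d := by exact_mod_cast hd.1
      have hxd : x ^ d < 1 := pow_lt_one₀ hx0.le hx1 (by omega)
      have hxd' : x ^ d ≤ x := pow_le_of_le_one hx0.le hx1.le (by omega)
      have e : ∑ m ∈ Ioc 0 (N / d), x ^ (d * m) =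
          x ^ d / (1 - x ^ d) - x ^ (d * (N / d + 1)) / (1 - x ^ d) := by
        have : ∀ K, ∑ m ∈ Ioc 0 K, x ^ (d * m) =
          x ^ d / (1 - x ^ d) - x ^ (d * (K + 1)) / (1 - x ^ d) := by
          intro K
          induction K with
          | zero => simp
          | succ K ih =>
            have : (1 - x ^ d) ≠ 0 := by linarith
            rw [sum_Ioc_succ_top (by omega), ih]
            field_simp
            ring
        exact this _
      have e2 : x ^ d / (1 - x ^ d) = (d : ℝ) ^ (-(1 : ℝ)) / (1 - x) - lambertGap x d := by
        rw [lambertGap, Real.rpow_neg_one]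
        have : (1 - x ^ d) ≠ 0 := by linarith
        field_simp
        ring
      have e3 : |c d * (x ^ (d * (N / d + 1)) / (1 - x ^ d))| ≤ x ^ N / (1 - x) := by
        have p : 0 < 1 - x ^ d := by linarith
        rw [abs_mul, abs_of_nonneg (a := x ^ (d * (N / d + 1)) / (1 - x ^ d)) (by positivity)]
        have hp : x ^ (d * (N / d + 1)) ≤ x ^ N :=
          pow_le_pow_of_le_one hx0.le hx1.le (Nat.lt_mul_div_succ N hd.1).le
        have hx2 : 0 < 1 - x := by linarith
        have hx3 : x ^ d ≤ x := pow_le_of_le_one hx0.le hx1.le (by omega)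
        calc _ ≤ 1 * (x ^ N / (1 - x)) := by
              refine mul_le_mul (h.abs_le_one d)
                (div_le_div₀ (by positivity) hp hx2 (by linarith)) (by positivity) one_pos.le
          _ = _ := one_mul _
      rw [e, e2]
      have := (abs_le.mp e3).1
      have e4 : c d * ((d : ℝ) ^ (-(1 : ℝ)) / (1 - x) - lambertGap x d -
        x ^ (d * (N / d + 1)) / (1 - x ^ d)) = c d * (d : ℝ) ^ (-(1 : ℝ)) / (1 - x) -
        c d * lambertGap x d - c d * (x ^ (d * (N / d + 1)) / (1 - x ^ d)) := by ring
      rw [e4]; linarith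
    have e : Ico 1 (N + 1) = Ioc 0 N := by ext; simp; omega
    have hA := h.abel (lambertGap x) 1 (N + 1)
      (fun i j hi hij _ => lambertGap_anti ht0 ht1 hi hij)
      (fun i hi _ => lambertGap_nonneg hx0 hx1 hi) (by omega)
    have g1 : lambertGap x 1 = 1 := by
      rw [lambertGap]; simp; field_simp
    have hB := hL1 (N + 1) (by omega)
    rw [e] at hA hB
    rw [g1] at hA
    have hsum := sum_le_sum term
    rw [sum_add_distrib, sum_sub_distrib, ← sum_div, sum_const, Nat.card_Ioc] at hsum
    simp only [nsmul_eq_mul, Nat.sub_zero] at hsum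
    have hA' := (abs_le.mp hA).1
    have hB' : (∑ n ∈ Ioc 0 N, c n * (n : ℝ) ^ (-(1 : ℝ))) / (1 - x) ≤
        (L1 + 2 * q * ((N + 1 : ℕ) : ℝ) ^ (-(1 : ℝ))) / (1 - x) := by
      gcongr
      linarith [(abs_le.mp hB).2]
    have : (N : ℝ) * (x ^ N / (1 - x)) = N * x ^ N / (1 - x) := by ring
    linarith
  have lim : Filter.Tendsto (fun N : ℕ => (L1 + 2 * q * ((N + 1 : ℕ) : ℝ) ^ (-(1 : ℝ))) / (1 - x) +
      2 * q + N * x ^ N / (1 - x)) Filter.atTop (nhds ((L1 + 2 * q * 0) / (1 - x) + 2 * q + 0 / (1 - x))) := by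
    refine Filter.Tendsto.add (Filter.Tendsto.add_const _ (Filter.Tendsto.div_const
      (Filter.Tendsto.const_add _ (Filter.Tendsto.const_mul _ ?_)) _))
      (Filter.Tendsto.div_const ?_ _)
    · exact ((tendsto_rpow_neg_atTop one_pos).comp tendsto_natCast_atTop_atTop).comp
        (Filter.tendsto_add_atTop_nat 1)
    · exact tendsto_self_mul_const_pow_of_lt_one hx0.le hx1
  have := ge_of_tendsto lim (Filter.eventually_atTop.mpr ⟨M ^ 2 + 1, fun N hN => main N (by omega) (by omega)⟩)
  simpa using this

/-- An effective lower bound for `L(1, χ)`: in `RealChar.lambert` the left side, of order `(1 - x)^{-1/2}`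
for the best `M`, is at least `4q` for `M = 8q`. -/
lemma RealChar.L_one_lower {q : ℕ} {c : ℕ → ℝ} (h : RealChar q c) {L1 : ℝ}
    (hL1 : IsLValue q c 1 L1) : 1 / (128 * q) ≤ L1 := by
  have hq : (2 : ℝ) ≤ q := by exact_mod_cast h.two_le
  set M : ℕ := 8 * q with hM
  have hM8 : (M : ℝ) = 8 * q := by rw [hM]; push_cast; ring
  have hM0 : (0 : ℝ) < M := by rw [hM8]; linarith
  have hM1 : (1 : ℝ) ≤ M := by rw [hM8]; linarith
  set t : ℝ := 1 - 1 / (4 * M ^ 2) with ht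
  have hs : 1 / (4 * (M : ℝ) ^ 2) ≤ 1 / 4 := by
    apply one_div_le_one_div_of_le <;> nlinarith
  have hs0 : 0 < 1 / (4 * (M : ℝ) ^ 2) := by positivity
  have ht0 : 0 < t := by rw [ht]; linarith
  have ht1 : t < 1 := by rw [ht]; linarith
  have hb : 1 / 2 ≤ t ^ (2 * M ^ 2) := by
    have := one_add_mul_le_pow (a := -(1 / (4 * (M : ℝ) ^ 2))) (by linarith) (2 * M ^ 2)
    have e : 1 + ((2 * M ^ 2 : ℕ) : ℝ) * -(1 / (4 * (M : ℝ) ^ 2)) = 1 / 2 := by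
      push_cast; field_simp; ring
    rw [e] at this
    exact this
  have hl := h.lambert hL1 ht0 ht1 M
  have h1 : (4 : ℝ) * q ≤ M * t ^ (2 * M ^ 2) := by
    rw [hM8] at *
    nlinarith
  have h2 : 2 * (q : ℝ) ≤ L1 / (1 - t ^ 2) := by linarith
  have h3 : 0 < 1 - t ^ 2 := by nlinarith
  have h4 : 1 / (4 * (M : ℝ) ^ 2) ≤ 1 - t ^ 2 := by
    have : 1 / (4 * (M : ℝ) ^ 2) = 1 - t := by rw [ht]; ring
    rw [this]; nlinarith
  rw [le_div_iff₀ h3] at h2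
  calc 1 / (128 * (q : ℝ)) = 2 * q * (1 / (4 * (M : ℝ) ^ 2)) := by rw [hM8]; field_simp; norm_num
    _ ≤ 2 * q * (1 - t ^ 2) := by gcongr
    _ ≤ L1 := h2

/-- An effective lower bound for the distance of a real zero to `1`, by comparing the truncated series
for `L(1, χ)` and `L(1 - δ, χ) = 0` term by term. -/
lemma RealChar.delta_lower {q : ℕ} {c : ℕ → ℝ} (h : RealChar q c) {δ L1 : ℝ} (hδ : 0 < δ)
    (hδ1 : δ ≤ 1 / 2) (hL1 : IsLValue q c 1 L1) (hLβ : IsLValue q c (1 - δ) 0) :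
    1 ≤ 2 ^ 28 * q ^ 5 * δ := by
  have hq : (2 : ℝ) ≤ q := by exact_mod_cast h.two_le
  have hlow := h.L_one_lower hL1
  set K : ℕ := 1024 * q ^ 2 with hK
  have hKr : (K : ℝ) = 1024 * q ^ 2 := by rw [hK]; push_cast; ring
  have hK0 : (1 : ℝ) ≤ K := by rw [hKr]; nlinarith
  have hK1 : 1 ≤ K := by exact_mod_cast hK0
  have hN1 : 1 ≤ K ^ 2 := Nat.one_le_pow _ _ hK1
  have t1 := hL1 (K ^ 2) hN1
  have t2 := hLβ (K ^ 2) hN1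
  rw [sub_zero] at t2
  have hNr : ((K ^ 2 : ℕ) : ℝ) = (K : ℝ) ^ 2 := by push_cast; ring
  have b1 : ((K ^ 2 : ℕ) : ℝ) ^ (-(1 : ℝ)) ≤ 1 / K := by
    rw [Real.rpow_neg_one, hNr, inv_eq_one_div]
    apply one_div_le_one_div_of_le <;> nlinarith
  have b2 : ((K ^ 2 : ℕ) : ℝ) ^ (-(1 - δ)) ≤ 1 / K := by
    calc ((K ^ 2 : ℕ) : ℝ) ^ (-(1 - δ)) ≤ ((K ^ 2 : ℕ) : ℝ) ^ (-(1 / 2 : ℝ)) :=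
          Real.rpow_le_rpow_of_exponent_le (by exact_mod_cast hN1) (by linarith)
      _ = 1 / K := by
          rw [hNr, Real.rpow_neg (by positivity), ← Real.sqrt_eq_rpow, Real.sqrt_sq (by linarith),
            inv_eq_one_div]
  have b3 : |∑ n ∈ Ico 1 (K ^ 2), c n * (n : ℝ) ^ (-(1 : ℝ)) -
      ∑ n ∈ Ico 1 (K ^ 2), c n * (n : ℝ) ^ (-(1 - δ))| ≤ K ^ 2 * δ := by
    rw [← sum_sub_distrib]
    calc _ ≤ ∑ n ∈ Ico 1 (K ^ 2), |c n * (n : ℝ) ^ (-(1 : ℝ)) - c n * (n : ℝ) ^ (-(1 - δ))| :=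
          abs_sum_le_sum_abs _ _
      _ ≤ ∑ n ∈ Ico 1 (K ^ 2), δ := by
          refine sum_le_sum fun n hn => ?_
          rw [mem_Ico] at hn
          have hn0 : (0 : ℝ) < n := by exact_mod_cast hn.1
          have hn1 : (1 : ℝ) ≤ n := by exact_mod_cast hn.1
          rw [← mul_sub, abs_mul]
          have e1 : (n : ℝ) ^ (-(1 - δ)) = (n : ℝ) ^ δ / n := by
            rw [show -(1 - δ) = δ - 1 by ring, Real.rpow_sub_one hn0.ne']
          have e2 := rpow_sub_le hδ (by linarith) one_pos hn0
          simp only [Real.one_rpow, mul_one] at e2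
          have e3 : (1 : ℝ) ≤ (n : ℝ) ^ δ := Real.one_le_rpow hn1 hδ.le
          rw [e1, Real.rpow_neg_one, abs_sub_comm,
            show (n : ℝ) ^ δ / n - (n : ℝ)⁻¹ = ((n : ℝ) ^ δ - 1) / n by field_simp,
            abs_of_nonneg (div_nonneg (by linarith) hn0.le)]
          calc |c n| * (((n : ℝ) ^ δ - 1) / n) ≤ 1 * (((n : ℝ) ^ δ - 1) / n) :=
                mul_le_mul_of_nonneg_right (h.abs_le_one n) (div_nonneg (by linarith) hn0.le)
            _ ≤ δ := by
                rw [one_mul, div_le_iff₀ hn0]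
                nlinarith
      _ ≤ K ^ 2 * δ := by
          rw [sum_const, Nat.card_Ico, nsmul_eq_mul]
          gcongr
          rw [← hNr]
          exact_mod_cast Nat.sub_le _ _
  have c1 : L1 ≤ K ^ 2 * δ + 2 * q * (1 / K) + 2 * q * (1 / K) := by
    have u1 := (abs_le.mp t1).1
    have u2 := (abs_le.mp t2).2
    have u3 := (abs_le.mp b3).2
    have v1 : 2 * (q : ℝ) * ((K ^ 2 : ℕ) : ℝ) ^ (-(1 : ℝ)) ≤ 2 * q * (1 / K) := by gcongr
    have v2 : 2 * (q : ℝ) * ((K ^ 2 : ℕ) : ℝ) ^ (-(1 - δ)) ≤ 2 * q * (1 / K) := by gcongr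
    linarith
  have c2 : 2 * (q : ℝ) * (1 / K) + 2 * q * (1 / K) = 1 / (256 * q) := by
    rw [hKr]; field_simp; norm_num
  have c3 : 1 / (128 * (q : ℝ)) = 1 / (256 * q) + 1 / (256 * q) := by field_simp; norm_num
  have c4 : 1 / (256 * (q : ℝ)) ≤ K ^ 2 * δ := by linarith
  rw [div_le_iff₀ (by positivity), hKr] at c4
  calc (1 : ℝ) ≤ (1024 * (q : ℝ) ^ 2) ^ 2 * δ * (256 * q) := c4
    _ = _ := by ring

end Gallagher

namespace Gallagher
open Finset
open scoped ArithmeticFunction.Moebius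

/-! ### Selberg's upper bound sieve -/

/-- Möbius cancellation over the divisor interval from `l` to `m`. -/
lemma sum_moebius_interval {l m : ℕ} (hm : Squarefree m) (hl : l ∣ m) :
    ∑ d ∈ m.divisors with l ∣ d, (μ d : ℝ) = if l = m then (μ l : ℝ) else 0 := by
  obtain ⟨k, rfl⟩ := hl
  have hk0 : k ≠ 0 := by rintro rfl; simp at hm
  have hl0 : l ≠ 0 := by rintro rfl; simp at hm
  have hcop : l.Coprime k := Nat.coprime_of_squarefree_mul hm
  have e : {d ∈ (l * k).divisors | l ∣ d} = k.divisors.image (l * ·) := by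
    ext d
    simp only [mem_filter, Nat.mem_divisors, mem_image]
    constructor
    · rintro ⟨⟨h1, h2⟩, e, rfl⟩
      exact ⟨e, ⟨Nat.dvd_of_mul_dvd_mul_left (Nat.pos_of_ne_zero hl0) h1, hk0⟩, rfl⟩
    · rintro ⟨e, ⟨h1, _⟩, rfl⟩
      exact ⟨⟨Nat.mul_dvd_mul_left l h1, by positivity⟩, dvd_mul_right _ _⟩
  rw [e, sum_image (fun a _ b _ hab => Nat.eq_of_mul_eq_mul_left (Nat.pos_of_ne_zero hl0) hab)]
  have e2 : ∀ x ∈ k.divisors, (μ (l * x) : ℝ) = μ l * μ x := by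
    intro x hx
    rw [ArithmeticFunction.isMultiplicative_moebius.map_mul_of_coprime
      (hcop.coprime_dvd_right (Nat.dvd_of_mem_divisors hx))]
    push_cast; rfl
  rw [sum_congr rfl e2, ← mul_sum]
  have e3 : ∑ x ∈ k.divisors, (μ x : ℝ) = if k = 1 then 1 else 0 := by
    have := congrArg (fun f => f k) ArithmeticFunction.moebius_mul_coe_zeta
    simp only [ArithmeticFunction.coe_mul_zeta_apply, ArithmeticFunction.one_apply] at this
    rw [← Int.cast_sum, this]; split_ifs <;> simp
  rw [e3]
  have : l = l * k ↔ k = 1 := by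
    constructor
    · intro h; exact Nat.eq_of_mul_eq_mul_left (Nat.pos_of_ne_zero hl0) (by omega)
    · rintro rfl; simp
  simp [this]

/-- The sum `S` of Selberg's terms up to the level `y`. -/
noncomputable def selbergSum (s : BoundingSieve) (y : ℕ) : ℝ :=
  ∑ l ∈ s.prodPrimes.divisors with l ≤ y, s.selbergTerms l

/-- Selberg's optimal weights of level `y`, before squaring. They are supported on `d ≤ y` and equal `1`
at `d = 1`. -/
noncomputable def selbergWeight (s : BoundingSieve) (y d : ℕ) : ℝ :=
  if d ∣ s.prodPrimes then
    μ d * (s.nu d)⁻¹ * (selbergSum s y)⁻¹ *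
      ∑ l ∈ s.prodPrimes.divisors with l ≤ y ∧ d ∣ l, s.selbergTerms l
  else 0

variable {s : BoundingSieve} {y : ℕ}

lemma selbergSum_pos (hy : 1 ≤ y) : 0 < selbergSum s y := by
  refine sum_pos (fun l hl => ?_) ⟨1, ?_⟩
  · simp only [mem_filter, Nat.mem_divisors] at hl
    exact BoundingSieve.selbergTerms_pos hl.1.1
  · simp [BoundingSieve.prodPrimes_ne_zero, hy]

lemma selbergWeight_one (hy : 1 ≤ y) : selbergWeight s y 1 = 1 := by
  have := selbergSum_pos (s := s) hy
  simp only [selbergWeight, one_dvd, if_true, and_true]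
  rw [← selbergSum, s.nu_mult.map_one]
  simp; field_simp

lemma selbergWeight_eq_zero {d : ℕ} (hd : y < d) : selbergWeight s y d = 0 := by
  rw [selbergWeight]
  split_ifs with h
  · rw [filter_eq_empty_iff.mpr, sum_empty, mul_zero]
    rintro l hl ⟨h1, h2⟩
    have := Nat.le_of_dvd (Nat.pos_of_mem_divisors hl) h2
    omega
  · rfl

/-- A crude bound, in place of the classical `|λ_d| ≤ 1`. -/
lemma abs_selbergWeight_le (hy : 1 ≤ y) {d : ℕ} (hd : d ∣ s.prodPrimes) :
    |selbergWeight s y d| ≤ (s.nu d)⁻¹ := by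
  have hS := selbergSum_pos (s := s) hy
  have hν := BoundingSieve.nu_pos_of_dvd_prodPrimes hd
  have h0 : 0 ≤ ∑ l ∈ s.prodPrimes.divisors with l ≤ y ∧ d ∣ l, s.selbergTerms l :=
    sum_nonneg fun l hl => by
      simp only [mem_filter, Nat.mem_divisors] at hl
      exact (BoundingSieve.selbergTerms_pos hl.1.1).le
  have h1 : ∑ l ∈ s.prodPrimes.divisors with l ≤ y ∧ d ∣ l, s.selbergTerms l ≤
      selbergSum s y := by
    refine sum_le_sum_of_subset_of_nonneg (fun l hl => ?_) fun l hl _ => ?_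
    · simp only [mem_filter] at hl ⊢; tauto
    · simp only [mem_filter, Nat.mem_divisors] at hl
      exact (BoundingSieve.selbergTerms_pos hl.1.1).le
  have hμ : |(μ d : ℝ)| ≤ 1 := by
    have := ArithmeticFunction.abs_moebius_le_one (n := d)
    exact_mod_cast this
  rw [selbergWeight, if_pos hd, mul_assoc, abs_mul, abs_mul, abs_of_pos (inv_pos.mpr hν),
    abs_of_nonneg (mul_nonneg (inv_pos.mpr hS).le h0)]
  have h2 : (selbergSum s y)⁻¹ *
      ∑ l ∈ s.prodPrimes.divisors with l ≤ y ∧ d ∣ l, s.selbergTerms l ≤ 1 := by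
    rw [inv_mul_le_iff₀ hS]; linarith
  calc _ ≤ 1 * (s.nu d)⁻¹ * 1 := by gcongr
    _ = _ := by ring

/-- The Möbius inversion that diagonalises Selberg's quadratic form at the optimal weights. -/
lemma sum_nu_selbergWeight {l : ℕ} (hl : l ∣ s.prodPrimes) :
    (∑ d ∈ s.prodPrimes.divisors, if l ∣ d then s.nu d * selbergWeight s y d else 0) =
      if l ≤ y then (selbergSum s y)⁻¹ * μ l * s.selbergTerms l else 0 := by
  have e1 : ∀ d ∈ s.prodPrimes.divisors,
      (if l ∣ d then s.nu d * selbergWeight s y d else 0) =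
      ∑ m ∈ s.prodPrimes.divisors with m ≤ y,
        if l ∣ d ∧ d ∣ m then (selbergSum s y)⁻¹ * s.selbergTerms m * μ d else 0 := by
    intro d hd
    have hd' := Nat.dvd_of_mem_divisors hd
    have hν := (BoundingSieve.nu_pos_of_dvd_prodPrimes hd').ne'
    by_cases h : l ∣ d
    · simp only [h, if_true, true_and]
      rw [selbergWeight, if_pos hd', ← filter_filter, sum_filter, mul_sum, mul_sum]
      refine sum_congr rfl fun m _ => ?_
      split_ifs
      · field_simp
      · simp
    · simp [h]
  rw [sum_congr rfl e1, sum_comm]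
  have e2 : ∀ m ∈ {m ∈ s.prodPrimes.divisors | m ≤ y},
      (∑ d ∈ s.prodPrimes.divisors,
        if l ∣ d ∧ d ∣ m then (selbergSum s y)⁻¹ * s.selbergTerms m * μ d else 0) =
      if m = l then (selbergSum s y)⁻¹ * s.selbergTerms m * μ l else 0 := by
    intro m hm
    simp only [mem_filter, Nat.mem_divisors] at hm
    rw [← sum_filter]
    have e : {d ∈ s.prodPrimes.divisors | l ∣ d ∧ d ∣ m} = {d ∈ m.divisors | l ∣ d} := by
      ext d
      simp only [mem_filter, Nat.mem_divisors]
      have hm0 : m ≠ 0 := by rintro rfl; exact hm.1.2 (by simpa using hm.1.1)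
      constructor
      · rintro ⟨_, h1, h2⟩; exact ⟨⟨h2, hm0⟩, h1⟩
      · rintro ⟨⟨h2, _⟩, h1⟩; exact ⟨⟨h2.trans hm.1.1, hm.1.2⟩, h1, h2⟩
    rw [e, ← mul_sum]
    by_cases hlm : l ∣ m
    · rw [sum_moebius_interval (BoundingSieve.squarefree_of_dvd_prodPrimes hm.1.1) hlm]
      by_cases h : l = m
      · simp [h]
      · rw [if_neg h, if_neg (Ne.symm h), mul_zero]
    · rw [if_neg (by rintro rfl; exact hlm dvd_rfl), filter_eq_empty_iff.mpr, sum_empty, mul_zero]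
      intro d hd hld
      exact hlm (hld.trans (Nat.dvd_of_mem_divisors hd))
  rw [sum_congr rfl e2, sum_ite_eq']
  have hP := BoundingSieve.prodPrimes_ne_zero (s := s)
  simp only [mem_filter, Nat.mem_divisors, hl, ne_eq, hP, not_false_eq_true, true_and]
  split_ifs
  · ring
  · rfl

lemma mainSum_selberg (hy : 1 ≤ y) :
    s.mainSum (BoundingSieve.lambdaSquared (selbergWeight s y)) = (selbergSum s y)⁻¹ := by
  have hS := selbergSum_pos (s := s) hy
  rw [BoundingSieve.mainSum_lambdaSquared_eq_sum_mul_sum_sq]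
  have e : ∀ l ∈ s.prodPrimes.divisors, (s.selbergTerms l)⁻¹ *
      (∑ d ∈ s.prodPrimes.divisors, if l ∣ d then s.nu d * selbergWeight s y d else 0) ^ 2 =
      if l ≤ y then ((selbergSum s y)⁻¹) ^ 2 * s.selbergTerms l else 0 := by
    intro l hl
    have hl' := Nat.dvd_of_mem_divisors hl
    have hp := (BoundingSieve.selbergTerms_pos hl').ne'
    rw [sum_nu_selbergWeight hl']
    split_ifs
    · have hμ : (μ l : ℝ) ^ 2 = 1 := by
        have := ArithmeticFunction.moebius_sq_eq_one_of_squarefree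
          (BoundingSieve.squarefree_of_dvd_prodPrimes hl')
        exact_mod_cast this
      rw [mul_pow, mul_pow, hμ]; field_simp
    · simp
  rw [sum_congr rfl e, ← sum_filter, ← mul_sum, ← selbergSum]
  field_simp

lemma errSum_lambdaSquared_le (w : ℕ → ℝ) {R : ℝ}
    (hR : ∀ d, d ∣ s.prodPrimes → |s.rem d| ≤ R) :
    s.errSum (BoundingSieve.lambdaSquared w) ≤
      R * (∑ d ∈ s.prodPrimes.divisors, |w d|) ^ 2 := by
  have hR0 : 0 ≤ R := (abs_nonneg _).trans (hR 1 (one_dvd _))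
  have hP := BoundingSieve.prodPrimes_ne_zero (s := s)
  calc s.errSum (BoundingSieve.lambdaSquared w)
      ≤ ∑ d ∈ s.prodPrimes.divisors, (∑ d1 ∈ s.prodPrimes.divisors,
          ∑ d2 ∈ s.prodPrimes.divisors, if d = Nat.lcm d1 d2 then |w d1| * |w d2| else 0) * R := by
        refine sum_le_sum fun d hd => ?_
        have hd' := Nat.dvd_of_mem_divisors hd
        have hsub := Nat.divisors_subset_of_dvd hP hd'
        refine mul_le_mul ?_ (hR d hd') (abs_nonneg _) (sum_nonneg fun _ _ => sum_nonneg fun _ _ => by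
          split_ifs <;> positivity)
        rw [BoundingSieve.lambdaSquared]
        refine (abs_sum_le_sum_abs _ _).trans ?_
        refine (sum_le_sum fun d1 _ => abs_sum_le_sum_abs _ _).trans ?_
        refine (sum_le_sum fun d1 _ => sum_le_sum_of_subset_of_nonneg hsub
          fun _ _ _ => abs_nonneg _).trans ?_
        refine (sum_le_sum_of_subset_of_nonneg hsub
          fun _ _ _ => sum_nonneg fun _ _ => abs_nonneg _).trans ?_
        refine sum_le_sum fun d1 _ => sum_le_sum fun d2 _ => ?_
        split_ifs
        · rw [abs_mul]
        · simp
    _ = R * (∑ d ∈ s.prodPrimes.divisors, |w d|) ^ 2 := by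
        rw [← sum_mul, sum_comm, mul_comm, sq, sum_mul_sum]
        congr 1
        refine sum_congr rfl fun d1 h1 => ?_
        rw [sum_comm]
        refine sum_congr rfl fun d2 h2 => ?_
        rw [sum_ite_eq', if_pos]
        rw [Nat.mem_divisors]
        exact ⟨Nat.lcm_dvd (Nat.dvd_of_mem_divisors h1) (Nat.dvd_of_mem_divisors h2), hP⟩

/-- Selberg's sieve with a crude error term, sufficient when the remainders save a power. -/
lemma siftedSum_le (hy : 1 ≤ y) {R : ℝ} (hR : ∀ d, d ∣ s.prodPrimes → |s.rem d| ≤ R)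
    (hν : ∀ d, d ∣ s.prodPrimes → (s.nu d)⁻¹ ≤ (d : ℝ) ^ 2) :
    s.siftedSum ≤ s.totalMass * (selbergSum s y)⁻¹ + R * (y : ℝ) ^ 6 := by
  have hR0 : 0 ≤ R := (abs_nonneg _).trans (hR 1 (one_dvd _))
  have h1 := BoundingSieve.siftedSum_le_mainSum_errSum_of_upperMoebius (s := s)
    _ (BoundingSieve.upperMoebius_lambdaSquared _ (selbergWeight_one (s := s) hy))
  rw [mainSum_selberg hy] at h1
  have h2 := errSum_lambdaSquared_le (selbergWeight s y) hR
  have h3 : ∑ d ∈ s.prodPrimes.divisors, |selbergWeight s y d| ≤ (y : ℝ) ^ 3 := by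
    calc ∑ d ∈ s.prodPrimes.divisors, |selbergWeight s y d|
        ≤ ∑ d ∈ s.prodPrimes.divisors, if d ≤ y then (y : ℝ) ^ 2 else 0 := by
          refine sum_le_sum fun d hd => ?_
          have hd' := Nat.dvd_of_mem_divisors hd
          split_ifs with h
          · refine ((abs_selbergWeight_le hy hd').trans (hν d hd')).trans ?_
            gcongr
          · rw [selbergWeight_eq_zero (by omega), abs_zero]
      _ = ∑ d ∈ s.prodPrimes.divisors with d ≤ y, (y : ℝ) ^ 2 := by rw [sum_filter]
      _ ≤ ∑ d ∈ Icc 1 y, (y : ℝ) ^ 2 := by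
          refine sum_le_sum_of_subset_of_nonneg (fun d hd => ?_) fun _ _ _ => by positivity
          simp only [mem_filter, mem_Icc] at hd ⊢
          exact ⟨Nat.pos_of_mem_divisors hd.1, hd.2⟩
      _ = (y : ℝ) ^ 3 := by simp; ring
  have h4 : R * (∑ d ∈ s.prodPrimes.divisors, |selbergWeight s y d|) ^ 2 ≤ R * (y : ℝ) ^ 6 := by
    calc _ ≤ R * ((y : ℝ) ^ 3) ^ 2 := by
          gcongr
      _ = _ := by ring
  linarith

end Gallagher

namespace Gallagher
open Finset

/-! ### The function `r` in an arithmetic progression -/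

/-- The weight of a divisor `d` of `n` in the hyperbola method: complementary divisors have weights of
total `2`, all carried by the one below `√n`. -/
def hyp (d n : ℕ) : ℝ := if d ^ 2 < n then 2 else if d ^ 2 = n then 1 else 0

lemma hyp_add {d n : ℕ} (hn : n ≠ 0) (hd : d ∣ n) : hyp d n + hyp (n / d) n = 2 := by
  obtain ⟨k, rfl⟩ := hd
  have hd0 : 0 < d := Nat.pos_of_ne_zero (by rintro rfl; simp at hn)
  have hk0 : 0 < k := Nat.pos_of_ne_zero (by rintro rfl; simp at hn)
  rw [Nat.mul_div_cancel_left k hd0]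
  unfold hyp
  have e1 : d ^ 2 < d * k ↔ d < k := by rw [sq]; exact Nat.mul_lt_mul_left hd0
  have e2 : d ^ 2 = d * k ↔ d = k := by rw [sq]; exact Nat.mul_right_inj hd0.ne'
  have e3 : k ^ 2 < d * k ↔ k < d := by rw [sq]; exact Nat.mul_lt_mul_right hk0
  have e4 : k ^ 2 = d * k ↔ k = d := by rw [sq]; exact Nat.mul_left_inj hk0.ne'
  simp only [e1, e2, e3, e4]
  rcases lt_trichotomy d k with h | h | h
  · rw [if_pos h, if_neg (by omega), if_neg (by omega)]; norm_num
  · subst h; norm_num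
  · rw [if_neg (by omega), if_neg (by omega), if_pos h]; norm_num

/-- Dirichlet's hyperbola trick: if `χ(n) = 1` the divisors `d` and `n/d` contribute equally. -/
lemma RealChar.r_eq_hyp {q : ℕ} {c : ℕ → ℝ} (h : RealChar q c) {n : ℕ} (hn : n ≠ 0)
    (hc : c n = 1) : h.r n = ∑ d ∈ n.divisors, c d * hyp d n := by
  have h1 : ∑ d ∈ n.divisors, c d * hyp (n / d) n = ∑ d ∈ n.divisors, c d * hyp d n := by
    rw [← Nat.sum_div_divisors n (fun d => c d * hyp d n)]
    refine sum_congr rfl fun d hd => ?_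
    have hd' := Nat.dvd_of_mem_divisors hd
    have : c (n / d) = c d := by
      have e : c (n / d) * c d = 1 := by rw [← h.mul, Nat.div_mul_cancel hd', hc]
      rcases h.values (n / d) with h1 | h1 | h1 <;> rcases h.values d with h2 | h2 | h2 <;>
        rw [h1, h2] at e <;> rw [h1, h2] <;> norm_num at e
    rw [this]
  have h2 : ∑ d ∈ n.divisors, c d * hyp d n + ∑ d ∈ n.divisors, c d * hyp (n / d) n =
      2 * h.r n := by
    rw [← sum_add_distrib, h.r_apply, mul_sum]
    refine sum_congr rfl fun d hd => ?_
    rw [← mul_add, hyp_add hn (Nat.dvd_of_mem_divisors hd), mul_comm]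
  linarith

lemma card_ap {a X m : ℕ} (hm : 0 < m) (v : ℕ) (haX : a ≤ X) :
    |(#{n ∈ Ioc a X | n ≡ v [MOD m]} : ℝ) - ((X : ℝ) - a) / m| ≤ 1 := by
  have h := Nat.Ioc_filter_modEq_card a X hm v
  have hm' : (0 : ℝ) < m := by exact_mod_cast hm
  have hQ : (0 : ℚ) < m := by exact_mod_cast hm
  have hle : ⌊((a : ℚ) - v) / m⌋ ≤ ⌊((X : ℚ) - v) / m⌋ := by
    apply Int.floor_le_floor
    gcongr
  rw [max_eq_left (by linarith)] at h
  have h' : (#{n ∈ Ioc a X | n ≡ v [MOD m]} : ℚ) =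
      ⌊((X : ℚ) - v) / m⌋ - ⌊((a : ℚ) - v) / m⌋ := by exact_mod_cast h
  have g1 := Int.floor_le (((X : ℚ) - v) / m)
  have g2 := Int.lt_floor_add_one (((X : ℚ) - v) / m)
  have g3 := Int.floor_le (((a : ℚ) - v) / m)
  have g4 := Int.lt_floor_add_one (((a : ℚ) - v) / m)
  have e : ((X : ℚ) - v) / m - ((a : ℚ) - v) / m = ((X : ℚ) - a) / m := by ring
  have : |(#{n ∈ Ioc a X | n ≡ v [MOD m]} : ℚ) - ((X : ℚ) - a) / m| ≤ 1 := by
    rw [h', abs_le]; constructor <;> linarith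
  have h5 : ((|(#{n ∈ Ioc a X | n ≡ v [MOD m]} : ℚ) - ((X : ℚ) - a) / m| : ℚ) : ℝ) ≤ ((1 : ℚ) : ℝ) :=
    Rat.cast_le.mpr this
  push_cast at h5
  exact h5

/-- Multiples of `m` in a progression modulo `q`, by the Chinese remainder theorem. -/
lemma card_ap_dvd {q m b a X : ℕ} (hq : 0 < q) (hm : 0 < m) (hqm : q.Coprime m) (haX : a ≤ X) :
    |(#{n ∈ Ioc a X | n % q = b % q ∧ m ∣ n} : ℝ) - ((X : ℝ) - a) / (q * m)| ≤ 1 := by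
  obtain ⟨v, hv1, hv2⟩ := Nat.chineseRemainder hqm b 0
  have e : {n ∈ Ioc a X | n % q = b % q ∧ m ∣ n} = {n ∈ Ioc a X | n ≡ v [MOD (q * m)]} := by
    refine filter_congr fun n _ => ?_
    rw [← Nat.modEq_and_modEq_iff_modEq_mul hqm]
    constructor
    · rintro ⟨h1, h2⟩
      exact ⟨Nat.ModEq.trans h1 hv1.symm, ((Nat.modEq_zero_iff_dvd.mpr h2).trans hv2.symm)⟩
    · rintro ⟨h1, h2⟩
      exact ⟨h1.trans hv1, Nat.modEq_zero_iff_dvd.mp (h2.trans hv2)⟩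
  rw [e]
  have := card_ap (a := a) (X := X) (Nat.mul_pos hq hm) v haX
  push_cast at this
  exact this

lemma sum_hyp {q m b d X : ℕ} (hq : 0 < q) (hm : 0 < m) (hqm : q.Coprime m) (hd : d ^ 2 ≤ X)
    (hd0 : 0 < d) :
    |(∑ n ∈ Ioc 0 X with n % q = b % q ∧ m ∣ n, hyp d n) -
      2 * (((X : ℝ) - (d : ℝ) ^ 2) / (q * m))| ≤ 3 := by
  have h1 := card_ap_dvd (b := b) hq hm hqm hd
  push_cast at h1
  have e : ∑ n ∈ Ioc 0 X with n % q = b % q ∧ m ∣ n, hyp d n =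
      2 * (#{n ∈ Ioc (d ^ 2) X | n % q = b % q ∧ m ∣ n} : ℝ) +
      if (d ^ 2 % q = b % q ∧ m ∣ d ^ 2) then 1 else 0 := by
    rw [sum_filter]
    have : ∀ n ∈ Ioc 0 X, (if n % q = b % q ∧ m ∣ n then hyp d n else 0) =
        (if d ^ 2 < n ∧ (n % q = b % q ∧ m ∣ n) then 2 else 0) +
        (if n = d ^ 2 then (if (d ^ 2 % q = b % q ∧ m ∣ d ^ 2) then 1 else 0) else 0) := by
      intro n _
      unfold hyp
      rcases lt_trichotomy (d ^ 2) n with h | h | h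
      · simp [h, h.ne']
      · subst h; simp
      · simp [h.ne, h.ne', not_lt.mpr h.le]
    rw [sum_congr rfl this, sum_add_distrib, sum_ite_eq', if_pos (mem_Ioc.mpr ⟨by positivity, hd⟩),
      ← sum_filter, sum_const, nsmul_eq_mul, mul_comm]
    congr 4
    ext n
    simp only [mem_filter, mem_Ioc]
    constructor
    · rintro ⟨⟨_, h⟩, h1, h2⟩; exact ⟨⟨h1, h⟩, h2⟩
    · rintro ⟨⟨h1, h⟩, h2⟩; exact ⟨⟨by omega, h⟩, h1, h2⟩
  rw [e]
  obtain ⟨h2, h3⟩ := abs_le.mp h1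
  rw [abs_le]
  split_ifs <;> constructor <;> linarith

variable {q : ℕ} {c : ℕ → ℝ}

/-- The mass of the multiples of `e` in the progression `b mod q`, weighted by `r`, rearranged as a
sum over small divisors. -/
lemma RealChar.sum_r_eq (h : RealChar q c) {b : ℕ} (hb : ∀ n, n % q = b % q → c n = 1)
    (X e : ℕ) :
    (∑ n ∈ Ioc 0 X with n % q = b % q, if e ∣ n then h.r n else 0) =
      ∑ d ∈ Ioc 0 X.sqrt, c d *
        ∑ n ∈ Ioc 0 X with n % q = b % q ∧ d.lcm e ∣ n, hyp d n := by
  have e1 : ∀ n ∈ {n ∈ Ioc 0 X | n % q = b % q}, (if e ∣ n then h.r n else 0) =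
      ∑ d ∈ Ioc 0 X.sqrt, if d.lcm e ∣ n then c d * hyp d n else 0 := by
    intro n hn
    simp only [mem_filter, mem_Ioc] at hn
    by_cases he : e ∣ n
    · rw [if_pos he, h.r_eq_hyp (by omega) (hb n hn.2)]
      have : ∀ d, d.lcm e ∣ n ↔ d ∣ n := fun d => by simp [Nat.lcm_dvd_iff, he]
      simp only [this]
      rw [← sum_filter]
      symm
      refine sum_subset_zero_on_sdiff (fun d hd => ?_) (fun d hd => ?_) fun _ _ => rfl
      · simp only [mem_filter, Nat.mem_divisors] at hd ⊢; exact ⟨hd.2, by omega⟩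
      · simp only [mem_sdiff, mem_filter, Nat.mem_divisors, mem_Ioc, not_and] at hd
        have hd0 : 0 < d := Nat.pos_of_dvd_of_pos hd.1.1 hn.1.1
        have hU : X.sqrt < d := by
          by_contra hcon
          exact hd.2 ⟨hd0, by omega⟩ hd.1.1
        have : X < d ^ 2 := by rw [sq]; exact Nat.sqrt_lt.mp hU
        unfold hyp
        rw [if_neg (by omega), if_neg (by omega), mul_zero]
    · rw [if_neg he]
      symm
      refine sum_eq_zero fun d _ => ?_
      rw [if_neg fun hh => he ((Nat.dvd_lcm_right d e).trans hh)]
  rw [sum_congr rfl e1, sum_comm]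
  refine sum_congr rfl fun d _ => ?_
  rw [← sum_filter, filter_filter, mul_sum]

lemma RealChar.sum_r_approx (h : RealChar q c) {b : ℕ} (hb : ∀ n, n % q = b % q → c n = 1)
    (X : ℕ) {e : ℕ} (he : 0 < e) (heq : e.Coprime q) :
    |(∑ n ∈ Ioc 0 X with n % q = b % q, if e ∣ n then h.r n else 0) -
      2 / q * ∑ d ∈ Ioc 0 X.sqrt, c d * (((X : ℝ) - (d : ℝ) ^ 2) / (d.lcm e : ℕ))| ≤
      3 * X.sqrt := by
  rw [h.sum_r_eq hb, mul_sum, ← sum_sub_distrib]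
  have hq0 : 0 < q := by have := h.two_le; omega
  calc _ ≤ ∑ d ∈ Ioc 0 X.sqrt, (3 : ℝ) := by
        refine (abs_sum_le_sum_abs _ _).trans (sum_le_sum fun d hd => ?_)
        simp only [mem_Ioc] at hd
        by_cases hcd : c d = 0
        · simp [hcd]
        have hdq : d.Coprime q := by
          by_contra hcon; exact hcd ((h.zero_iff d).mpr hcon)
        have hX : d ^ 2 ≤ X := by rw [sq]; exact Nat.le_sqrt.mp hd.2
        have hl : q.Coprime (d.lcm e) :=
          (Nat.Coprime.coprime_dvd_left (Nat.lcm_dvd_mul d e) (hdq.mul_left heq)).symm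
        have := sum_hyp (b := b) hq0 (Nat.lcm_pos hd.1 he) hl hX hd.1
        have e1 : c d * (∑ n ∈ Ioc 0 X with n % q = b % q ∧ d.lcm e ∣ n, hyp d n) -
            2 / q * (c d * (((X : ℝ) - (d : ℝ) ^ 2) / (d.lcm e : ℕ))) =
            c d * ((∑ n ∈ Ioc 0 X with n % q = b % q ∧ d.lcm e ∣ n, hyp d n) -
            2 * (((X : ℝ) - (d : ℝ) ^ 2) / (q * (d.lcm e : ℕ)))) := by
          have : (q : ℝ) ≠ 0 := by exact_mod_cast hq0.ne'
          have : ((d.lcm e : ℕ) : ℝ) ≠ 0 := by exact_mod_cast (Nat.lcm_pos hd.1 he).ne'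
          field_simp
        rw [e1, abs_mul]
        calc _ ≤ 1 * (3 : ℝ) := by gcongr; exact h.abs_le_one d
          _ = 3 := one_mul _
    _ = _ := by simp; ring

lemma inv_lcm_eq {d e : ℕ} (hd : 0 < d) (he : 0 < e) :
    ((d.lcm e : ℕ) : ℝ)⁻¹ =
      (1 / (d * e : ℝ)) * ∑ f ∈ e.divisors, if f ∣ d then (f.totient : ℝ) else 0 := by
  rw [← sum_filter]
  have e1 : {f ∈ e.divisors | f ∣ d} = (d.gcd e).divisors := by
    ext f
    simp only [mem_filter, Nat.mem_divisors, Nat.dvd_gcd_iff]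
    have := (Nat.gcd_pos_of_pos_left e hd).ne'
    have := he.ne'
    tauto
  rw [e1, ← Nat.cast_sum, Nat.sum_totient]
  have h := Nat.gcd_mul_lcm d e
  have h' : (d.gcd e : ℝ) * (d.lcm e : ℕ) = d * e := by exact_mod_cast h
  have : ((d.lcm e : ℕ) : ℝ) ≠ 0 := by exact_mod_cast (Nat.lcm_pos hd he).ne'
  have : (d : ℝ) ≠ 0 := by exact_mod_cast hd.ne'
  have : (e : ℝ) ≠ 0 := by exact_mod_cast he.ne'
  field_simp
  linarith

/-- The density of the multiples of `e` for the weight `r` in a progression `b mod q` with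
`χ(b) = 1`. -/
noncomputable def density (c : ℕ → ℝ) (e : ℕ) : ℝ :=
  (∑ f ∈ e.divisors, (f.totient : ℝ) * c f / f) / e

lemma RealChar.sum_linear (h : RealChar q c) (V : ℕ) :
    |∑ d ∈ Ioc 0 V, c d * d| ≤ 4 * q * V := by
  have hq0 : 0 < q := by have := h.two_le; omega
  have e : Ioc 0 V = Ico 1 (V + 1) := by ext; simp; omega
  have h1 := h.abel (fun d => (V : ℝ) - d) 0 (V + 1)
    (fun i j _ hij _ => sub_le_sub_left (Nat.cast_le.mpr hij) _)
    (fun i _ hi => sub_nonneg.mpr (Nat.cast_le.mpr (by omega))) (by omega)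
  have h1' : ∑ d ∈ Ico 0 (V + 1), c d * ((V : ℝ) - d) = ∑ d ∈ Ioc 0 V, c d * ((V : ℝ) - d) := by
    rw [sum_eq_sum_Ico_succ_bot (by omega), h.zero, e]; simp
  have h2 := h.bdd 1 (V + 1)
  rw [h1'] at h1
  have h3 : ∑ d ∈ Ioc 0 V, c d * d = V * ∑ d ∈ Ioc 0 V, c d -
      ∑ d ∈ Ioc 0 V, c d * ((V : ℝ) - d) := by
    rw [mul_sum, ← sum_sub_distrib]; exact sum_congr rfl fun _ _ => by ring
  rw [← e] at h2
  have h4 : |V * ∑ d ∈ Ioc 0 V, c d| ≤ V * (2 * q) := by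
    rw [abs_mul, abs_of_nonneg (by positivity)]; gcongr
  rw [h3]
  refine (abs_sub _ _).trans ?_
  simp at h1
  linarith

/-- For `f² d² ≤ X` the weights `X/d - f² d` decrease smoothly to about `0`, so that the truncation of the
`L(1, χ)` series costs only `O(√X)`. -/
lemma RealChar.sum_inner (h : RealChar q c) {L1 : ℝ} (hL1 : IsLValue q c 1 L1) {X f : ℕ}
    (hf : 0 < f) :
    |∑ d ∈ Ioc 0 (X.sqrt / f), c d * ((X : ℝ) / d - (f : ℝ) ^ 2 * d) - X * L1| ≤
      6 * q * f * (X.sqrt + 1) := by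
  set U := X.sqrt with hU
  set V := U / f with hV
  have e : Ioc 0 V = Ico 1 (V + 1) := by ext; simp; omega
  have h1 := hL1 (V + 1) (Nat.le_add_left 1 V)
  rw [← e] at h1
  have h2 := h.sum_linear V
  have e1 : ∑ d ∈ Ioc 0 V, c d * ((X : ℝ) / d - (f : ℝ) ^ 2 * d) - X * L1 =
      X * (∑ d ∈ Ioc 0 V, c d * (d : ℝ) ^ (-(1 : ℝ)) - L1) -
        (f : ℝ) ^ 2 * ∑ d ∈ Ioc 0 V, c d * d := by
    rw [mul_sub, mul_sum, mul_sum, sub_right_comm, ← sum_sub_distrib]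
    congr 1
    refine sum_congr rfl fun d _ => ?_
    rw [Real.rpow_neg_one]; ring
  rw [e1]
  refine (abs_sub _ _).trans ?_
  rw [abs_mul, abs_mul, abs_of_nonneg (by positivity : (0 : ℝ) ≤ X),
    abs_of_nonneg (by positivity : (0 : ℝ) ≤ (f : ℝ) ^ 2)]
  have hf' : (0 : ℝ) < f := by exact_mod_cast hf
  have k1 : (X : ℝ) * (2 * q * ((V + 1 : ℕ) : ℝ) ^ (-(1 : ℝ))) ≤ 2 * q * f * (U + 1) := by
    rw [Real.rpow_neg_one]
    have a1 : (U : ℝ) + 1 ≤ f * (V + 1) := by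
      have := Nat.lt_mul_div_succ U hf
      exact_mod_cast this
    have a2 : (X : ℝ) ≤ (U + 1) * (U + 1) := by
      have := (Nat.lt_succ_sqrt X).le
      exact_mod_cast this
    have a3 : (X : ℝ) * ((V + 1 : ℕ) : ℝ)⁻¹ ≤ f * (U + 1) := by
      rw [← div_eq_mul_inv, div_le_iff₀ (by positivity)]
      push_cast
      nlinarith [mul_le_mul_of_nonneg_right a1 (by positivity : (0 : ℝ) ≤ U + 1)]
    nlinarith [mul_le_mul_of_nonneg_left a3 (by positivity : (0 : ℝ) ≤ 2 * q)]
  have k2 : (f : ℝ) ^ 2 * (4 * q * V) ≤ 4 * q * f * U := by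
    have : (f : ℝ) * V ≤ U := by exact_mod_cast Nat.mul_div_le U f
    nlinarith [mul_le_mul_of_nonneg_left this (by positivity : (0 : ℝ) ≤ 4 * q * f)]
  have k3 := mul_le_mul_of_nonneg_left h1 (by positivity : (0 : ℝ) ≤ X)
  have k4 := mul_le_mul_of_nonneg_left h2 (by positivity : (0 : ℝ) ≤ (f : ℝ) ^ 2)
  have k5 : (0 : ℝ) ≤ q * f := by positivity
  linarith

/-- Reorganising the main term along `gcd(d, e) = ∑_{f ∣ d, f ∣ e} φ(f)`. -/
lemma RealChar.sum_lcm (h : RealChar q c) {L1 : ℝ} (hL1 : IsLValue q c 1 L1) (X : ℕ) {e : ℕ}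
    (he : 0 < e) :
    |∑ d ∈ Ioc 0 X.sqrt, c d * (((X : ℝ) - (d : ℝ) ^ 2) / (d.lcm e : ℕ)) -
      density c e * (X * L1)| ≤ 6 * q * (X.sqrt + 1) := by
  have he' : (0 : ℝ) < e := by exact_mod_cast he
  have e1 : ∑ d ∈ Ioc 0 X.sqrt, c d * (((X : ℝ) - (d : ℝ) ^ 2) / (d.lcm e : ℕ)) =
      (1 / e) * ∑ f ∈ e.divisors, (f.totient : ℝ) * c f / f *
        ∑ d ∈ Ioc 0 (X.sqrt / f), c d * ((X : ℝ) / d - (f : ℝ) ^ 2 * d) := by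
    calc _ = ∑ d ∈ Ioc 0 X.sqrt, ∑ f ∈ e.divisors, if f ∣ d then
            (1 / e) * ((f.totient : ℝ) * (c d * ((X : ℝ) - (d : ℝ) ^ 2) / d)) else 0 := by
          refine sum_congr rfl fun d hd => ?_
          simp only [mem_Ioc] at hd
          rw [div_eq_mul_inv, inv_lcm_eq hd.1 he, mul_sum, mul_sum, mul_sum]
          refine sum_congr rfl fun f _ => ?_
          have : (d : ℝ) ≠ 0 := by exact_mod_cast hd.1.ne'
          split_ifs
          · field_simp
          · simp
      _ = _ := by
          rw [sum_comm, mul_sum]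
          refine sum_congr rfl fun f hf => ?_
          have hf0 : 0 < f := Nat.pos_of_mem_divisors hf
          have hf0' : (f : ℝ) ≠ 0 := by exact_mod_cast hf0.ne'
          rw [← sum_filter]
          have e2 : {d ∈ Ioc 0 X.sqrt | f ∣ d} = (Ioc 0 (X.sqrt / f)).image (f * ·) := by
            ext d
            simp only [mem_filter, mem_Ioc, mem_image]
            constructor
            · rintro ⟨⟨h1, h2⟩, k, rfl⟩
              exact ⟨k, ⟨Nat.pos_of_mul_pos_left h1,
                (Nat.le_div_iff_mul_le hf0).mpr (by rwa [mul_comm])⟩, rfl⟩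
            · rintro ⟨k, ⟨h1, h2⟩, rfl⟩
              exact ⟨⟨Nat.mul_pos hf0 h1, by
                rw [mul_comm]; exact (Nat.le_div_iff_mul_le hf0).mp h2⟩, dvd_mul_right _ _⟩
          rw [e2, sum_image (fun a _ b _ hab => Nat.eq_of_mul_eq_mul_left hf0 hab), mul_sum,
            mul_sum]
          refine sum_congr rfl fun d hd => ?_
          simp only [mem_Ioc] at hd
          have : (d : ℝ) ≠ 0 := by exact_mod_cast hd.1.ne'
          rw [h.mul]; push_cast; field_simp
  have e3 : density c e * (X * L1) =
      (1 / e) * ∑ f ∈ e.divisors, (f.totient : ℝ) * c f / f * (X * L1) := by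
    rw [density, ← sum_mul]; ring
  rw [e1, e3, ← mul_sub, ← sum_sub_distrib, abs_mul, abs_of_nonneg (by positivity)]
  calc _ ≤ (1 / (e : ℝ)) * ∑ f ∈ e.divisors, (f.totient : ℝ) * (6 * q * (X.sqrt + 1)) := by
        gcongr
        refine (abs_sum_le_sum_abs _ _).trans (sum_le_sum fun f hf => ?_)
        have hf0 : 0 < f := Nat.pos_of_mem_divisors hf
        have hf0' : (0 : ℝ) < f := by exact_mod_cast hf0
        rw [← mul_sub, abs_mul]
        calc _ ≤ ((f.totient : ℝ) / f) * (6 * q * f * (X.sqrt + 1)) := by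
              refine mul_le_mul ?_ (h.sum_inner hL1 hf0) (abs_nonneg _) (by positivity)
              rw [abs_div, abs_mul, abs_of_nonneg (by positivity : (0 : ℝ) ≤ f.totient),
                abs_of_pos hf0']
              gcongr
              exact mul_le_of_le_one_right (by positivity) (h.abs_le_one f)
          _ = _ := by field_simp
    _ = 6 * q * (X.sqrt + 1) := by
        rw [← sum_mul, ← Nat.cast_sum, Nat.sum_totient]; field_simp

/-- Distribution of `r` in the progression `b mod q` among multiples of `e`: main term
`density(e) · 2 X L(1, χ) / q`, with an error `O(√X)` uniform in `q` and `e`. -/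
lemma RealChar.level (h : RealChar q c) {L1 : ℝ} (hL1 : IsLValue q c 1 L1) {b : ℕ}
    (hb : ∀ n, n % q = b % q → c n = 1) (X : ℕ) {e : ℕ} (he : 0 < e) (heq : e.Coprime q) :
    |(∑ n ∈ Ioc 0 X with n % q = b % q, if e ∣ n then h.r n else 0) -
      density c e * (2 * X * L1 / q)| ≤ 15 * (X.sqrt + 1) := by
  have hq0 : (0 : ℝ) < q := by have := h.two_le; positivity
  have h1 := h.sum_r_approx hb X he heq
  have h2 := h.sum_lcm hL1 X he
  set M := ∑ d ∈ Ioc 0 X.sqrt, c d * (((X : ℝ) - (d : ℝ) ^ 2) / (d.lcm e : ℕ))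
  have h3 : |2 / q * M - density c e * (2 * X * L1 / q)| ≤ 12 * (X.sqrt + 1) := by
    have : 2 / q * M - density c e * (2 * X * L1 / q) =
        2 / q * (M - density c e * (X * L1)) := by ring
    rw [this, abs_mul, abs_of_pos (by positivity)]
    calc _ ≤ 2 / (q : ℝ) * (6 * q * (X.sqrt + 1)) := by gcongr
      _ = _ := by field_simp; ring
  have := abs_sub_le (∑ n ∈ Ioc 0 X with n % q = b % q, if e ∣ n then h.r n else 0)
    (2 / q * M) (density c e * (2 * X * L1 / q))
  linarith

end Gallagher

namespace Gallagher
open Finset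

variable {q : ℕ} {c : ℕ → ℝ}

/-! ### The density function -/

namespace RealChar

/-- `f ↦ φ(f)χ(f)/f`. -/
noncomputable def phiTerm (_ : RealChar q c) : ArithmeticFunction ℝ :=
  ⟨fun f => (f.totient : ℝ) * c f / f, by simp⟩

lemma phiTerm_mult (h : RealChar q c) : h.phiTerm.IsMultiplicative := by
  refine ArithmeticFunction.IsMultiplicative.iff_ne_zero.mpr ⟨?_, fun {m n} _ _ hmn => ?_⟩
  · simp [phiTerm, h.one]
  · simp only [phiTerm, ArithmeticFunction.coe_mk]
    rw [Nat.totient_mul hmn, h.mul]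
    push_cast
    rw [div_mul_div_comm]; ring

/-- `density` as an arithmetic function. -/
noncomputable def nu (_ : RealChar q c) : ArithmeticFunction ℝ :=
  ⟨density c, by simp [density]⟩

lemma nu_apply (h : RealChar q c) (e : ℕ) : h.nu e = density c e := rfl

lemma nu_mult (h : RealChar q c) : h.nu.IsMultiplicative := by
  have h1 : ∀ e, h.nu e = (h.phiTerm * (ArithmeticFunction.zeta : ArithmeticFunction ℝ)) e / e := by
    intro e
    rw [ArithmeticFunction.coe_mul_zeta_apply]; rfl
  have h2 := h.phiTerm_mult.mul ArithmeticFunction.isMultiplicative_zeta.natCast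
  refine ArithmeticFunction.IsMultiplicative.iff_ne_zero.mpr ⟨?_, fun {m n} _ _ hmn => ?_⟩
  · rw [h1, h2.map_one]; simp
  · rw [h1, h1, h1, h2.map_mul_of_coprime hmn, div_mul_div_comm]; push_cast; rfl

/-- At a prime, `1 - ν(p)` is the inverse of the Euler factor of `ζ(s) L(s, χ)` at `s = 1`. -/
lemma nu_prime (h : RealChar q c) {p : ℕ} (hp : p.Prime) :
    1 - h.nu p = (1 - 1 / p) * (1 - c p * (1 / p)) := by
  have hp0 : (p : ℝ) ≠ 0 := by exact_mod_cast hp.ne_zero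
  rw [nu_apply, density, hp.divisors, sum_pair hp.ne_one.symm, Nat.totient_prime hp, h.one,
    Nat.cast_sub hp.one_lt.le]
  simp
  field_simp
  ring

lemma nu_prime_lower (h : RealChar q c) {p : ℕ} (hp : p.Prime) : 1 / (p : ℝ) ^ 2 ≤ h.nu p := by
  have h1 := h.nu_prime hp
  have hp1 : (1 : ℝ) < p := by exact_mod_cast hp.one_lt
  have h2 := (abs_le.mp (h.abs_le_one p)).1
  have e : h.nu p - 1 / (p : ℝ) ^ 2 = (1 + c p) * ((1 - 1 / p) * (1 / p)) := by
    have e1 : h.nu p = 1 - (1 - 1 / p) * (1 - c p * (1 / p)) := by linarith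
    rw [e1]; field_simp; ring
  have h3 : (1 : ℝ) / p ≤ 1 := by rw [div_le_one (by linarith)]; exact hp1.le
  have : 0 ≤ (1 + c p) * ((1 - 1 / (p : ℝ)) * (1 / p)) :=
    mul_nonneg (by linarith) (mul_nonneg (by linarith) (by positivity))
  linarith

lemma nu_prime_lt_one (h : RealChar q c) {p : ℕ} (hp : p.Prime) : h.nu p < 1 := by
  have h1 := h.nu_prime hp
  have hp1 : (1 : ℝ) < p := by exact_mod_cast hp.one_lt
  have h2 := (abs_le.mp (h.abs_le_one p)).2
  have h3 : (1 : ℝ) / p < 1 := by rw [div_lt_one (by linarith)]; exact hp1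
  have h4 : (0 : ℝ) < 1 / p := by positivity
  have : 0 < (1 - 1 / (p : ℝ)) * (1 - c p * (1 / p)) := by
    apply mul_pos (by linarith); nlinarith
  linarith

/-! ### Euler factors of `r(n)/n` -/

lemma r_prime_pow_succ (h : RealChar q c) {p : ℕ} (hp : p.Prime) (k : ℕ) :
    h.r (p ^ (k + 1)) = 1 + c p * h.r (p ^ k) := by
  rw [h.r_prime_pow hp, h.r_prime_pow hp, sum_range_succ', mul_sum, add_comm, pow_zero]
  congr 1
  exact sum_congr rfl fun _ _ => by ring

/-- Telescoping of the truncated Euler factor of `∑ r(n)/n`. -/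
lemma euler_identity (h : RealChar q c) {p : ℕ} (hp : p.Prime) (K : ℕ) :
    (∑ k ∈ range (K + 1), h.r (p ^ k) / (p ^ k : ℕ)) * (1 - h.nu p) =
      1 - (1 / (p : ℝ)) ^ (K + 1) * (h.r (p ^ (K + 1)) - c p * (1 / p) * h.r (p ^ K)) := by
  rw [h.nu_prime hp]
  have hp0 : (p : ℝ) ≠ 0 := by exact_mod_cast hp.ne_zero
  have e : ∀ k, h.r (p ^ k) / ((p ^ k : ℕ) : ℝ) = h.r (p ^ k) * (1 / (p : ℝ)) ^ k := by
    intro k; push_cast; rw [one_div, inv_pow]; rfl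
  simp only [e]
  set t := 1 / (p : ℝ)
  induction K with
  | zero =>
    rw [h.r_prime_pow_succ hp 0]; simp [h.r_one]; ring
  | succ K ih =>
    rw [sum_range_succ, add_mul, ih, h.r_prime_pow_succ hp (K + 1), h.r_prime_pow_succ hp K]
    ring

lemma euler_le (h : RealChar q c) {p : ℕ} (hp : p.Prime) (K : ℕ) :
    ∑ k ∈ range (K + 1), h.r (p ^ k) / (p ^ k : ℕ) ≤ (1 - h.nu p)⁻¹ := by
  have h1 := h.euler_identity hp K
  have h2 : 0 < 1 - h.nu p := by linarith [h.nu_prime_lt_one hp]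
  rw [← one_div, le_div_iff₀ h2, h1]
  have hp1 : (1 : ℝ) < p := by exact_mod_cast hp.one_lt
  have h3 : (1 : ℝ) / p < 1 := by rw [div_lt_one (by linarith)]; exact hp1
  have h4 : (0 : ℝ) < 1 / p := by positivity
  have h5 : h.r (p ^ (K + 1)) - c p * (1 / p) * h.r (p ^ K) =
      (1 - 1 / (p : ℝ)) * h.r (p ^ (K + 1)) + 1 / p := by
    rw [h.r_prime_pow_succ hp K]; ring
  have h6 : 0 ≤ h.r (p ^ (K + 1)) - c p * (1 / p) * h.r (p ^ K) := by
    rw [h5]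
    have := mul_nonneg (by linarith : 0 ≤ 1 - 1 / (p : ℝ)) (h.r_prime_pow_nonneg hp (K + 1))
    linarith
  have := mul_nonneg (pow_nonneg h4.le (K + 1)) h6
  linarith

lemma euler_le' (h : RealChar q c) {p : ℕ} (hp : p.Prime) (K : ℕ) :
    ∑ k ∈ Icc 1 K, h.r (p ^ k) / (p ^ k : ℕ) ≤ h.nu p * (1 - h.nu p)⁻¹ := by
  have h1 := h.euler_le hp K
  have h2 : 0 < 1 - h.nu p := by linarith [h.nu_prime_lt_one hp]
  rw [range_eq_Ico, sum_eq_sum_Ico_succ_bot (by omega)] at h1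
  have e : Ico (0 + 1) (K + 1) = Icc 1 K := by ext; simp
  rw [e] at h1
  simp only [pow_zero, h.r_one, Nat.cast_one, div_one] at h1
  have : h.nu p * (1 - h.nu p)⁻¹ = (1 - h.nu p)⁻¹ - 1 := by field_simp; ring
  linarith

end RealChar

/-- A sum of a nonnegative multiplicative function is at most a product of local sums. -/
lemma sum_le_euler_prod {F : ArithmeticFunction ℝ} (hF : F.IsMultiplicative)
    (hF0 : ∀ p k, p.Prime → 0 ≤ F (p ^ k)) (T : Finset ℕ) (hT : ∀ p ∈ T, p.Prime)
    (t : ℕ → Finset ℕ) (N : Finset ℕ) (hN : ∀ n ∈ N, n ≠ 0 ∧ n.primeFactors ⊆ T ∧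
      ∀ p ∈ T, n.factorization p ∈ t p) :
    ∑ n ∈ N, F n ≤ ∏ p ∈ T, ∑ k ∈ t p, F (p ^ k) := by
  rw [prod_sum]
  have e : ∀ n ∈ N, F n = ∏ x ∈ T.attach, F (x.1 ^ n.factorization x.1) := by
    intro n hn
    obtain ⟨h0, h1, _⟩ := hN n hn
    rw [hF.multiplicative_factorization F h0, prod_attach T (fun p => F (p ^ n.factorization p)),
      Finsupp.prod, Nat.support_factorization]
    refine prod_subset h1 fun p _ hp => ?_
    rw [← Nat.support_factorization, Finsupp.notMem_support_iff] at hp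
    rw [hp, pow_zero, hF.map_one]
  rw [sum_congr rfl e]
  let ψ : ℕ → ((a : ℕ) → a ∈ T → ℕ) := fun n a _ => n.factorization a
  have inj : Set.InjOn ψ N := by
    intro m hm n hn hmn
    obtain ⟨hm0, hm1, _⟩ := hN m hm
    obtain ⟨hn0, hn1, _⟩ := hN n hn
    refine Nat.eq_of_factorization_eq hm0 hn0 fun p => ?_
    by_cases hp : p ∈ T
    · exact congrFun (congrFun hmn p) hp
    · have z : ∀ k : ℕ, k.primeFactors ⊆ T → k.factorization p = 0 := fun k hk => by
        rw [← Finsupp.notMem_support_iff, Nat.support_factorization]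
        exact fun h => hp (hk h)
      rw [z m hm1, z n hn1]
  have := sum_image (f := fun g : ((a : ℕ) → a ∈ T → ℕ) =>
    ∏ x ∈ T.attach, F (x.1 ^ g x.1 x.2)) inj
  rw [show (∑ n ∈ N, ∏ x ∈ T.attach, F (x.1 ^ n.factorization x.1)) = _ from this.symm]
  refine sum_le_sum_of_subset_of_nonneg ?_ fun g _ _ =>
    prod_nonneg fun x _ => hF0 _ _ (hT _ x.2)
  intro g hg
  obtain ⟨n, hn, rfl⟩ := mem_image.mp hg
  rw [mem_pi]
  exact fun p hp => (hN n hn).2.2 p hp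

/-! ### The sieve problem -/

/-- The primes up to `y` not dividing `q`. -/
def siftPrimes (q y : ℕ) : Finset ℕ := {p ∈ Icc 1 y | p.Prime ∧ ¬ p ∣ q}

lemma siftPrimes_prime {q y p : ℕ} (hp : p ∈ siftPrimes q y) : p.Prime := by
  simp only [siftPrimes, mem_filter] at hp; exact hp.2.1

lemma prime_dvd_prod_siftPrimes {q y p : ℕ} (hp : p.Prime) :
    p ∣ ∏ p ∈ siftPrimes q y, p ↔ p ∈ siftPrimes q y := by
  constructor
  · intro h
    obtain ⟨r, hr, hpr⟩ := (hp.prime.dvd_finsetProd_iff _).mp h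
    rwa [(Nat.prime_dvd_prime_iff_eq hp (siftPrimes_prime hr)).mp hpr]
  · exact fun h => dvd_prod_of_mem _ h

lemma squarefree_prod_primes {T : Finset ℕ} (hT : ∀ p ∈ T, p.Prime) :
    Squarefree (∏ p ∈ T, p) := by
  refine Finset.squarefree_prod_of_pairwise_isCoprime ?_ fun p hp => (hT p hp).prime.squarefree
  intro p hp r hr hpr
  exact Nat.coprime_iff_isRelPrime.mp ((Nat.coprime_primes (hT p hp) (hT r hr)).mpr hpr)

/-- Sifting the progression `b mod q` up to `X`, weighted by `r`, by the primes up to `y` which do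
not divide `q`. Here `L1` stands for `L(1, χ)`. -/
noncomputable def RealChar.sieve (h : RealChar q c) (b X y : ℕ) (L1 : ℝ) : BoundingSieve where
  support := {n ∈ Ioc 0 X | n % q = b % q}
  prodPrimes := ∏ p ∈ siftPrimes q y, p
  prodPrimes_squarefree := squarefree_prod_primes fun _ => siftPrimes_prime
  weights := h.r
  weights_nonneg := h.r_nonneg
  totalMass := 2 * X * L1 / q
  nu := h.nu
  nu_mult := h.nu_mult
  nu_pos_of_prime := fun p hp _ => by
    have := h.nu_prime_lower hp
    have hp1 : (0 : ℝ) < p := by exact_mod_cast hp.pos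
    exact lt_of_lt_of_le (by positivity) this
  nu_lt_one_of_prime := fun p hp _ => h.nu_prime_lt_one hp

lemma RealChar.sieve_bound (h : RealChar q c) {L1 : ℝ} (hL1 : IsLValue q c 1 L1) {b : ℕ}
    (hb : ∀ n, n % q = b % q → c n = 1) (X : ℕ) {y : ℕ} (hy : 1 ≤ y) :
    (h.sieve b X y L1).siftedSum ≤ 2 * X * L1 / q * (selbergSum (h.sieve b X y L1) y)⁻¹ +
      15 * (X.sqrt + 1) * (y : ℝ) ^ 6 := by
  refine siftedSum_le hy (fun d hd => ?_) fun d hd => ?_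
  · have hd' : d ∣ ∏ p ∈ siftPrimes q y, p := hd
    have hsq : Squarefree (∏ p ∈ siftPrimes q y, p) :=
      squarefree_prod_primes fun _ => siftPrimes_prime
    refine h.level hL1 hb X (Nat.pos_of_dvd_of_pos hd' (Nat.pos_of_ne_zero hsq.ne_zero)) ?_
    refine Nat.Coprime.coprime_dvd_left hd' (Nat.Coprime.prod_left fun p hp => ?_)
    have := hp
    simp only [siftPrimes, mem_filter] at this
    exact (Nat.Prime.coprime_iff_not_dvd this.2.1).mpr this.2.2
  · have hsq := BoundingSieve.squarefree_of_dvd_prodPrimes hd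
    have hd0 : (0 : ℝ) < d := by exact_mod_cast Nat.pos_of_ne_zero hsq.ne_zero
    rw [inv_le_comm₀ (BoundingSieve.nu_pos_of_dvd_prodPrimes hd) (by positivity),
      ← BoundingSieve.prod_primeFactors_nu hd]
    conv_lhs => rw [← Nat.prod_primeFactors_of_squarefree hsq]
    push_cast
    rw [← prod_pow, ← prod_inv_distrib]
    refine prod_le_prod (fun _ _ => by positivity) fun p hp => ?_
    rw [← one_div]
    exact h.nu_prime_lower (Nat.prime_of_mem_primeFactors hp)

/-- The squarefree kernel of the part of `n` prime to `q`. -/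
def radOff (q n : ℕ) : ℕ := ∏ p ∈ n.primeFactors with ¬ p ∣ q, p

lemma radOff_primeFactors (q n : ℕ) :
    (radOff q n).primeFactors = {p ∈ n.primeFactors | ¬ p ∣ q} :=
  Nat.primeFactors_prod fun _ hp => Nat.prime_of_mem_primeFactors (mem_filter.mp hp).1

lemma radOff_le {q n : ℕ} (hn : n ≠ 0) : radOff q n ≤ n := by
  refine Nat.le_of_dvd (Nat.pos_of_ne_zero hn) (dvd_trans ?_ (Nat.prod_primeFactors_dvd n))
  exact prod_dvd_prod_of_subset _ _ _ (filter_subset _ _)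

lemma totient_prod (hq : q ≠ 0) :
    ∏ p ∈ q.primeFactors, (1 - 1 / (p : ℝ))⁻¹ = q / q.totient := by
  have h := Nat.totient_eq_mul_prod_factors q
  have h' : (q.totient : ℝ) = q * ∏ p ∈ q.primeFactors, (1 - 1 / (p : ℝ)) := by
    have := congrArg (fun x : ℚ => (x : ℝ)) h
    push_cast at this
    simpa [one_div] using this
  have hq' : (q : ℝ) ≠ 0 := by exact_mod_cast hq
  rw [prod_inv_distrib, h', ← div_div, div_self hq', one_div]

/-- The Selberg sum dominates the logarithmic sum of `r`. The integers `n ≤ y` are grouped by the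
squarefree kernel `l ≤ y` of their part prime to `q`; each group is at most a product of Euler factors,
where primes dividing `l` give Selberg's term `∏ ν(p) / (1 - ν(p))` and primes dividing `q` give
`q / φ(q)`. -/
lemma RealChar.sum_le_selbergSum (h : RealChar q c) (b X y : ℕ) (L1 : ℝ) :
    ∑ n ∈ Ioc 0 y, h.r n / n ≤ q / q.totient * selbergSum (h.sieve b X y L1) y := by
  have hq0 : q ≠ 0 := by have := h.two_le; omega
  set s := h.sieve b X y L1 with hs
  -- `F n = r n / n` as a multiplicative arithmetic function
  let F : ArithmeticFunction ℝ := ⟨fun n => h.r n / n, by simp⟩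
  have hFa : ∀ n, F n = h.r n / n := fun _ => rfl
  have hF : F.IsMultiplicative := by
    refine ArithmeticFunction.IsMultiplicative.iff_ne_zero.mpr ⟨?_, fun {m n} _ _ hmn => ?_⟩
    · simp [hFa, h.r_one]
    · rw [hFa, hFa, hFa, h.r_mult.map_mul_of_coprime hmn, div_mul_div_comm]; push_cast; rfl
  have hmaps : ∀ n ∈ Ioc 0 y, radOff q n ∈ {l ∈ s.prodPrimes.divisors | l ≤ y} := by
    intro n hn
    simp only [mem_Ioc] at hn
    rw [mem_filter, Nat.mem_divisors]
    refine ⟨⟨?_, BoundingSieve.prodPrimes_ne_zero⟩, (radOff_le (by omega)).trans hn.2⟩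
    change radOff q n ∣ ∏ p ∈ siftPrimes q y, p
    refine prod_dvd_prod_of_subset _ _ (fun p : ℕ => p) fun p hp => ?_
    simp only [mem_filter, Nat.mem_primeFactors] at hp
    simp only [siftPrimes, mem_filter, mem_Icc]
    exact ⟨⟨hp.1.1.pos, (Nat.le_of_dvd hn.1 hp.1.2.1).trans hn.2⟩, hp.1.1, hp.2⟩
  rw [← sum_fiberwise_of_maps_to hmaps, selbergSum, mul_sum]
  refine sum_le_sum fun l hl => ?_
  simp only [mem_filter, Nat.mem_divisors] at hl
  have hlq : ∀ p ∈ l.primeFactors, ¬ p ∣ q := by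
    intro p hp
    have hpp := Nat.prime_of_mem_primeFactors hp
    have : p ∣ ∏ p ∈ siftPrimes q y, p := (Nat.dvd_of_mem_primeFactors hp).trans hl.1.1
    have := (prime_dvd_prod_siftPrimes hpp).mp this
    simp only [siftPrimes, mem_filter] at this
    exact this.2.2
  have hdisj : Disjoint l.primeFactors q.primeFactors := by
    rw [disjoint_left]
    exact fun p hp hpq => hlq p hp (Nat.dvd_of_mem_primeFactors hpq)
  have key := sum_le_euler_prod hF
    (fun p k hp => div_nonneg (h.r_prime_pow_nonneg hp k) (by positivity))
    (l.primeFactors ∪ q.primeFactors)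
    (fun p hp => by
      rcases mem_union.mp hp with hp | hp <;> exact Nat.prime_of_mem_primeFactors hp)
    (fun p => if p ∣ q then range (y + 1) else Icc 1 y)
    {n ∈ Ioc 0 y | radOff q n = l} (by
      intro n hn
      simp only [mem_filter, mem_Ioc] at hn
      have hpf := radOff_primeFactors q n
      rw [hn.2] at hpf
      refine ⟨by omega, fun p hp => ?_, fun p hp => ?_⟩
      · by_cases hpq : p ∣ q
        · exact mem_union_right _ (Nat.mem_primeFactors.mpr
            ⟨Nat.prime_of_mem_primeFactors hp, hpq, hq0⟩)
        · exact mem_union_left _ (hpf ▸ mem_filter.mpr ⟨hp, hpq⟩)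
      · have hlt := Nat.factorization_lt p (by omega : n ≠ 0)
        split_ifs with hpq
        · rw [mem_range]; omega
        · rw [mem_Icc]
          refine ⟨?_, by omega⟩
          have hpl : p ∈ l.primeFactors := by
            rcases mem_union.mp hp with hp | hp
            · exact hp
            · exact absurd (Nat.dvd_of_mem_primeFactors hp) hpq
          rw [hpf, mem_filter] at hpl
          exact (Nat.prime_of_mem_primeFactors hpl.1).factorization_pos_of_dvd (by omega)
            (Nat.dvd_of_mem_primeFactors hpl.1))
  refine (key.trans_eq (prod_union hdisj)).trans ?_
  rw [mul_comm, BoundingSieve.selbergTerms_apply, ← BoundingSieve.prod_primeFactors_nu hl.1.1,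
    ← prod_mul_distrib, ← totient_prod hq0]
  have nn : ∀ p ∈ l.primeFactors ∪ q.primeFactors, ∀ S : Finset ℕ,
      0 ≤ ∑ k ∈ S, F (p ^ k) := fun p hp S => sum_nonneg fun k _ => by
    have : p.Prime := by
      rcases mem_union.mp hp with hp | hp <;> exact Nat.prime_of_mem_primeFactors hp
    exact div_nonneg (h.r_prime_pow_nonneg this k) (by positivity)
  refine mul_le_mul ?_ ?_ ?_ ?_
  · refine prod_le_prod (fun p hp => nn p (mem_union_right _ hp) _) fun p hp => ?_
    have hpp := Nat.prime_of_mem_primeFactors hp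
    have hpq := Nat.dvd_of_mem_primeFactors hp
    rw [if_pos hpq]
    refine (h.euler_le hpp y).trans_eq ?_
    have : c p = 0 := by
      rw [h.zero_iff, Nat.Prime.coprime_iff_not_dvd hpp]; simpa using hpq
    rw [h.nu_prime hpp, this]; simp
  · refine prod_le_prod (fun p hp => nn p (mem_union_left _ hp) _) fun p hp => ?_
    rw [if_neg (hlq p hp)]
    exact h.euler_le' (Nat.prime_of_mem_primeFactors hp) y
  · exact prod_nonneg fun p hp => nn p (mem_union_left _ hp) _
  · refine prod_nonneg fun p hp => inv_nonneg.mpr ?_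
    have hp1 : (1 : ℝ) < p := by exact_mod_cast (Nat.prime_of_mem_primeFactors hp).one_lt
    have h3 : (1 : ℝ) / p < 1 := by rw [div_lt_one (by linarith)]; exact hp1
    linarith

/-- A prime `p > y` in the progression survives the sieve, and has weight `r(p) = 2`. -/
lemma RealChar.card_primes_le (h : RealChar q c) {b : ℕ} (hb : ∀ n, n % q = b % q → c n = 1)
    (X y : ℕ) (L1 : ℝ) :
    (#{p ∈ Icc 1 X | p.Prime ∧ p % q = b % q} : ℝ) ≤ y + (h.sieve b X y L1).siftedSum := by
  have hsub : {p ∈ Icc 1 X | p.Prime ∧ p % q = b % q} ⊆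
      Icc 1 y ∪ {p ∈ Ioc 0 X | (p % q = b % q) ∧ p.Prime ∧ y < p} := by
    intro p hp
    simp only [mem_filter, mem_Icc, mem_union, mem_Ioc] at hp ⊢
    by_cases hpy : p ≤ y
    · exact Or.inl ⟨hp.1.1, hpy⟩
    · exact Or.inr ⟨⟨by omega, hp.1.2⟩, hp.2.2, hp.2.1, by omega⟩
  have h1 := (card_le_card hsub).trans (card_union_le _ _)
  have h2 : (#{p ∈ Ioc 0 X | (p % q = b % q) ∧ p.Prime ∧ y < p} : ℝ) ≤
      (h.sieve b X y L1).siftedSum := by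
    rw [BoundingSieve.siftedSum, ← sum_filter, card_eq_sum_ones]
    push_cast
    calc _ ≤ ∑ p ∈ Ioc 0 X with (p % q = b % q) ∧ p.Prime ∧ y < p, h.r p := by
          refine sum_le_sum fun p hp => ?_
          simp only [mem_filter] at hp
          rw [h.r_prime hp.2.2.1 (hb p hp.2.1)]; norm_num
      _ ≤ _ := by
          refine sum_le_sum_of_subset_of_nonneg (fun p hp => ?_) fun p _ _ => h.r_nonneg p
          simp only [mem_filter] at hp
          rw [mem_filter]
          refine ⟨mem_filter.mpr ⟨hp.1, hp.2.1⟩, ?_⟩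
          rw [Nat.coprime_comm, Nat.Prime.coprime_iff_not_dvd hp.2.2.1]
          intro hd
          have := (prime_dvd_prod_siftPrimes hp.2.2.1).mp hd
          simp only [siftPrimes, mem_filter, mem_Icc] at this
          omega
  have h3 : (#{p ∈ Icc 1 X | p.Prime ∧ p % q = b % q} : ℝ) ≤
      (#(Icc 1 y) : ℝ) + (#{p ∈ Ioc 0 X | (p % q = b % q) ∧ p.Prime ∧ y < p} : ℝ) := by
    exact_mod_cast h1
  simp at h3
  simp at h2 ⊢
  linarith

end Gallagher

namespace Gallagher
open Finset Filter

/-! ### Dirichlet characters and their `L`-functions -/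

variable {q : ℕ} {c : ℕ → ℝ}

lemma norm_cpow_sub_le {n : ℕ} {s : ℂ} (hs : 0 < s.re) :
    ‖((n + 1 : ℕ) : ℂ) ^ (-s) - ((n + 2 : ℕ) : ℂ) ^ (-s)‖ ≤
      ‖s‖ * ((n + 1 : ℕ) : ℝ) ^ (-s.re - 1) := by
  have hd : ∀ x ∈ Set.Icc ((n + 1 : ℕ) : ℝ) ((n + 2 : ℕ) : ℝ),
      HasDerivWithinAt (fun t : ℝ => (t : ℂ) ^ (-s)) (-s * (x : ℂ) ^ (-s - 1))
        (Set.Icc ((n + 1 : ℕ) : ℝ) ((n + 2 : ℕ) : ℝ)) x := by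
    intro x hx
    have hx0 : 0 < x := lt_of_lt_of_le (by positivity) hx.1
    have h1 : HasDerivAt (fun z : ℂ => z ^ (-s)) (-s * (x : ℂ) ^ (-s - 1) * 1) (x : ℂ) :=
      (hasDerivAt_id (x : ℂ)).cpow_const (Complex.ofReal_mem_slitPlane.mpr hx0)
    rw [mul_one] at h1
    exact h1.comp_ofReal.hasDerivWithinAt
  have hb : ∀ x ∈ Set.Icc ((n + 1 : ℕ) : ℝ) ((n + 2 : ℕ) : ℝ),
      ‖-s * (x : ℂ) ^ (-s - 1)‖ ≤ ‖s‖ * ((n + 1 : ℕ) : ℝ) ^ (-s.re - 1) := by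
    intro x hx
    have hx0 : 0 < x := lt_of_lt_of_le (by positivity) hx.1
    rw [norm_mul, norm_neg, Complex.norm_cpow_eq_rpow_re_of_pos hx0]
    simp only [Complex.sub_re, Complex.neg_re, Complex.one_re]
    have hp : x ^ (-s.re - 1) ≤ ((n + 1 : ℕ) : ℝ) ^ (-s.re - 1) :=
      Real.rpow_le_rpow_of_nonpos (by positivity) hx.1 (by linarith)
    exact mul_le_mul_of_nonneg_left hp (norm_nonneg s)
  have := (convex_Icc _ _).norm_image_sub_le_of_norm_hasDerivWithin_le hd hb
    (Set.right_mem_Icc.mpr (by push_cast; linarith)) (Set.left_mem_Icc.mpr (by push_cast; linarith))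
  have e : ‖((n + 1 : ℕ) : ℝ) - ((n + 2 : ℕ) : ℝ)‖ = 1 := by
    push_cast; rw [Real.norm_eq_abs]; norm_num
  rw [e, mul_one] at this
  simpa only [Complex.ofReal_natCast] using this

/-- The terms of the series obtained from `∑ χ(n) n⁻ˢ` by partial summation. -/
noncomputable def abelTerm (c : ℕ → ℝ) (n : ℕ) (s : ℂ) : ℂ :=
  ((∑ k ∈ Ico 1 (n + 2), c k : ℝ) : ℂ) * (((n + 1 : ℕ) : ℂ) ^ (-s) - ((n + 2 : ℕ) : ℂ) ^ (-s))

lemma RealChar.norm_abelTerm_le (h : RealChar q c) (n : ℕ) {s : ℂ} (hs : 0 < s.re) :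
    ‖abelTerm c n s‖ ≤ 2 * q * (‖s‖ * ((n + 1 : ℕ) : ℝ) ^ (-s.re - 1)) := by
  rw [abelTerm, norm_mul, Complex.norm_real, Real.norm_eq_abs]
  exact mul_le_mul (h.bdd 1 (n + 2)) (norm_cpow_sub_le hs) (norm_nonneg _) (by positivity)

lemma summable_shift_rpow {σ : ℝ} (hσ : 0 < σ) :
    Summable fun n : ℕ => ((n + 1 : ℕ) : ℝ) ^ (-σ - 1) :=
  (summable_nat_add_iff 1).mpr (Real.summable_nat_rpow.mpr (by linarith))

lemma RealChar.summable_abelTerm (h : RealChar q c) {s : ℂ} (hs : 0 < s.re) :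
    Summable fun n => abelTerm c n s :=
  Summable.of_norm_bounded (((summable_shift_rpow hs).mul_left _).mul_left _)
    fun n => h.norm_abelTerm_le n hs

lemma RealChar.differentiableOn_abel (h : RealChar q c) :
    DifferentiableOn ℂ (fun s => ∑' n, abelTerm c n s) {s : ℂ | 0 < s.re} := by
  intro s hs
  have hs' : 0 < s.re := hs
  set U : Set ℂ := {w | s.re / 2 < w.re} ∩ Metric.ball 0 (‖s‖ + 1) with hU
  have hUo : IsOpen U :=
    (isOpen_lt continuous_const Complex.continuous_re).inter Metric.isOpen_ball
  have hsU : s ∈ U := ⟨by simp; linarith, by simp⟩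
  have key : DifferentiableOn ℂ (fun s => ∑' n, abelTerm c n s) U := by
    refine Complex.differentiableOn_tsum_of_summable_norm
      (u := fun n : ℕ => 2 * q * ((‖s‖ + 1) * ((n + 1 : ℕ) : ℝ) ^ (-(s.re / 2) - 1)))
      (((summable_shift_rpow (by linarith)).mul_left _).mul_left _) (fun n => ?_) hUo
      fun n w hw => ?_
    · unfold abelTerm
      have d : ∀ m : ℕ, m ≠ 0 → Differentiable ℂ fun w : ℂ => (m : ℂ) ^ (-w) := fun m hm w =>
        (differentiableAt_id.neg).const_cpow (Or.inl (by exact_mod_cast hm))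
      exact (((d _ (by omega)).sub (d _ (by omega))).const_mul _).differentiableOn
    · have h1 : s.re / 2 < w.re := hw.1
      have h2 : ‖w‖ < ‖s‖ + 1 := by simpa using hw.2
      refine (h.norm_abelTerm_le n (by linarith)).trans ?_
      gcongr
      · push_cast; linarith [Nat.cast_nonneg (α := ℝ) n]
  exact (key.differentiableAt (hUo.mem_nhds hsU)).differentiableWithinAt

lemma abel_partial (c : ℕ → ℝ) (s : ℂ) (N : ℕ) :
    ∑ n ∈ Ico 1 (N + 1), (c n : ℂ) * (n : ℂ) ^ (-s) =
      ∑ n ∈ range N, abelTerm c n s +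
        ((∑ k ∈ Ico 1 (N + 1), c k : ℝ) : ℂ) * ((N + 1 : ℕ) : ℂ) ^ (-s) := by
  induction N with
  | zero => simp
  | succ N ih =>
    rw [sum_Ico_succ_top (by omega), ih, sum_range_succ, abelTerm,
      sum_Ico_succ_top (by omega : 1 ≤ N + 1) c]
    push_cast
    ring_nf

lemma RealChar.tendsto_partial (h : RealChar q c) {s : ℂ} (hs : 0 < s.re) :
    Tendsto (fun N : ℕ => ∑ n ∈ Ico 1 (N + 1), (c n : ℂ) * (n : ℂ) ^ (-s)) atTop
      (nhds (∑' n, abelTerm c n s)) := by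
  simp only [abel_partial]
  have h1 := (h.summable_abelTerm hs).hasSum.tendsto_sum_nat
  have h2 : Tendsto (fun N : ℕ => ((∑ k ∈ Ico 1 (N + 1), c k : ℝ) : ℂ) *
      ((N + 1 : ℕ) : ℂ) ^ (-s)) atTop (nhds 0) := by
    have h3 : Tendsto (fun N : ℕ => 2 * q * ((N + 1 : ℕ) : ℝ) ^ (-s.re)) atTop (nhds 0) := by
      have := ((tendsto_rpow_neg_atTop hs).comp
        (tendsto_natCast_atTop_atTop.comp (tendsto_add_atTop_nat 1))).const_mul (2 * (q : ℝ))
      simpa using this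
    refine squeeze_zero_norm (fun N => ?_) h3
    rw [norm_mul, Complex.norm_real, Real.norm_eq_abs,
      Complex.norm_natCast_cpow_of_pos (Nat.succ_pos N), Complex.neg_re]
    gcongr
    exact h.bdd _ _
  simpa using h1.add h2

/-- The continued `L`-function is given on `Re s > 0` by the series obtained from partial summation, by
the identity theorem: both sides are holomorphic there and agree for `Re s > 1`. -/
lemma RealChar.LFunction_eq (h : RealChar q c) [NeZero q] {χ : DirichletCharacter ℂ q}
    (hχ : χ ≠ 1) (hc : ∀ n : ℕ, χ (n : ZMod q) = c n) {s : ℂ} (hs : 0 < s.re) :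
    ∑' n, abelTerm c n s = χ.LFunction s := by
  have hopen : IsOpen {s : ℂ | 0 < s.re} := isOpen_lt continuous_const Complex.continuous_re
  have hconv : Convex ℝ {s : ℂ | 0 < s.re} := convex_halfSpace_re_gt 0
  have hF := h.differentiableOn_abel.analyticOnNhd hopen
  have hL := ((DirichletCharacter.differentiable_LFunction hχ).differentiableOn
    (s := {s : ℂ | 0 < s.re})).analyticOnNhd hopen
  refine hF.eqOn_of_preconnected_of_eventuallyEq hL hconv.isPreconnected
    (z₀ := 2) (by simp) ?_ hs
  have h2 : {s : ℂ | 1 < s.re} ∈ nhds (2 : ℂ) :=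
    (isOpen_lt continuous_const Complex.continuous_re).mem_nhds (by simp)
  filter_upwards [h2] with w hw
  have hw' : 1 < w.re := hw
  rw [DirichletCharacter.LFunction_eq_LSeries χ hw']
  have t1 := h.tendsto_partial (s := w) (by linarith)
  have t2 := (DirichletCharacter.LSeriesSummable_of_one_lt_re χ hw').hasSum.tendsto_sum_nat
  have t3 := t2.comp (tendsto_add_atTop_nat 1)
  refine tendsto_nhds_unique t1 (t3.congr fun N => ?_)
  simp only [Function.comp]
  rw [range_eq_Ico, sum_eq_sum_Ico_succ_bot (by omega), LSeries.term_zero, zero_add]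
  refine sum_congr rfl fun n hn => ?_
  rw [LSeries.term_of_ne_zero (by simp at hn; omega), hc, Complex.cpow_neg, div_eq_mul_inv]

/-- A zero of the continued `L`-function at the real point `1 - δ`, in terms of partial sums of its series. -/
lemma RealChar.isLValue_zero (h : RealChar q c) [NeZero q] {χ : DirichletCharacter ℂ q}
    (hχ : χ ≠ 1) (hc : ∀ n : ℕ, χ (n : ZMod q) = c n) {δ : ℝ} (hδ1 : δ < 1)
    (h0 : χ.LFunction (1 - (δ : ℂ)) = 0) : IsLValue q c (1 - δ) 0 := by
  obtain ⟨L, hL, hrate⟩ := h.exists_limit (s := 1 - δ) (by linarith)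
  have hre : 0 < (1 - (δ : ℂ)).re := by simp; exact hδ1
  have t := h.tendsto_partial hre
  rw [h.LFunction_eq hχ hc hre, h0] at t
  have t' := (Complex.continuous_re.tendsto _).comp t
  have e : ∀ N : ℕ, (Complex.re ∘ fun N : ℕ => ∑ n ∈ Ico 1 (N + 1),
      (c n : ℂ) * (n : ℂ) ^ (-(1 - (δ : ℂ)))) N =
      ∑ n ∈ Ico 1 (N + 1), c n * (n : ℝ) ^ (-(1 - δ)) := by
    intro N
    simp only [Function.comp]
    rw [← Complex.ofReal_re (∑ n ∈ Ico 1 (N + 1), c n * (n : ℝ) ^ (-(1 - δ)))]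
    congr 1
    push_cast
    refine sum_congr rfl fun n _ => ?_
    rw [Complex.ofReal_cpow (Nat.cast_nonneg n)]
    push_cast; rfl
  have t'' := t'.congr e
  have := tendsto_nhds_unique (hL.comp (tendsto_add_atTop_nat 1)) t''
  rw [Complex.zero_re] at this
  rw [this] at hrate
  exact hrate

lemma realChar_of {q : ℕ} [NeZero q] {χ : DirichletCharacter ℂ q} (hχ : χ ≠ 1)
    (him : ∀ a : ZMod q, (χ a).im = 0) : RealChar q (fun n => (χ (n : ZMod q)).re) := by
  have hq0 : q ≠ 0 := NeZero.ne q
  have hre : ∀ a : ZMod q, χ a = ((χ a).re : ℂ) := fun a => Complex.ext rfl (by simp [him a])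
  have hz : ∀ n : ℕ, χ (n : ZMod q) = 0 ↔ ¬ n.Coprime q := by
    intro n
    rw [← not_iff_not, not_not, ← ZMod.isUnit_iff_coprime]
    constructor
    · intro hn; by_contra hcon; exact hn (χ.map_nonunit hcon)
    · intro hn; exact (hn.map χ).ne_zero
  have hzero : ∀ n : ℕ, (χ (n : ZMod q)).re = 0 ↔ ¬ n.Coprime q := by
    intro n
    rw [← hz n]
    constructor
    · intro h; rw [hre, h]; simp
    · intro h; rw [h]; simp
  have hval : ∀ n : ℕ, (χ (n : ZMod q)).re = 0 ∨ (χ (n : ZMod q)).re = 1 ∨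
      (χ (n : ZMod q)).re = -1 := by
    intro n
    by_cases hn : n.Coprime q
    · right
      have hu : IsUnit (n : ZMod q) := (ZMod.isUnit_iff_coprime n q).mpr hn
      have h1 : ‖χ (n : ZMod q)‖ = 1 := DirichletCharacter.unit_norm_eq_one χ hu.unit
      rw [hre, Complex.norm_real, Real.norm_eq_abs] at h1
      exact eq_or_eq_neg_of_abs_eq h1
    · left; exact (hzero n).mpr hn
  refine ⟨by simp, fun m n => ?_, hval, hzero, ?_, ?_⟩
  · push_cast
    rw [map_mul, Complex.mul_re, him, him]; simp
  · set c : ℕ → ℝ := fun n => (χ (n : ZMod q)).re with hc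
    have hper : ∀ n, c (q + n) = c n := fun n => by simp [hc]
    have hq : ∑ n ∈ range q, c n = 0 := by
      have h1 : ∑ n ∈ range q, χ (n : ZMod q) = ∑ a : ZMod q, χ a := by
        refine sum_nbij' (fun n => (n : ZMod q)) ZMod.val (by simp) (fun a _ => by
          simpa using ZMod.val_lt a) (fun n hn => ?_) (fun a _ => ?_) fun _ _ => rfl
        · exact ZMod.val_natCast_of_lt (by simpa using hn)
        · exact ZMod.natCast_zmod_val a
      rw [MulChar.sum_eq_zero_of_ne_one hχ] at h1
      have := congrArg Complex.re h1
      simpa [hc] using this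
    have hA : Function.Periodic (fun N => ∑ n ∈ range N, c n) q := by
      intro N
      simp only
      rw [add_comm, sum_range_add, hq, zero_add]
      exact sum_congr rfl fun n _ => hper n
    have hab : ∀ N, |∑ n ∈ range N, c n| ≤ q := by
      intro N
      have h1 := hA.map_mod_nat N
      rw [← h1]
      calc |∑ n ∈ range (N % q), c n| ≤ ∑ n ∈ range (N % q), (1 : ℝ) := by
            refine (abs_sum_le_sum_abs _ _).trans (sum_le_sum fun n _ => ?_)
            rcases hval n with h | h | h <;> simp [hc, h]
        _ ≤ q := by
            simp; exact (Nat.mod_lt N (Nat.pos_of_ne_zero hq0)).le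
    intro M N
    rcases le_total M N with hMN | hMN
    · rw [sum_Ico_eq_sub _ hMN]
      refine (abs_sub _ _).trans ?_
      linarith [hab M, hab N]
    · rw [Ico_eq_empty_of_le hMN]; simp
  · by_contra hcon
    have : q = 1 := by omega
    subst this
    exact hχ (DirichletCharacter.level_one χ)

end Gallagher

namespace Gallagher
open Finset Filter

/-! ### Assembly -/

variable {q : ℕ} {c : ℕ → ℝ}

lemma error_numerics {Q δ U : ℝ} (hQ : 2 ≤ Q) (hδ : 0 < δ) (hδQ : 1 ≤ δ * Q ^ 33)
    (hU : Q ^ 300 ≤ U) : 32 * (Q ^ 40) ^ 6 * Q ≤ δ * U := by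
  have hQ0 : 0 ≤ Q := by linarith
  have h26 : (32 : ℝ) ≤ Q ^ 26 :=
    le_trans (by norm_num) (pow_le_pow_left₀ (by norm_num : (0 : ℝ) ≤ 2) hQ 26)
  have h1 : 32 * (Q ^ 40) ^ 6 * Q = 32 * Q ^ 241 := by
    rw [mul_assoc, ← pow_mul, ← pow_succ]
  have h2 : Q ^ 26 * Q ^ 241 = Q ^ 267 := (pow_add Q 26 241).symm
  have h3 : Q ^ 33 * Q ^ 267 = Q ^ 300 := (pow_add Q 33 267).symm
  have h4 : 32 * Q ^ 241 ≤ Q ^ 267 :=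
    (mul_le_mul_of_nonneg_right h26 (pow_nonneg hQ0 241)).trans_eq h2
  have h5 : Q ^ 267 ≤ δ * Q ^ 300 := by
    have := mul_le_mul_of_nonneg_right hδQ (pow_nonneg hQ0 267)
    rwa [one_mul, mul_assoc, h3] at this
  exact h1.trans_le (h4.trans (h5.trans (mul_le_mul_of_nonneg_left hU hδ.le)))

/-- The main case, with sieve level `y = q ^ 40` and `X ≥ q ^ 600`: the exponents are generous, and
only have to beat the polynomial lower bound for `δ`. -/
lemma RealChar.card_primes_le_of_zero (h : RealChar q c) {δ : ℝ} (hδ : 0 < δ) (hδ1 : δ ≤ 1 / 2)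
    (hLβ : IsLValue q c (1 - δ) 0) {b : ℕ} (hb : ∀ n, n % q = b % q → c n = 1) {X : ℕ}
    (hX : q ^ 600 ≤ X) :
    (#{p ∈ Icc 1 X | p.Prime ∧ p % q = b % q} : ℝ) ≤ 9 * δ * X / q.totient := by
  obtain ⟨L1, -, hL1⟩ := h.exists_limit (s := 1) one_pos
  have hq2 := h.two_le
  have hq2' : (2 : ℝ) ≤ q := by exact_mod_cast hq2
  have hq0 : (0 : ℝ) < q := by linarith
  have hφ : (0 : ℝ) < q.totient := by exact_mod_cast Nat.totient_pos.mpr (by omega)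
  have hφq : (q.totient : ℝ) ≤ q := by exact_mod_cast Nat.totient_le q
  -- the polynomial lower bound for `δ`, with the factor `2 ^ 28` absorbed into a power of `q`
  have hδq : 1 ≤ δ * (q : ℝ) ^ 33 := by
    have h1 := h.delta_lower hδ hδ1 hL1 hLβ
    have h2 : (2 : ℝ) ^ 28 ≤ (q : ℝ) ^ 28 := pow_le_pow_left₀ (by norm_num) hq2' 28
    calc (1 : ℝ) ≤ 2 ^ 28 * q ^ 5 * δ := h1
      _ ≤ (q : ℝ) ^ 28 * q ^ 5 * δ := by gcongr
      _ = δ * (q : ℝ) ^ 33 := by ring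
  obtain ⟨y, hy⟩ : ∃ y : ℕ, y = q ^ 40 := ⟨_, rfl⟩
  have hy1 : 1 ≤ y := hy ▸ Nat.one_le_pow _ _ (by omega)
  have hyR : (y : ℝ) = (q : ℝ) ^ 40 := by rw [hy]; push_cast; rfl
  have hyδ : 4 * (q : ℝ) ≤ δ * y := by
    have h2 : (2 : ℝ) ^ 6 ≤ (q : ℝ) ^ 6 := pow_le_pow_left₀ (by norm_num) hq2' 6
    rw [hyR]
    calc 4 * (q : ℝ) ≤ 1 * ((q : ℝ) ^ 6 * q) := by nlinarith
      _ ≤ (δ * (q : ℝ) ^ 33) * ((q : ℝ) ^ 6 * q) := by gcongr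
      _ = δ * (q : ℝ) ^ 40 := by ring
  set S := selbergSum (h.sieve b X y L1) y with hS
  have hSpos : 0 < S := selbergSum_pos hy1
  have hL : L1 ≤ 4 * δ * (q / q.totient * S) :=
    (h.L_one_le hδ (by linarith) hL1 hLβ hyδ).trans
      (mul_le_mul_of_nonneg_left (h.sum_le_selbergSum b X y L1) (by positivity))
  have hmain : 2 * X * L1 / q * S⁻¹ ≤ 8 * δ * X / q.totient := by
    calc 2 * X * L1 / q * S⁻¹ ≤ 2 * X * (4 * δ * (q / q.totient * S)) / q * S⁻¹ := by gcongr
      _ = 8 * δ * X / q.totient := by field_simp; ring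
  have hU : (q : ℝ) ^ 300 ≤ (X.sqrt : ℝ) := by
    have : q ^ 300 ≤ X.sqrt := Nat.le_sqrt.mpr ((pow_add q 300 300).symm.trans_le hX)
    rw [← Nat.cast_pow]
    exact Nat.cast_le.mpr this
  have hUX : (X.sqrt : ℝ) * X.sqrt ≤ X := by exact_mod_cast Nat.sqrt_le X
  have hU1 : (1 : ℝ) ≤ X.sqrt := (one_le_pow₀ (by linarith)).trans hU
  have hsieve := h.sieve_bound hL1 hb X hy1
  rw [← hS] at hsieve
  generalize (X.sqrt : ℝ) = U at *
  have herr : (y : ℝ) + 15 * (U + 1) * (y : ℝ) ^ 6 ≤ δ * X / q.totient := by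
    have hyR1 : (1 : ℝ) ≤ y := by exact_mod_cast hy1
    have hy6 : (y : ℝ) ≤ (y : ℝ) ^ 6 := le_self_pow₀ hyR1 (by norm_num)
    have h1 : (y : ℝ) + 15 * (U + 1) * (y : ℝ) ^ 6 ≤ 32 * (y : ℝ) ^ 6 * U := by
      nlinarith [mul_nonneg (sub_nonneg.mpr hU1) (zero_le_one.trans (hyR1.trans hy6))]
    have h2 : 32 * (y : ℝ) ^ 6 * q ≤ δ * U := by
      rw [hyR]
      exact error_numerics hq2' hδ hδq hU
    rw [le_div_iff₀ hφ]
    calc ((y : ℝ) + 15 * (U + 1) * (y : ℝ) ^ 6) * q.totient ≤ 32 * (y : ℝ) ^ 6 * U * q := by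
          gcongr
      _ = 32 * (y : ℝ) ^ 6 * q * U := by ring
      _ ≤ δ * U * U := by gcongr
      _ = δ * (U * U) := by ring
      _ ≤ δ * X := by gcongr
  have hcard := h.card_primes_le hb X y L1
  have e : 9 * δ * X / (q.totient : ℝ) = 8 * δ * X / q.totient + δ * X / q.totient := by ring
  rw [e]
  linarith

/-- Counting all integers in the progression suffices when `δ` is bounded below. -/
lemma card_primes_le_trivial (hq : 0 < q) (b : ℕ) {X : ℕ} (hX : q ≤ X) :
    (#{p ∈ Icc 1 X | p.Prime ∧ p % q = b % q} : ℝ) ≤ 2 * X / q.totient := by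
  have h1 := (abs_le.mp (card_ap (a := 0) (X := X) hq b X.zero_le)).2
  have h2 : #{p ∈ Icc 1 X | p.Prime ∧ p % q = b % q} ≤ #{n ∈ Ioc 0 X | n ≡ b [MOD q]} := by
    refine card_le_card fun p hp => ?_
    simp only [mem_filter, mem_Icc, mem_Ioc] at hp ⊢
    exact ⟨⟨hp.1.1, hp.1.2⟩, hp.2.2⟩
  have h2' : (#{p ∈ Icc 1 X | p.Prime ∧ p % q = b % q} : ℝ) ≤ #{n ∈ Ioc 0 X | n ≡ b [MOD q]} := by
    exact_mod_cast h2
  have hq0 : (0 : ℝ) < q := by exact_mod_cast hq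
  have hqX : (q : ℝ) ≤ X := by exact_mod_cast hX
  have h3 : (1 : ℝ) ≤ X / q := by rwa [le_div_iff₀ hq0, one_mul]
  have hφ : (0 : ℝ) < q.totient := by exact_mod_cast Nat.totient_pos.mpr hq
  have hφq : (q.totient : ℝ) ≤ q := by exact_mod_cast Nat.totient_le q
  have h4 : 2 * (X : ℝ) / q ≤ 2 * X / q.totient := by gcongr
  have h5 : 2 * (X : ℝ) / q = 2 * (X / q) := by ring
  push_cast at h1
  rw [sub_zero] at h1
  linarith

/-- The modulus `q = 1`: the pole of `ζ` at `1` keeps its zeros away from `1`. -/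
lemma exists_zeta_gap : ∃ η : ℝ, 0 < η ∧ ∀ δ : ℝ, 0 < δ → riemannZeta (1 - (δ : ℂ)) = 0 → η ≤ δ := by
  obtain ⟨η, hη, hball⟩ := Metric.eventually_nhds_iff.mp riemannZeta_eventually_ne_zero_nhds_one
  refine ⟨η, hη, fun δ hδ h0 => ?_⟩
  by_contra! hlt
  refine hball ?_ h0
  rw [dist_eq_norm, sub_sub_cancel_left, norm_neg, Complex.norm_real, Real.norm_eq_abs,
    abs_of_pos hδ]
  exact hlt

end Gallagher

/-- **Gallagher's theorem (corollary form).** There are absolute constants `B > 1`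
and `C > 0` such that: if `χ` is a real primitive Dirichlet character of conductor `q`
and `L(1-δ, χ) = 0` for some `0 < δ < 1`, then for every `b` with `χ(b) = 1` and
every `x ≥ q^B` we have `π(x;q,b) ≤ C·δ·x/φ(q)`. -/
theorem gallagher_exceptional_zero :
    ∃ B C : ℝ, B > 1 ∧ C > 0 ∧
      ∀ (q : ℕ) [NeZero q] (χ : DirichletCharacter ℂ q),
        χ.IsPrimitive →
        (∀ a : ZMod q, (χ a).im = 0) →
        ∀ δ : ℝ, 0 < δ → δ < 1 →
        χ.LFunction (1 - (δ : ℂ)) = 0 →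
        ∀ b : ℕ, χ (b : ZMod q) = 1 →
        ∀ x : ℝ, x ≥ (q : ℝ) ^ B →
          (primesInAP x q b : ℝ) ≤ C * δ * x / (q.totient : ℝ) := by
  obtain ⟨η, hη, hgap⟩ := Gallagher.exists_zeta_gap
  refine ⟨600, 9 + 4 + 2 / η, by norm_num, by positivity, ?_⟩
  intro q _ χ hprim him δ hδ hδ1 h0 b hb x hx
  have hq0 : 0 < q := Nat.pos_of_ne_zero (NeZero.ne q)
  have hx' : ((q ^ 600 : ℕ) : ℝ) ≤ x := by
    have e : ((q : ℝ) ^ (600 : ℝ)) = ((q ^ 600 : ℕ) : ℝ) := by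
      rw [← Nat.cast_ofNat (R := ℝ) (n := 600), Real.rpow_natCast]
      push_cast
      rfl
    rwa [ge_iff_le, e] at hx
  have hX : q ^ 600 ≤ ⌊x⌋₊ := Nat.le_floor hx'
  have hx0 : 0 ≤ x := (Nat.cast_nonneg _).trans hx'
  have hXx : (⌊x⌋₊ : ℝ) ≤ x := Nat.floor_le hx0
  have hφ : (0 : ℝ) < q.totient := by exact_mod_cast Nat.totient_pos.mpr hq0
  -- it suffices to prove the bound with one of the three constants
  have hfin : ∀ K : ℝ, K ≤ 9 + 4 + 2 / η →
      (primesInAP x q b : ℝ) ≤ K * δ * ⌊x⌋₊ / q.totient →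
      (primesInAP x q b : ℝ) ≤ (9 + 4 + 2 / η) * δ * x / q.totient := by
    intro K hK h
    refine h.trans ?_
    gcongr
  have htriv : ∀ K : ℝ, 2 ≤ K * δ → (primesInAP x q b : ℝ) ≤ K * δ * ⌊x⌋₊ / q.totient := by
    intro K hK
    refine (Gallagher.card_primes_le_trivial hq0 b
      ((Nat.le_self_pow (by norm_num) q).trans hX)).trans ?_
    gcongr
  have hη2 : 0 ≤ 2 / η := by positivity
  by_cases hq1 : q = 1
  · subst hq1
    rw [DirichletCharacter.LFunction_modOne_eq] at h0
    refine hfin (2 / η) (by linarith) (htriv _ ?_)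
    rw [div_mul_eq_mul_div, le_div_iff₀ hη]
    linarith [hgap δ hδ h0]
  have hχ : χ ≠ 1 := by
    rintro rfl
    rw [DirichletCharacter.isPrimitive_def, DirichletCharacter.conductor_one] at hprim
    exact hq1 hprim.symm
  rcases le_total δ (1 / 2) with hδ2 | hδ2
  · have hR := Gallagher.realChar_of hχ him
    have hLβ := hR.isLValue_zero hχ
      (fun n => Complex.ext (by simp) (by simpa using him (n : ZMod q))) hδ1 h0
    have hb' : ∀ n : ℕ, n % q = b % q → (χ (n : ZMod q)).re = 1 := by
      intro n hn
      rw [(ZMod.natCast_eq_natCast_iff' n b q).mpr hn, hb, Complex.one_re]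
    exact hfin 9 (by linarith) (hR.card_primes_le_of_zero hδ hδ2 hLβ hb' hX)
  · exact hfin 4 (by linarith) (htriv 4 (by linarith))
end
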